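/- arXiv:1301.1113 — 3 statements merged into one kernel-verified Lean document; each statement's English description precedes it below -/
import Mathlib

section
/- Let R be a Noetherian local ring and let r_1, ..., r_n be elements of R with n ≥ 1. If r_1, ..., r_n generate a prime ideal of height n, then R is a domain, and for any 1 ≤ i ≤ n, the ideal generated by r_1, ..., r_i is prime of height i. -/
/-- Shorten a chain of primes so that its new bottom contains a given element of the top. -/
theorem chain_step {R : Type*} [CommRing R] [IsNoetherianRing R]
    (s : LTSeries (PrimeSpectrum R)) (x : R) (hx : x ∈ s.last.asIdeal) (h0 : s.length ≠ 0) :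
    ∃ t : LTSeries (PrimeSpectrum R), x ∈ t.head.asIdeal ∧ t.length + 1 = s.length ∧
      s.head < t.head ∧ t.last = s.last := by
  obtain ⟨q, h1, h2, h3, h4⟩ := PrimeSpectrum.exist_ltSeries_mem_one_of_mem_last s hx
  have hq : q.length ≠ 0 := h2 ▸ h0
  refine ⟨q.tail hq, ?_, ?_, ?_, ?_⟩
  · rw [RelSeries.head_tail]; exact h1
  · change q.length - 1 + 1 = _
    omega
  · rw [RelSeries.head_tail, h3]
    apply q.strictMono
    rw [Fin.lt_def, Fin.val_one', Nat.mod_eq_of_lt (by omega)]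
    exact Nat.zero_lt_one
  · rw [RelSeries.last_tail, h4]

/-- A chain of primes from above `J k` up to `J n` has length at most `n - k`. -/
theorem chain_bound {R : Type*} [CommRing R] [IsNoetherianRing R] (n : ℕ) (J : ℕ → Ideal R)
    (f : ℕ → R) (hJ : ∀ k < n, J (k + 1) = J k ⊔ Ideal.span {f k})
    (hf : ∀ k < n, f k ∈ J n) (d : ℕ) : ∀ k, k + d = n → ∀ s : LTSeries (PrimeSpectrum R),
      J k ≤ s.head.asIdeal → s.last.asIdeal = J n → s.length ≤ d := by
  induction d with
  | zero =>
    intro k hk s h1 h2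
    obtain rfl : k = n := by omega
    by_contra hc
    have : s.head < s.last := by
      apply s.strictMono
      rw [Fin.lt_def]
      change 0 < s.length
      omega
    rw [← h2] at h1
    exact absurd h1 (not_le_of_gt this)
  | succ d ih =>
    intro k hk s h1 h2
    by_cases h0 : s.length = 0
    · omega
    obtain ⟨t, ht1, ht2, ht3, ht4⟩ := chain_step s (f k) (h2 ▸ hf k (by omega)) h0
    have := ih (k + 1) (by omega) t (by
      rw [hJ k (by omega)]
      refine sup_le (h1.trans (show s.head.asIdeal ≤ t.head.asIdeal from ht3.le)) ?_
      rw [Ideal.span_singleton_le_iff_mem]; exact ht1) (by rw [ht4, h2])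
    omega

/-- If a chain of length `n - k` from above `J k` to `J n` exists, then all later `J i` are prime
and strictly increasing. -/
theorem chain_prime {R : Type*} [CommRing R] [IsNoetherianRing R] [IsLocalRing R] (n : ℕ)
    (J : ℕ → Ideal R)
    (f : ℕ → R) (hJ : ∀ k < n, J (k + 1) = J k ⊔ Ideal.span {f k})
    (hf : ∀ k < n, f k ∈ J n) (d : ℕ) : ∀ k, k + d = n → ∀ s : LTSeries (PrimeSpectrum R),
      J k ≤ s.head.asIdeal → s.last.asIdeal = J n → s.length = d →
      (∀ i, k ≤ i → i ≤ n → (J i).IsPrime) ∧ (∀ i, k ≤ i → i < n → J i < J (i + 1)) := by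
  induction d with
  | zero =>
    intro k hk s h1 h2 h3
    refine ⟨fun i hi hi' => ?_, fun i hi hi' => by omega⟩
    obtain rfl : i = n := by omega
    rw [← h2]; exact s.last.isPrime
  | succ d ih =>
    intro k hk s h1 h2 h3
    have hkn : k < n := by omega
    obtain ⟨t, ht1, ht2, ht3, ht4⟩ := chain_step s (f k) (h2 ▸ hf k hkn) (by omega)
    have hle : J (k + 1) ≤ t.head.asIdeal := by
      rw [hJ k hkn]
      refine sup_le (h1.trans (show s.head.asIdeal ≤ t.head.asIdeal from ht3.le)) ?_
      rw [Ideal.span_singleton_le_iff_mem]; exact ht1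
    obtain ⟨A, B⟩ := ih (k + 1) (by omega) t hle (by rw [ht4, h2]) (by omega)
    have hp : (J (k + 1)).IsPrime := A _ le_rfl (by omega)
    have heq : J (k + 1) = t.head.asIdeal := by
      by_contra hne
      have hlt : (⟨J (k + 1), hp⟩ : PrimeSpectrum R) < t.head := lt_of_le_of_ne hle (by
        intro h; exact hne (congrArg PrimeSpectrum.asIdeal h))
      have := chain_bound n J f hJ hf d (k + 1) (by omega) (t.cons ⟨J (k + 1), hp⟩ hlt)
        (by rw [RelSeries.head_cons]) (by rw [RelSeries.last_cons, ht4, h2])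
      have h4 : (t.cons ⟨J (k + 1), hp⟩ hlt).length = t.length + 1 := by simp
      omega
    have hlt : s.head.asIdeal < J (k + 1) := by rw [heq]; exact ht3
    have hnot : f k ∉ s.head.asIdeal := by
      intro hmem
      apply not_le_of_gt hlt
      rw [hJ k hkn]
      exact sup_le h1 (by rwa [Ideal.span_singleton_le_iff_mem])
    have hs : s.head.asIdeal ≤ J k := by
      refine Submodule.le_of_le_smul_of_le_jacobson_bot (I := Ideal.span {f k})
        (IsNoetherian.noetherian _) ?_ ?_
      · rw [IsLocalRing.jacobson_eq_maximalIdeal _ bot_ne_top, Ideal.span_singleton_le_iff_mem]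
        refine IsLocalRing.le_maximalIdeal (h2 ▸ s.last.isPrime.ne_top) (hf k hkn)
      · intro y hy
        have hy' := hlt.le hy
        rw [hJ k hkn] at hy'
        obtain ⟨a, ha, b, hb, rfl⟩ := Submodule.mem_sup.1 hy'
        obtain ⟨c, rfl⟩ := Ideal.mem_span_singleton'.1 hb
        have hcf : c * f k ∈ s.head.asIdeal := (Ideal.add_mem_iff_right _ (h1 ha)).1 hy
        have hc := (s.head.isPrime.mem_or_mem hcf).resolve_right hnot
        refine Submodule.add_mem_sup ha ?_
        rw [mul_comm]
        exact Submodule.smul_mem_smul (Ideal.mem_span_singleton_self _) hc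
    have hk' : J k = s.head.asIdeal := le_antisymm h1 hs
    refine ⟨fun i hi hi' => ?_, fun i hi hi' => ?_⟩
    · rcases hi.eq_or_lt with rfl | h
      · rw [hk']; exact s.head.isPrime
      · exact A i h hi'
    · rcases hi.eq_or_lt with rfl | h
      · rw [hk']; exact hlt
      · exact B i h hi'

/-- Let `R` be a Noetherian local ring and `r_1, ..., r_n ∈ R` with `n ≥ 1`. If `r_1, ..., r_n`
generate a prime ideal of height `n`, then `R` is a domain, and for any `1 ≤ i ≤ n` the ideal
generated by `r_1, ..., r_i` is prime of height `i`. -/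
theorem statement0 {R : Type*} [CommRing R] [IsNoetherianRing R] [IsLocalRing R]
    (n : ℕ) (hn : 1 ≤ n) (r : Fin n → R)
    (hP : (Ideal.span (Set.range r)).IsPrime)
    (hht : Order.height (⟨Ideal.span (Set.range r), hP⟩ : PrimeSpectrum R) = (n : ℕ∞)) :
    IsDomain R ∧
      ∀ i : ℕ, 1 ≤ i → i ≤ n →
        ∃ hPi : (Ideal.span (r '' {j : Fin n | (j : ℕ) < i})).IsPrime,
          Order.height
              (⟨Ideal.span (r '' {j : Fin n | (j : ℕ) < i}), hPi⟩ : PrimeSpectrum R)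
            = (i : ℕ∞) := by
  set J : ℕ → Ideal R := fun i => Ideal.span (r '' {j : Fin n | (j : ℕ) < i}) with hJdef
  set f : ℕ → R := fun k => if h : k < n then r ⟨k, h⟩ else 0 with hfdef
  have hJn : J n = Ideal.span (Set.range r) := by
    have : {j : Fin n | (j : ℕ) < n} = Set.univ := by ext j; simp
    simp only [hJdef, this, Set.image_univ]
  have hJ0 : J 0 = ⊥ := by simp [hJdef]
  have hJ : ∀ k < n, J (k + 1) = J k ⊔ Ideal.span {f k} := by
    intro k hk
    have : {j : Fin n | (j : ℕ) < k + 1} = {j : Fin n | (j : ℕ) < k} ∪ {⟨k, hk⟩} := by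
      ext j; simp [Fin.ext_iff]; omega
    simp only [hJdef, this, Set.image_union, Ideal.span_union, Set.image_singleton, hfdef,
      dif_pos hk]
  have hf : ∀ k < n, f k ∈ J n := by
    intro k hk
    rw [hJn]
    simp only [hfdef, dif_pos hk]
    exact Ideal.subset_span ⟨_, rfl⟩
  obtain ⟨s, hs1, hs2⟩ := Order.exists_series_of_height_eq_coe _ hht
  obtain ⟨A, B⟩ := chain_prime n J f hJ hf n 0 (by omega) s (by rw [hJ0]; exact bot_le)
    (by rw [hs1, hJn]) hs2
  have hlow : ∀ i, i ≤ n → (i : ℕ∞) ≤ (J i).height := by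
    intro i
    induction i with
    | zero => simp
    | succ i ih =>
      intro hi
      have := A i (by omega) (by omega)
      have := A (i + 1) (by omega) hi
      have h1 := Ideal.height_add_one_le_of_lt_of_isPrime (B i (by omega) hi)
      push_cast
      exact (add_le_add_left (ih (by omega)) 1).trans h1
  have hup : ∀ d i, i + d = n → (J i).height + (d : ℕ∞) ≤ n := by
    intro d
    induction d with
    | zero =>
      intro i hi
      obtain rfl : i = n := by omega
      have := PrimeSpectrum.height_eq_orderHeight
        (⟨Ideal.span (Set.range r), hP⟩ : PrimeSpectrum R)
      rw [hht] at this
      rw [hJn]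
      simpa using this.le
    | succ d ih =>
      intro i hi
      have := A i (by omega) (by omega)
      have := A (i + 1) (by omega) (by omega)
      have h1 := Ideal.height_add_one_le_of_lt_of_isPrime (B i (by omega) (by omega))
      refine le_trans ?_ (ih (i + 1) (by omega))
      push_cast
      rw [add_comm (d : ℕ∞) 1, ← add_assoc]
      exact add_le_add_left h1 _
  refine ⟨?_, fun i _ hi => ⟨A i (by omega) hi, ?_⟩⟩
  · have h0 := A 0 le_rfl (by omega)
    rw [hJ0] at h0
    exact IsDomain.of_bot_isPrime R
  · rw [← PrimeSpectrum.height_eq_orderHeight]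
    refine le_antisymm ?_ (hlow i hi)
    have h1 := hup (n - i) i (by omega)
    have h2 : (n : ℕ∞) = (i : ℕ∞) + ((n - i : ℕ) : ℕ∞) := by
      rw [← Nat.cast_add]; congr 1; omega
    rw [h2] at h1
    exact (ENat.add_le_add_iff_right (ENat.natCast_ne_top _)).1 h1
end

section
/- Let A be a complete Noetherian local domain and let f_1, ..., f_r be elements of the maximal ideal of A. If r ≤ dim A − 1, then Spec(A/(f_1,...,f_r)) is (dim A − r − 1)-connected, i.e. every irreducible component has dimension > dim A − r − 1, and removing any closed subset of dimension < dim A − r − 1 leaves the space connected. -/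
namespace GCT
open TensorProduct IsLocalRing
universe u

section tors
variable {A : Type u} [CommRing A]

/-- The `I`-power torsion submodule. -/
def torI (I : Ideal A) (M : Type*) [AddCommGroup M] [Module A M] : Submodule A M where
  carrier := {m | ∃ n : ℕ, ∀ r ∈ I ^ n, r • m = 0}
  zero_mem' := ⟨0, fun r _ => smul_zero r⟩
  add_mem' := by
    rintro a b ⟨n, hn⟩ ⟨k, hk⟩
    refine ⟨n + k, fun r hr => ?_⟩
    rw [smul_add, hn r (Ideal.pow_le_pow_right (by omega) hr),
      hk r (Ideal.pow_le_pow_right (by omega) hr), add_zero]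
  smul_mem' := by
    rintro c m ⟨n, hn⟩
    exact ⟨n, fun r hr => by rw [smul_comm, hn r hr, smul_zero]⟩

theorem mem_torI {I : Ideal A} {M : Type*} [AddCommGroup M] [Module A M] {m : M} :
    m ∈ torI I M ↔ ∃ n : ℕ, ∀ r ∈ I ^ n, r • m = 0 := Iff.rfl

theorem torI_map {I : Ideal A} {M N : Type*} [AddCommGroup M] [Module A M]
    [AddCommGroup N] [Module A N] (f : M →ₗ[A] N) {m : M} (hm : m ∈ torI I M) :
    f m ∈ torI I N := by
  obtain ⟨n, hn⟩ := hm
  exact ⟨n, fun r hr => by rw [← map_smul, hn r hr, map_zero]⟩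

theorem torI_of_injective {I : Ideal A} {M N : Type*} [AddCommGroup M] [Module A M]
    [AddCommGroup N] [Module A N] (f : M →ₗ[A] N) (hf : Function.Injective f) {m : M}
    (hm : f m ∈ torI I N) : m ∈ torI I M := by
  obtain ⟨n, hn⟩ := hm
  exact ⟨n, fun r hr => hf (by rw [map_smul, hn r hr, map_zero])⟩

/-- if `I` f.g. and `I^k m` is torsion then so is `m`. -/
theorem torI_of_pow_smul [IsNoetherianRing A] {I : Ideal A} {M : Type*} [AddCommGroup M]
    [Module A M] {m : M} (k : ℕ) (h : ∀ r ∈ I ^ k, r • m ∈ torI I M) : m ∈ torI I M := by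
  obtain ⟨s, hs⟩ := (isNoetherianRing_iff_ideal_fg A).1 ‹_› (I ^ k)
  have h1 : ∀ x ∈ s, ∃ n : ℕ, ∀ r ∈ I ^ n, r • (x • m) = 0 := fun x hx =>
    h x (hs ▸ Ideal.subset_span hx)
  choose! n hn using h1
  refine ⟨k + s.sup n, fun r hr => ?_⟩
  rw [pow_add, mul_comm] at hr
  induction hr using Submodule.mul_induction_on' with
  | mem_mul_mem a ha b hb =>
    rw [← hs] at hb
    rw [mul_smul]
    induction hb using Submodule.span_induction with
    | mem x hx => exact hn x hx a (Ideal.pow_le_pow_right (Finset.le_sup hx) ha)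
    | zero => simp
    | add x y _ _ hx hy => rw [add_smul, smul_add, hx, hy, add_zero]
    | smul c x _ hx => rw [smul_assoc, smul_comm, hx, smul_zero]
  | add x _ y _ hx hy => rw [add_smul, hx, hy, add_zero]

theorem torI_quot [IsNoetherianRing A] (I : Ideal A) (M : Type*) [AddCommGroup M]
    [Module A M] : torI I (M ⧸ torI I M) = ⊥ := by
  rw [eq_bot_iff]
  intro z hz
  obtain ⟨m, rfl⟩ := Submodule.mkQ_surjective _ z
  obtain ⟨n, hn⟩ := hz
  have : m ∈ torI I M := torI_of_pow_smul n fun r hr => by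
    have := hn r hr
    rwa [← map_smul, Submodule.mkQ_apply, Submodule.Quotient.mk_eq_zero] at this
  simpa using this

end tors

section setup
variable (A : Type u) [CommRing A] [IsNoetherianRing A] [IsLocalRing A]

abbrev tor (M : Type*) [AddCommGroup M] [Module A M] : Submodule A M := torI (maximalIdeal A) M

/-- generators of the maximal ideal -/
noncomputable def gens : Finset A :=
  ((isNoetherianRing_iff_ideal_fg A).1 ‹_› (maximalIdeal A)).choose

theorem span_gens : Ideal.span (gens A : Set A) = maximalIdeal A :=
  ((isNoetherianRing_iff_ideal_fg A).1 ‹_› (maximalIdeal A)).choose_spec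

abbrev F : Type u := (x : gens A) → Localization.Away x.1

instance : Module.Flat A (F A) := by
  classical
  exact Module.Flat.of_linearEquiv
    (DFinsupp.linearEquivFunOnFintype (R := A) (M := fun x : gens A => Localization.Away x.1)).symm

abbrev oneF : A →ₗ[A] F A := LinearMap.toSpanSingleton A (F A) 1

abbrev G : Type u := F A ⧸ LinearMap.range (oneF A)

variable {A}

theorem tmul_F_eq_zero {M : Type*} [AddCommGroup M] [Module A M] {m : M} (hm : m ∈ tor A M)
    (f : F A) : m ⊗ₜ[A] f = 0 := by
  classical
  obtain ⟨n, hn⟩ := hm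
  rw [← Finset.univ_sum_single f, tmul_sum]
  refine Finset.sum_eq_zero fun x _ => ?_
  have hx : x.1 ∈ maximalIdeal A := span_gens A ▸ Ideal.subset_span x.2
  obtain ⟨y, hy⟩ : ∃ y, f x = (x.1 ^ n) • y := by
    refine ⟨IsLocalization.mk' _ 1 ((⟨x.1, Submonoid.mem_powers _⟩ : Submonoid.powers x.1) ^ n) * f x, ?_⟩
    rw [← smul_mul_assoc]
    have : (x.1 ^ n) • (IsLocalization.mk' (Localization.Away x.1) 1
      ((⟨x.1, Submonoid.mem_powers _⟩ : Submonoid.powers x.1) ^ n)) = 1 := by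
      rw [Algebra.smul_def, IsLocalization.mul_mk'_eq_mk'_of_mul]
      simpa using IsLocalization.mk'_self' (Localization.Away x.1)
        ((⟨x.1, Submonoid.mem_powers _⟩ : Submonoid.powers x.1) ^ n)
    rw [this, one_mul]
  rw [hy, ← LinearMap.single_apply (R := A) (φ := fun x : gens A => Localization.Away x.1), map_smul, tmul_smul, smul_tmul', hn _ (Ideal.pow_mem_pow hx n), zero_tmul]

theorem tmul_one_F {M : Type*} [AddCommGroup M] [Module A M] {m : M}
    (h : m ⊗ₜ[A] (1 : F A) = 0) : m ∈ tor A M := by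
  have h1 : ∀ x ∈ gens A, ∃ n : ℕ, x ^ n • m = 0 := fun x hx => by
    have h2 : m ⊗ₜ[A] (1 : Localization.Away x) = 0 := by
      have := congrArg (LinearMap.lTensor M (LinearMap.proj (R := A)
        (φ := fun x : gens A => Localization.Away x.1) ⟨x, hx⟩)) h
      simpa using this
    have h3 : (1 : Localization.Away x) ⊗ₜ[A] m = 0 := by
      have := congrArg (TensorProduct.comm A _ _) h2
      simpa using this
    have h4 := (IsLocalizedModule.eq_zero_iff (Submonoid.powers x)
      (TensorProduct.mk A (Localization.Away x) M 1) (m := m)).1 h3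
    obtain ⟨⟨_, n, rfl⟩, hc⟩ := h4
    exact ⟨n, hc⟩
  choose! n hn using h1
  have key : maximalIdeal A ≤ (Ideal.radical (LinearMap.ker (LinearMap.toSpanSingleton A M m))) := by
    rw [← span_gens A, Ideal.span_le]
    intro x hx
    exact ⟨n x, by simpa using hn x hx⟩
  obtain ⟨k, hk⟩ := Ideal.exists_pow_le_of_le_radical_of_fg key
    ((isNoetherianRing_iff_ideal_fg A).1 ‹_› _)
  exact ⟨k, fun r hr => by simpa using hk hr⟩

theorem rTensor_F_injective {M N : Type*} [AddCommGroup M] [Module A M]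
    [AddCommGroup N] [Module A N] (a : M →ₗ[A] N) (ha : LinearMap.ker a ≤ tor A M) :
    Function.Injective (a.rTensor (F A)) := by
  have h := Module.Flat.rTensor_exact (F A) (LinearMap.exact_subtype_ker_map a)
  rw [← LinearMap.ker_eq_bot, LinearMap.exact_iff.1 h, eq_bot_iff]
  rintro _ ⟨z, rfl⟩
  induction z using TensorProduct.induction_on with
  | zero => simp
  | tmul x y => simpa using tmul_F_eq_zero (ha x.2) y
  | add x y hx hy => rw [map_add]; exact add_mem hx hy

variable (A) in
/-- the projection `M ⊗ F → M ⊗ G` -/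
abbrev pG (M : Type*) [AddCommGroup M] [Module A M] : M ⊗[A] F A →ₗ[A] M ⊗[A] G A :=
  (LinearMap.range (oneF A)).mkQ.lTensor M

theorem pG_surjective (M : Type*) [AddCommGroup M] [Module A M] :
    Function.Surjective (pG A M) :=
  LinearMap.lTensor_surjective _ (Submodule.mkQ_surjective _)

theorem pG_eq_zero_iff {M : Type*} [AddCommGroup M] [Module A M] (w : M ⊗[A] F A) :
    pG A M w = 0 ↔ ∃ m : M, w = m ⊗ₜ (1 : F A) := by
  have h := lTensor_exact M (f := oneF A) (g := (LinearMap.range (oneF A)).mkQ)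
    (LinearMap.exact_iff.2 (by simp)) (Submodule.mkQ_surjective _)
  rw [h w]
  constructor
  · rintro ⟨z, rfl⟩
    refine ⟨TensorProduct.rid A M z, ?_⟩
    induction z using TensorProduct.induction_on with
    | zero => simp
    | tmul x y => simp [smul_tmul]
    | add x y hx hy => rw [map_add, hx, hy, map_add, add_tmul]
  · rintro ⟨m, rfl⟩
    exact ⟨m ⊗ₜ 1, by simp⟩

theorem pG_rTensor {M N : Type*} [AddCommGroup M] [Module A M]
    [AddCommGroup N] [Module A N] (a : M →ₗ[A] N) (w : M ⊗[A] F A) :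
    a.rTensor (G A) (pG A M w) = pG A N (a.rTensor (F A) w) := by
  rw [← LinearMap.comp_apply, ← LinearMap.comp_apply, LinearMap.rTensor_comp_lTensor,
    LinearMap.lTensor_comp_rTensor]

/-- exact up to torsion in the kernel of the first map -/
structure TEx {M' M M'' : Type*} [AddCommGroup M'] [Module A M'] [AddCommGroup M] [Module A M]
    [AddCommGroup M''] [Module A M''] (a : M' →ₗ[A] M) (b : M →ₗ[A] M'') : Prop where
  ker : LinearMap.ker a ≤ tor A M'
  exact : Function.Exact a b
  surj : Function.Surjective b

section
variable {M' M M'' : Type*} [AddCommGroup M'] [Module A M'] [AddCommGroup M]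
    [Module A M] [AddCommGroup M''] [Module A M''] {a : M' →ₗ[A] M} {b : M →ₗ[A] M''}

theorem TEx.tor_of_eq (h : TEx a b) {w : M' ⊗[A] F A} {m : M}
    (hw : a.rTensor (F A) w = m ⊗ₜ (1 : F A)) : b m ∈ tor A M'' := by
  apply tmul_one_F
  have := congrArg (b.rTensor (F A)) hw
  rw [← LinearMap.rTensor_comp_apply, h.exact.linearMap_comp_eq_zero] at this
  simpa using this.symm

theorem TEx.smul_eq_zero (h : TEx a b) {w : M' ⊗[A] F A} {m : M}
    (hw : a.rTensor (F A) w = m ⊗ₜ (1 : F A)) : pG A M' w ∈ tor A _ := by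
  obtain ⟨n, hn⟩ := h.tor_of_eq hw
  refine ⟨n, fun r hr => ?_⟩
  have h1 := hn r hr
  rw [← map_smul] at h1
  obtain ⟨m', hm'⟩ := (h.exact _).1 h1
  rw [← map_smul, pG_eq_zero_iff]
  refine ⟨m', rTensor_F_injective a h.ker ?_⟩
  rw [map_smul, hw, smul_tmul', ← hm']
  simp

theorem TEx.rTensor (h : TEx a b) : TEx (a.rTensor (G A)) (b.rTensor (G A)) where
  exact := rTensor_exact _ h.exact h.surj
  surj := LinearMap.rTensor_surjective _ h.surj
  ker := by
    intro z hz
    obtain ⟨w, rfl⟩ := pG_surjective _ z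
    rw [LinearMap.mem_ker, pG_rTensor, pG_eq_zero_iff] at hz
    obtain ⟨m, hm⟩ := hz
    exact h.smul_eq_zero hm

variable (A) in
/-- restriction to torsion -/
def tmap (f : M →ₗ[A] M'') : tor A M →ₗ[A] tor A M'' :=
  f.restrict fun _ hm => torI_map f hm

theorem TEx.les1 (h : TEx a b) : Function.Exact (tmap A a) (tmap A b) := by
  rintro ⟨m, hm⟩
  constructor
  · intro hb
    have hb' : b m = 0 := congrArg Subtype.val hb
    obtain ⟨m', rfl⟩ := (h.exact _).1 hb'
    obtain ⟨n, hn⟩ := hm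
    have : m' ∈ tor A M' := torI_of_pow_smul n fun r hr => h.ker (by simpa using hn r hr)
    exact ⟨⟨m', this⟩, rfl⟩
  · rintro ⟨⟨m', hm'⟩, h'⟩
    have h2 : a m' = m := congrArg Subtype.val h'
    subst h2
    exact Subtype.ext (h.exact.apply_apply_eq_zero m')

theorem TEx.les2 (h : TEx a b) : ∃ δ : tor A M'' →ₗ[A] tor A (M' ⊗[A] G A),
    Function.Exact (tmap A b) δ ∧ Function.Exact δ (tmap A (a.rTensor (G A))) := by
  have inj := rTensor_F_injective a h.ker
  let K : Submodule A M := (tor A M'').comap b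
  have hK : ∀ m : K, (m : M) ⊗ₜ[A] (1 : F A) ∈ LinearMap.range (a.rTensor (F A)) := by
    rintro ⟨m, hm⟩
    refine (Module.Flat.rTensor_exact (F A) h.exact _).1 ?_
    simpa using tmul_F_eq_zero hm 1
  let φ : K →ₗ[A] M' ⊗[A] F A := (LinearEquiv.ofInjective _ inj).symm.toLinearMap ∘ₗ
    (((TensorProduct.mk A M (F A)).flip 1 ∘ₗ K.subtype).codRestrict _ hK)
  have hφ : ∀ m : K, a.rTensor (F A) (φ m) = (m : M) ⊗ₜ (1 : F A) := fun m => by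
    have := (LinearEquiv.ofInjective _ inj).apply_symm_apply
      ((((TensorProduct.mk A M (F A)).flip 1 ∘ₗ K.subtype).codRestrict _ hK) m)
    exact congrArg Subtype.val this
  let ψ : K →ₗ[A] tor A (M' ⊗[A] G A) :=
    (pG A M' ∘ₗ φ).codRestrict _ fun m => h.smul_eq_zero (hφ m)
  let π : K →ₗ[A] tor A M'' := b.restrict fun _ hm => hm
  have hπ : Function.Surjective π := by
    rintro ⟨x, hx⟩
    obtain ⟨m, rfl⟩ := h.surj x
    exact ⟨⟨m, hx⟩, rfl⟩
  have hψ : ∀ m : K, ψ m = 0 ↔ ∃ m', (m : M) - a m' ∈ tor A M := fun m => by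
    have : ψ m = 0 ↔ pG A M' (φ m) = 0 := Subtype.ext_iff
    rw [this, pG_eq_zero_iff]
    refine exists_congr fun m' => ?_
    rw [← inj.eq_iff, hφ, LinearMap.rTensor_tmul, ← sub_eq_zero, ← sub_tmul]
    exact ⟨tmul_one_F, fun h => tmul_F_eq_zero h 1⟩
  have hle : LinearMap.ker π ≤ LinearMap.ker ψ := by
    rintro ⟨m, hm⟩ h1
    have h1' : b m = 0 := congrArg Subtype.val h1
    obtain ⟨m', rfl⟩ := (h.exact _).1 h1'
    exact (hψ _).2 ⟨m', by simp⟩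
  let δ := (LinearMap.ker π).liftQ ψ hle ∘ₗ (π.quotKerEquivOfSurjective hπ).symm.toLinearMap
  have hδ : ∀ m : K, δ (π m) = ψ m := fun m => by
    have : (π.quotKerEquivOfSurjective hπ).symm (π m) = Submodule.Quotient.mk m := by
      rw [LinearEquiv.symm_apply_eq]; rfl
    simp only [δ, LinearMap.comp_apply, LinearEquiv.coe_coe, this]
    exact Submodule.liftQ_apply _ _ _
  refine ⟨δ, ?_, ?_⟩
  · intro x
    obtain ⟨m, rfl⟩ := hπ x
    rw [hδ, hψ]
    constructor
    · rintro ⟨m', hm'⟩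
      refine ⟨⟨_, hm'⟩, Subtype.ext ?_⟩
      change b (m - a m') = b m
      rw [map_sub, h.exact.apply_apply_eq_zero, sub_zero]
    · rintro ⟨⟨t, ht⟩, h'⟩
      have h2 : b t = b m := congrArg Subtype.val h'
      have h3 : b (m - t) = 0 := by rw [map_sub, h2, sub_self]
      obtain ⟨m', hm'⟩ := (h.exact _).1 h3
      exact ⟨m', by rw [hm']; simpa using ht⟩
  · rintro ⟨z, hz⟩
    constructor
    · intro h'
      have h2 : a.rTensor (G A) z = 0 := congrArg Subtype.val h'
      obtain ⟨w, rfl⟩ := pG_surjective _ z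
      rw [pG_rTensor, pG_eq_zero_iff] at h2
      obtain ⟨m, hm⟩ := h2
      refine ⟨π ⟨m, h.tor_of_eq hm⟩, ?_⟩
      rw [hδ]
      refine Subtype.ext ?_
      change pG A M' (φ _) = _
      congr 1
      exact inj (by rw [hφ, hm])
    · rintro ⟨x, hx⟩
      obtain ⟨m, rfl⟩ := hπ x
      rw [hδ] at hx
      rw [← hx]
      refine Subtype.ext ?_
      change a.rTensor (G A) (pG A M' (φ m)) = 0
      rw [pG_rTensor, hφ, pG_eq_zero_iff]
      exact ⟨_, rfl⟩

end

end setup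
end GCT


namespace GCT
open TensorProduct IsLocalRing
universe u
section cohom
variable (A : Type u) [CommRing A] [IsNoetherianRing A] [IsLocalRing A]

/-- iterated tensor product with `G` -/
noncomputable def Tp : ℕ → ModuleCat.{u} A → ModuleCat.{u} A
  | 0, M => M
  | i + 1, M => Tp i (ModuleCat.of A (M ⊗[A] G A))

noncomputable def Tmap : (i : ℕ) → {M N : ModuleCat.{u} A} → (M →ₗ[A] N) → (Tp A i M →ₗ[A] Tp A i N)
  | 0, _, _, f => f
  | i + 1, M, N, f =>
    Tmap i (M := ModuleCat.of A (M ⊗[A] G A)) (N := ModuleCat.of A (N ⊗[A] G A)) (f.rTensor (G A))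

/-- local cohomology -/
def H (i : ℕ) (M : Type u) [AddCommGroup M] [Module A M] : Type u :=
  tor A (Tp A i (ModuleCat.of A M))

noncomputable instance (i : ℕ) (M : Type u) [AddCommGroup M] [Module A M] : AddCommGroup (H A i M) :=
  inferInstanceAs (AddCommGroup (tor A (Tp A i (ModuleCat.of A M))))
noncomputable instance (i : ℕ) (M : Type u) [AddCommGroup M] [Module A M] : Module A (H A i M) :=
  inferInstanceAs (Module A (tor A (Tp A i (ModuleCat.of A M))))

variable {A}
variable {M' M M'' : Type u} [AddCommGroup M'] [Module A M'] [AddCommGroup M]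
    [Module A M] [AddCommGroup M''] [Module A M'']

noncomputable def Hmap (i : ℕ) (f : M →ₗ[A] M'') : H A i M →ₗ[A] H A i M'' :=
  tmap A (Tmap A i (M := ModuleCat.of A M) (N := ModuleCat.of A M'') f)

theorem Tmap_id (i : ℕ) (M : ModuleCat.{u} A) :
    Tmap A i (LinearMap.id : M →ₗ[A] M) = LinearMap.id := by
  induction i generalizing M with
  | zero => rfl
  | succ i ih => 
    change Tmap A i (M := .of A (M ⊗[A] G A)) (N := .of A (M ⊗[A] G A)) ((LinearMap.id : M →ₗ[A] M).rTensor (G A)) = _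
    rw [LinearMap.rTensor_id]; exact ih _

theorem Tmap_comp (i : ℕ) {M N P : ModuleCat.{u} A} (g : N →ₗ[A] P) (f : M →ₗ[A] N) :
    Tmap A i (g ∘ₗ f) = Tmap A i g ∘ₗ Tmap A i f := by
  induction i generalizing M N P with
  | zero => rfl
  | succ i ih => 
    change Tmap A i (M := .of A (M ⊗[A] G A)) (N := .of A (P ⊗[A] G A)) ((g ∘ₗ f).rTensor (G A)) = _
    rw [LinearMap.rTensor_comp]; exact ih (M := .of A (M ⊗[A] G A)) (N := .of A (N ⊗[A] G A)) (P := .of A (P ⊗[A] G A)) _ _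

theorem Tmap_smul (i : ℕ) {M N : ModuleCat.{u} A} (x : A) (f : M →ₗ[A] N) :
    Tmap A i (x • f) = x • Tmap A i f := by
  induction i generalizing M N with
  | zero => rfl
  | succ i ih => 
    change Tmap A i (M := .of A (M ⊗[A] G A)) (N := .of A (N ⊗[A] G A)) ((x • f).rTensor (G A)) = _
    rw [LinearMap.rTensor_smul]; exact ih (M := .of A (M ⊗[A] G A)) (N := .of A (N ⊗[A] G A)) _

theorem Tmap_add (i : ℕ) {M N : ModuleCat.{u} A} (g f : M →ₗ[A] N) :
    Tmap A i (g + f) = Tmap A i g + Tmap A i f := by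
  induction i generalizing M N with
  | zero => rfl
  | succ i ih => 
    change Tmap A i (M := .of A (M ⊗[A] G A)) (N := .of A (N ⊗[A] G A)) ((g + f).rTensor (G A)) = _
    rw [LinearMap.rTensor_add]; exact ih (M := .of A (M ⊗[A] G A)) (N := .of A (N ⊗[A] G A)) _ _

theorem Hmap_id (i : ℕ) : Hmap i (LinearMap.id : M →ₗ[A] M) = LinearMap.id := by
  ext z; exact Subtype.ext (LinearMap.congr_fun (Tmap_id i (.of A M)) z.1)

theorem Hmap_comp (i : ℕ) (g : M →ₗ[A] M'') (f : M' →ₗ[A] M) :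
    Hmap i (g ∘ₗ f) = Hmap i g ∘ₗ Hmap i f := by
  ext z; exact Subtype.ext (LinearMap.congr_fun
    (Tmap_comp i (M := .of A M') (N := .of A M) (P := .of A M'') g f) z.1)

theorem Hmap_add (i : ℕ) (g f : M' →ₗ[A] M) :
    Hmap i (g + f) = Hmap i g + Hmap i f := by
  ext z; exact Subtype.ext (LinearMap.congr_fun
    (Tmap_add i (M := .of A M') (N := .of A M) g f) z.1)

theorem Hmap_smul (i : ℕ) (x : A) (f : M' →ₗ[A] M) :
    Hmap i (x • f) = x • Hmap i f := by
  ext z; exact Subtype.ext (LinearMap.congr_fun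
    (Tmap_smul i (M := .of A M') (N := .of A M) x f) z.1)

theorem Hmap_lsmul (i : ℕ) (x : A) (z : H A i M) :
    Hmap i (LinearMap.lsmul A M x) z = x • z := by
  have : LinearMap.lsmul A M x = x • LinearMap.id := rfl
  rw [this, Hmap_smul, Hmap_id]; rfl

theorem H_torsion (i : ℕ) (z : H A i M) : z ∈ tor A (H A i M) := by
  obtain ⟨n, hn⟩ := z.2
  exact ⟨n, fun r hr => Subtype.ext (hn r hr)⟩

theorem TEx.Tmap {M' M M'' : ModuleCat.{u} A} {a : M' →ₗ[A] M} {b : M →ₗ[A] M''} (h : TEx a b)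
    (i : ℕ) : TEx (Tmap A i a) (Tmap A i b) := by
  induction i generalizing M' M M'' with
  | zero => exact h
  | succ i ih => exact ih (M' := .of A (M' ⊗[A] G A)) (M := .of A (M ⊗[A] G A)) (M'' := .of A (M'' ⊗[A] G A)) h.rTensor

variable {a : M' →ₗ[A] M} {b : M →ₗ[A] M''}

theorem TEx.Hles1 (h : TEx a b) (i : ℕ) : Function.Exact (Hmap i a) (Hmap i b) :=
  TEx.les1 (TEx.Tmap (M' := .of A M') (M := .of A M) (M'' := .of A M'') h i)

theorem Tp_les2 {M' M M'' : ModuleCat.{u} A} {a : M' →ₗ[A] M} {b : M →ₗ[A] M''} (h : TEx a b)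
    (i : ℕ) : ∃ δ : tor A (Tp A i M'') →ₗ[A] tor A (Tp A (i + 1) M'),
      Function.Exact (tmap A (GCT.Tmap A i b)) δ ∧
      Function.Exact δ (tmap A (GCT.Tmap A (i + 1) a)) := by
  induction i generalizing M' M M'' with
  | zero => exact h.les2
  | succ i ih => exact ih (M' := .of A (M' ⊗[A] G A)) (M := .of A (M ⊗[A] G A)) (M'' := .of A (M'' ⊗[A] G A)) h.rTensor

theorem TEx.Hles2 (h : TEx a b) (i : ℕ) : ∃ δ : H A i M'' →ₗ[A] H A (i + 1) M',
    Function.Exact (Hmap i b) δ ∧ Function.Exact δ (Hmap (i + 1) a) :=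
  Tp_les2 (M' := .of A M') (M := .of A M) (M'' := .of A M'') h i

variable (M) in
/-- `H 0 M` is the torsion submodule -/
def H0 : H A 0 M ≃ₗ[A] tor A M := LinearEquiv.refl A (tor A M)

theorem Tp_subsingleton (i : ℕ) (M : ModuleCat.{u} A) (h : Subsingleton M) :
    Subsingleton (Tp A i M) := by
  induction i generalizing M with
  | zero => exact h
  | succ i ih => exact ih _ (inferInstanceAs (Subsingleton (M ⊗[A] G A)))

theorem H_subsingleton (i : ℕ) [Subsingleton M] : Subsingleton (H A i M) := by
  have := Tp_subsingleton i (.of A M) ‹_›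
  exact inferInstanceAs (Subsingleton (tor A (Tp A i (.of A M))))

theorem H_succ_of_torsion (i : ℕ) (h : ∀ m : M, m ∈ tor A M) : Subsingleton (H A (i + 1) M) := by
  have : Subsingleton (M ⊗[A] G A) := by
    refine subsingleton_of_forall_eq 0 fun z => ?_
    obtain ⟨w, rfl⟩ := pG_surjective _ z
    induction w using TensorProduct.induction_on with
    | zero => simp
    | tmul x y => rw [tmul_F_eq_zero (h x), map_zero]
    | add x y hx hy => rw [map_add, hx, hy, add_zero]
  have := Tp_subsingleton i (.of A (M ⊗[A] G A)) ‹_›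
  exact inferInstanceAs (Subsingleton (tor A (Tp A i (.of A (M ⊗[A] G A)))))

/-- the module `G ⊗ ⋯ ⊗ G` -/
noncomputable def Gp (A : Type u) [CommRing A] [IsNoetherianRing A] [IsLocalRing A] :
    ℕ → ModuleCat.{u} A
  | 0 => ModuleCat.of A A
  | i + 1 => ModuleCat.of A (G A ⊗[A] Gp A i)

theorem Tp_iso (i : ℕ) : ∃ e : (M : ModuleCat.{u} A) → Tp A i M ≃ₗ[A] M ⊗[A] Gp A i,
    ∀ (M N : ModuleCat.{u} A) (f : M →ₗ[A] N) (z : Tp A i M),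
      e N (Tmap A i f z) = f.rTensor (Gp A i) (e M z) := by
  induction i with
  | zero =>
    refine ⟨fun M => (TensorProduct.rid A M).symm, fun M N f z => ?_⟩
    exact (LinearMap.rTensor_tmul A f (1 : A) z).symm
  | succ i ih =>
    obtain ⟨e, he⟩ := ih
    refine ⟨fun M => (e (.of A (M ⊗[A] G A))).trans (TensorProduct.assoc A M (G A) (Gp A i)), 
      fun M N f z => ?_⟩
    have h1 := he (.of A (M ⊗[A] G A)) (.of A (N ⊗[A] G A)) (f.rTensor (G A)) z
    have h2 : ∀ y : (M ⊗[A] G A) ⊗[A] Gp A i, 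
      TensorProduct.assoc A N (G A) (Gp A i) ((f.rTensor (G A)).rTensor (Gp A i) y) = 
      f.rTensor (G A ⊗[A] Gp A i) (TensorProduct.assoc A M (G A) (Gp A i) y) := by
      intro y
      rw [LinearMap.rTensor_tensor]
      simp
    exact (congrArg _ h1).trans (h2 _)

theorem H_fg (i : ℕ) (z : H A i M) : ∃ N : Submodule A M, N.FG ∧
    ∃ w : H A i N, Hmap i N.subtype w = z := by
  obtain ⟨e, he⟩ := Tp_iso (A := A) i
  obtain ⟨z, n, hn⟩ := z
  obtain ⟨s, hs⟩ := (isNoetherianRing_iff_ideal_fg A).1 ‹_› (maximalIdeal A ^ n)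
  obtain ⟨N, hN, w, hw⟩ := TensorProduct.exists_of_fg (e (.of A M) z)
  have h1 : ∀ r ∈ s, ∃ Q : Submodule A M, ∃ hQ : N ≤ Q, Q.FG ∧
      (Submodule.inclusion hQ).rTensor (Gp A i) (r • w) = 0 := fun r hr => by
    have h2 : N.subtype.rTensor (Gp A i) (r • w) = 0 := by
      rw [map_smul, hw, ← map_smul, hn r (hs ▸ Ideal.subset_span hr), map_zero]
    obtain ⟨Q, hQ, hQ2, h3⟩ := TensorProduct.eq_zero_of_fg_of_subtype_eq_zero hN h2
    exact ⟨Q, hQ, hQ2, h3⟩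
  choose! Q hQ hQfg hQz using h1
  let P : Submodule A M := N ⊔ s.sup Q
  have hNP : N ≤ P := le_sup_left
  have hPfg : P.FG := hN.sup (Submodule.fg_finset_sup s Q hQfg)
  let w' := (Submodule.inclusion hNP).rTensor (Gp A i) w
  have hw' : ∀ r ∈ maximalIdeal A ^ n, r • w' = 0 := by
    intro r hr
    rw [← hs] at hr
    induction hr using Submodule.span_induction with
    | mem x hx =>
      have hle : Q x ≤ P := le_trans (Finset.le_sup hx) le_sup_right
      have : Submodule.inclusion hNP = Submodule.inclusion hle ∘ₗ Submodule.inclusion (hQ x hx) := rfl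
      rw [← map_smul, this, LinearMap.rTensor_comp_apply, hQz x hx, map_zero]
    | zero => simp
    | add x y _ _ hx hy => rw [add_smul, hx, hy, add_zero]
    | smul c x _ hx => rw [smul_assoc, hx, smul_zero]
  refine ⟨P, hPfg, ⟨(e (.of A P)).symm w', n, fun r hr => ?_⟩, Subtype.ext ?_⟩
  · rw [← map_smul, hw' r hr, map_zero]
  · have := he (.of A P) (.of A M) P.subtype ((e (.of A P)).symm w')
    apply (e (.of A M)).injective
    refine this.trans ?_
    rw [LinearEquiv.apply_symm_apply, ← hw]
    exact (LinearMap.rTensor_comp_apply _ _ _ _).symm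

end cohom
end GCT



namespace GCT
open TensorProduct IsLocalRing Pointwise
set_option linter.unusedSectionVars false
universe u
section vanish
variable {A : Type u} [CommRing A] [IsNoetherianRing A] [IsLocalRing A]
variable {M : Type u} [AddCommGroup M] [Module A M]

theorem exists_reg [Module.Finite A M] (hM : tor A M = ⊥) (S : Set (Ideal A)) (hS : S.Finite)
    (hp : ∀ p ∈ S, p.IsPrime) (hne : ∀ p ∈ S, p ≠ maximalIdeal A) :
    ∃ u ∈ maximalIdeal A, IsSMulRegular M u ∧ ∀ p ∈ S, u ∉ p := by
  have h1 : maximalIdeal A ∉ associatedPrimes A M ∪ S := by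
    rintro (h | h)
    · obtain ⟨hx, x, h2⟩ := Submodule.isAssociatedPrime_iff.1 (show Submodule.IsAssociatedPrime (⊥ : Submodule A M) (maximalIdeal A) from h)
      have h3 : x ∈ tor A M := ⟨1, fun r hr => by
        rw [pow_one, h2] at hr
        simpa [Submodule.mem_colon_singleton] using hr⟩
      rw [hM] at h3
      have h3 : x = 0 := by simpa using h3
      have : (1 : A) ∈ maximalIdeal A := by rw [h2, h3]; simp [Submodule.mem_colon_singleton]
      exact hx.ne_top ((Ideal.eq_top_iff_one _).2 this)
    · exact hne _ h rfl
  rw [← Ideal.subset_iUnion_iff_mem_of_isMaximal_of_finite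
    (((associatedPrimes.finite A M)).union hS) (maximalIdeal A) (maximalIdeal A)
    (by
      rintro I (h | h) _ _
      · exact h.1
      · exact hp I h) (Ideal.IsMaximal.ne_top inferInstance)
      (Ideal.IsMaximal.ne_top inferInstance)] at h1
  obtain ⟨u, hu, hu2⟩ := Set.not_subset.1 h1
  simp only [Set.mem_iUnion, not_exists] at hu2
  refine ⟨u, hu, ?_, fun p hp h => hu2 p (Or.inr hp) h⟩
  by_contra hreg
  have : u ∈ {r : A | IsSMulRegular M r}ᶜ := hreg
  rw [← biUnion_associatedPrimes_eq_compl_regular] at this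
  simp only [Set.mem_iUnion] at this
  obtain ⟨p, hp, h⟩ := this
  exact hu2 p (Or.inl hp) h

theorem exists_reg' [Module.Finite A M] (hM : tor A M = ⊥) :
    ∃ u ∈ maximalIdeal A, IsSMulRegular M u := by
  obtain ⟨u, h, h', _⟩ := exists_reg hM ∅ Set.finite_empty (by simp) (by simp)
  exact ⟨u, h, h'⟩

theorem TEx_reg {x : A} (hx : IsSMulRegular M x) :
    TEx (LinearMap.lsmul A M x) (Submodule.mkQ (x • (⊤ : Submodule A M))) where
  ker := by
    rw [(isSMulRegular_iff_ker_lsmul_eq_bot M x).1 hx]; exact bot_le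
  exact := by
    rw [LinearMap.exact_iff, Submodule.ker_mkQ]
    ext m
    simp [Submodule.mem_smul_pointwise_iff_exists]
  surj := Submodule.mkQ_surjective _

theorem TEx_sub (N : Submodule A M) : TEx N.subtype N.mkQ where
  ker := by rw [Submodule.ker_subtype]; exact bot_le
  exact := by rw [LinearMap.exact_iff]; simp
  surj := Submodule.mkQ_surjective _

section
variable {M' M'' : Type u} [AddCommGroup M'] [Module A M'] [AddCommGroup M''] [Module A M'']
  {a : M' →ₗ[A] M} {b : M →ₗ[A] M''}

theorem TEx.inj_b (h : TEx a b) (i : ℕ) (hs : Subsingleton (H A i M')) :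
    Function.Injective (Hmap i b) := by
  rw [← LinearMap.ker_eq_bot, LinearMap.exact_iff.1 (h.Hles1 i), eq_bot_iff]
  rintro _ ⟨y, rfl⟩
  simp [Subsingleton.elim y 0]

theorem TEx.surj_b (h : TEx a b) (i : ℕ) (hs : Subsingleton (H A (i + 1) M')) :
    Function.Surjective (Hmap i b) := by
  obtain ⟨δ, h1, -⟩ := h.Hles2 i
  intro y
  exact (h1 y).1 (Subsingleton.elim _ _)

theorem TEx.surj_a (h : TEx a b) (i : ℕ) (hs : Subsingleton (H A i M'')) :
    Function.Surjective (Hmap i a) := by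
  intro y
  exact (h.Hles1 i y).1 (Subsingleton.elim _ _)

theorem TEx.inj_a (h : TEx a b) (i : ℕ) (hs : Subsingleton (H A i M'')) :
    Function.Injective (Hmap (i + 1) a) := by
  obtain ⟨δ, -, h1⟩ := h.Hles2 i
  rw [← LinearMap.ker_eq_bot, LinearMap.exact_iff.1 h1, eq_bot_iff]
  rintro _ ⟨y, rfl⟩
  simp [Subsingleton.elim y 0]

end

theorem tor_torsion (I : Ideal A) (m : torI I M) : m ∈ torI I (torI I M) :=
  torI_of_injective (torI I M).subtype (Submodule.injective_subtype _) m.2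

theorem H_quot_tor_bij (i : ℕ) : Function.Bijective (Hmap (i + 1) (tor A M).mkQ) := by
  have h : ∀ m : tor A M, m ∈ tor A (tor A M) := fun m => tor_torsion _ m
  exact ⟨(TEx_sub (tor A M)).inj_b _ (H_succ_of_torsion i h),
    (TEx_sub (tor A M)).surj_b _ (H_succ_of_torsion (i + 1) h)⟩

theorem lt_succ_of_add_one {a b : WithBot ℕ∞} {i : ℕ} (h : a + 1 ≤ b)
    (hb : b < ((i + 1 : ℕ) : WithBot ℕ∞)) : a < (i : WithBot ℕ∞) := by
  have h1 := lt_of_le_of_lt h hb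
  push_cast at h1
  by_contra hc
  exact absurd h1 (not_lt.2 (add_le_add_left (not_lt.1 hc) 1))

theorem vanish_fg (i : ℕ) (M : Type u) [AddCommGroup M] [Module A M] [Module.Finite A M]
    (h : Module.supportDim A M < (i : WithBot ℕ∞)) : Subsingleton (H A i M) := by
  induction i generalizing M with
  | zero =>
    have : Module.supportDim A M = ⊥ := by
      rw [Nat.cast_zero] at h
      by_contra hne
      have hne := (Module.supportDim_ne_bot_iff_nontrivial A M).1 hne
      have : Nonempty (Module.support A M) := Module.nonempty_support_of_nontrivial.to_subtype
      exact absurd h (not_lt.2 Order.krullDim_nonneg)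
    rw [Module.supportDim_eq_bot_iff_subsingleton] at this
    exact H_subsingleton _
  | succ i ih =>
    suffices hs : Subsingleton (H A (i + 1) (M ⧸ tor A M)) from (H_quot_tor_bij (M := M) i).1.subsingleton
    have ht : tor A (M ⧸ tor A M) = ⊥ := torI_quot _ _
    obtain ⟨x, hx, hreg⟩ := exists_reg' ht
    have h1 := Module.supportDim_quotSMulTop_succ_eq_supportDim hreg hx
    have h2 := lt_of_le_of_lt (Module.supportDim_le_of_surjective (tor A M).mkQ
      (Submodule.mkQ_surjective _)) h
    have := ih (QuotSMulTop x (M ⧸ tor A M)) (lt_succ_of_add_one h1.le h2)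
    have hinj := (TEx_reg hreg).inj_a i this
    refine subsingleton_of_forall_eq 0 fun z => ?_
    obtain ⟨n, hn⟩ := H_torsion _ z
    have key : ∀ k : ℕ, x ^ k • z = 0 → z = 0 := by
      intro k
      induction k with
      | zero => simp
      | succ k ihk =>
        intro h
        apply ihk
        apply hinj
        rw [Hmap_lsmul, map_zero, ← mul_smul, ← pow_succ', h]
    exact key n (hn _ (Ideal.pow_mem_pow hx n))

theorem vanish (i : ℕ) (M : Type u) [AddCommGroup M] [Module A M] 
    (h : Module.supportDim A M < (i : WithBot ℕ∞)) : Subsingleton (H A i M) := by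
  refine subsingleton_of_forall_eq 0 fun z => ?_
  obtain ⟨N, hN, w, rfl⟩ := H_fg i z
  have : Module.Finite A N := Module.Finite.iff_fg.2 hN
  have := vanish_fg i N (lt_of_le_of_lt (Module.supportDim_le_of_injective N.subtype
    (Submodule.injective_subtype _)) h)
  rw [Subsingleton.elim w 0, map_zero]

theorem support_torsion (h : ∀ m : M, m ∈ tor A M) (p : PrimeSpectrum A)
    (hp : p ∈ Module.support A M) : p.asIdeal = maximalIdeal A := by
  obtain ⟨m, hm⟩ := Module.mem_support_iff_exists_annihilator.1 hp
  obtain ⟨n, hn⟩ := h m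
  have : maximalIdeal A ^ n ≤ p.asIdeal := fun r hr =>
    hm ((Submodule.mem_annihilator_span_singleton m r).2 (hn r hr))
  exact (le_antisymm (le_maximalIdeal p.2.ne_top) (p.2.le_of_pow_le this))

theorem supportDim_quot_tor (d : ℕ) (h : Module.supportDim A M = ((d + 1 : ℕ) : WithBot ℕ∞)) :
    Module.supportDim A (M ⧸ tor A M) = ((d + 1 : ℕ) : WithBot ℕ∞) := by
  refine le_antisymm (h ▸ (Module.supportDim_le_of_surjective (tor A M).mkQ
      (Submodule.mkQ_surjective _))) ?_
  have hsupp : Module.support A M = Module.support A (tor A M) ∪ Module.support A (M ⧸ tor A M) :=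
    Module.support_of_exact (f := (tor A M).subtype) (g := (tor A M).mkQ) (TEx_sub _).exact
      (Submodule.injective_subtype _)
      (Submodule.mkQ_surjective _)
  have htor : ∀ p ∈ Module.support A (tor A M), p.asIdeal = maximalIdeal A :=
    support_torsion fun m => tor_torsion _ m
  rcases subsingleton_or_nontrivial (M ⧸ tor A M) with hs | hs
  · exfalso
    rw [Module.support_eq_empty (M := M ⧸ tor A M), Set.union_empty] at hsupp
    rw [← hsupp] at htor
    have : Subsingleton (Module.support A M) := ⟨fun p q => Subtype.ext (PrimeSpectrum.ext 
      ((htor _ p.2).trans (htor _ q.2).symm))⟩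
    have h2 : Module.supportDim A M ≤ 0 := Order.krullDim_nonpos_of_subsingleton
    rw [h] at h2
    norm_cast at h2
  · obtain ⟨p, hp⟩ := Module.nonempty_support_of_nontrivial (R := A) (M := M ⧸ tor A M)
    have hsub : Module.support A M ⊆ Module.support A (M ⧸ tor A M) := by
      rw [hsupp]
      refine Set.union_subset (fun q hq => ?_) le_rfl
      refine Module.mem_support_mono (p := p) ?_ hp
      change p.asIdeal ≤ q.asIdeal
      rw [htor q hq]
      exact le_maximalIdeal p.2.ne_top
    rw [← h]
    exact Order.krullDim_le_of_strictMono (fun a => ⟨a.1, hsub a.2⟩) fun _ _ h => h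

end vanish
end GCT



namespace GCT
open TensorProduct IsLocalRing Pointwise
set_option linter.unusedSectionVars false
universe u
section art
variable {A : Type u} [CommRing A]

theorem art_of_ker {N : Type*} [AddCommGroup N] [Module A N] (x : A)
    (hx : ∀ z : N, ∃ k : ℕ, x ^ k • z = 0)
    (hK : IsArtinian A (LinearMap.ker (LinearMap.lsmul A N x))) : IsArtinian A N := by
  rw [← monotone_stabilizes_iff_artinian]
  intro f
  have fanti : ∀ i j, i ≤ j → ∀ z, z ∈ OrderDual.ofDual (f j) → z ∈ OrderDual.ofDual (f i) :=
    fun i j hij z hz => f.monotone hij hz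
  let L : ℕ → ℕ → Submodule A (LinearMap.ker (LinearMap.lsmul A N x)) := fun k i =>
    ((OrderDual.ofDual (f i)).map (LinearMap.lsmul A N (x ^ k))).comap (Submodule.subtype _)
  have hL : ∀ k i (y), y ∈ L k i ↔ ∃ z ∈ OrderDual.ofDual (f i), x ^ k • z = y.1 := fun k i y =>
    Iff.rfl
  have hanti : ∀ k k' i i', k ≤ k' → i ≤ i' → L k' i' ≤ L k i := by
    intro k k' i i' hk hi y hy
    rw [hL] at hy ⊢
    obtain ⟨z, hz, hzy⟩ := hy
    refine ⟨x ^ (k' - k) • z, Submodule.smul_mem _ _ (fanti i i' hi z hz), ?_⟩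
    rw [← mul_smul, ← pow_add, Nat.add_sub_cancel' hk, hzy]
  have stab : ∀ g : ℕ → Submodule A (LinearMap.ker (LinearMap.lsmul A N x)),
      (∀ i j, i ≤ j → g j ≤ g i) → ∃ n, ∀ m, n ≤ m → g n = g m := fun g hg =>
    (monotone_stabilizes_iff_artinian.2 hK) ⟨fun n => OrderDual.toDual (g n), fun i j h => hg i j h⟩
  obtain ⟨n0, hn0⟩ := stab (fun n => L n n) fun i j h => hanti _ _ _ _ h h
  have hk : ∀ k, ∃ n, ∀ m, n ≤ m → L k n = L k m := fun k =>
    stab (L k) fun i j h => hanti _ _ _ _ le_rfl h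
  choose c hc using hk
  let n1 := max n0 ((Finset.range n0).sup c)
  have hn1 : ∀ k i, n1 ≤ i → L k n1 ≤ L k i := by
    intro k i hi
    rcases lt_or_ge k n0 with h | h
    · have h1 : c k ≤ n1 := le_trans (Finset.le_sup (f := c) (Finset.mem_range.2 h)) (le_max_right _ _)
      rw [← hc k n1 h1, hc k i (h1.trans hi)]
    · have h0 : n0 ≤ n1 := le_max_left _ _
      calc L k n1 ≤ L n0 n0 := hanti _ _ _ _ h h0
        _ = L (max k i) (max k i) := hn0 _ (h.trans (le_max_left _ _))
        _ ≤ L k i := hanti _ _ _ _ (le_max_left _ _) (le_max_right _ _)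
  refine ⟨n1, fun i hi => ?_⟩
  refine le_antisymm (f.monotone hi) ?_
  change OrderDual.ofDual (f n1) ≤ OrderDual.ofDual (f i)
  have key : ∀ k (z : N), z ∈ OrderDual.ofDual (f n1) → x ^ k • z = 0 → z ∈ OrderDual.ofDual (f i) := by
    intro k
    induction k with
    | zero => intro z _ h; rw [pow_zero, one_smul] at h; rw [h]; exact zero_mem _
    | succ k ih =>
      intro z hz h
      have hmem : x ^ k • z ∈ LinearMap.ker (LinearMap.lsmul A N x) := by
        rw [LinearMap.mem_ker, LinearMap.lsmul_apply, ← mul_smul, ← pow_succ', h]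
      obtain ⟨z', hz', h'⟩ := (hL k i ⟨_, hmem⟩).1 (hn1 k i hi ((hL k n1 ⟨_, hmem⟩).2 ⟨z, hz, rfl⟩))
      have h3 : z - z' ∈ OrderDual.ofDual (f i) := by
        apply ih
        · exact sub_mem hz (fanti _ _ hi _ hz')
        · rw [smul_sub, h', sub_self]
      simpa using add_mem h3 hz'
  intro z hz
  obtain ⟨k, hk⟩ := hx z
  exact key k z hz hk

variable [IsNoetherianRing A] [IsLocalRing A]

theorem noeth_iff_art (n : ℕ) (N : Type u) [AddCommGroup N] [Module A N]
    (h : ∀ r ∈ maximalIdeal A ^ n, ∀ z : N, r • z = 0) : IsNoetherian A N ↔ IsArtinian A N := by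
  induction n generalizing N with
  | zero =>
    have : Subsingleton N := subsingleton_of_forall_eq 0 fun z => by
      simpa using h 1 (by simp) z
    exact ⟨fun _ => inferInstance, fun _ => inferInstance⟩
  | succ n ih =>
    let P : Submodule A N := maximalIdeal A • ⊤
    have h1 : IsNoetherian A P ↔ IsArtinian A P := by
      refine ih P fun r hr z => Subtype.ext ?_
      obtain ⟨z, hz⟩ := z
      change r • z = 0
      refine Submodule.smul_induction_on hz (fun a ha m _ => ?_) fun y z hy hz => by
        rw [smul_add, hy, hz, add_zero]
      rw [← mul_smul]
      exact h _ (pow_succ (maximalIdeal A) n ▸ Ideal.mul_mem_mul hr ha) m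
    have h2 : IsNoetherian A (N ⧸ P) ↔ IsArtinian A (N ⧸ P) := by
      have ht : Module.IsTorsionBySet A (N ⧸ P) (maximalIdeal A) := by
        rw [Module.isTorsionBySet_quotient_iff]
        exact fun m i hi ↦ Submodule.smul_mem_smul hi trivial
      let _ := ht.module
      have : IsSemisimpleRing (A ⧸ maximalIdeal A) := by
        let _ := Ideal.Quotient.field (maximalIdeal A)
        infer_instance
      have := (ht.semilinearMap.isSemisimpleModule_iff_of_bijective Function.bijective_id).2
        inferInstance
      exact IsSemisimpleModule.finite_tfae.out 1 2
    rw [isNoetherian_iff_submodule_quotient P, isArtinian_iff_submodule_quotient P, h1, h2]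

theorem exists_pow_kill {N : Type*} [AddCommGroup N] [Module A N] [Module.Finite A N]
    (I : Ideal A) (h : ∀ z : N, z ∈ torI I N) : ∃ n : ℕ, ∀ r ∈ I ^ n, ∀ z : N, r • z = 0 := by
  obtain ⟨s, hs⟩ := Module.Finite.fg_top (R := A) (M := N)
  choose n hn using h
  refine ⟨s.sup n, fun r hr z => ?_⟩
  have hz : z ∈ Submodule.span A (s : Set N) := hs ▸ trivial
  induction hz using Submodule.span_induction with
  | mem x hx => exact hn x r (Ideal.pow_le_pow_right (Finset.le_sup hx) hr)
  | zero => simp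
  | add x y _ _ hx hy => rw [smul_add, hx, hy, add_zero]
  | smul c x _ hx => rw [smul_comm, hx, smul_zero]

theorem H_pow_tor (i : ℕ) {M : Type u} [AddCommGroup M] [Module A M] {x : A}
    (hx : x ∈ maximalIdeal A) (z : H A i M) : ∃ k : ℕ, x ^ k • z = 0 := by
  obtain ⟨n, hn⟩ := H_torsion i z
  exact ⟨n, hn _ (Ideal.pow_mem_pow hx n)⟩

theorem H_artinian (i : ℕ) (M : Type u) [AddCommGroup M] [Module A M] [Module.Finite A M] :
    IsArtinian A (H A i M) := by
  induction i generalizing M with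
  | zero =>
    obtain ⟨n, hn⟩ := exists_pow_kill (maximalIdeal A) (fun m : tor A M => tor_torsion _ m)
    have : IsArtinian A (tor A M) := (noeth_iff_art n _ hn).1 inferInstance
    exact (LinearEquiv.isArtinian_iff (H0 M)).2 this
  | succ i ih =>
    have ht : tor A (M ⧸ tor A M) = ⊥ := torI_quot _ _
    obtain ⟨x, hx, hreg⟩ := exists_reg' ht
    suffices hs : IsArtinian A (H A (i + 1) (M ⧸ tor A M)) from
      isArtinian_of_injective _ (H_quot_tor_bij (M := M) i).1
    refine art_of_ker x (H_pow_tor _ hx) ?_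
    obtain ⟨δ, -, h1⟩ := (TEx_reg hreg).Hles2 i
    have := ih (QuotSMulTop x (M ⧸ tor A M))
    have h2 : LinearMap.ker (LinearMap.lsmul A (H A (i + 1) (M ⧸ tor A M)) x) = LinearMap.range δ := by
      rw [← LinearMap.exact_iff.1 h1]
      ext z
      simp [Hmap_lsmul]
    rw [h2]
    exact isArtinian_of_surjective _ δ.rangeRestrict δ.surjective_rangeRestrict

theorem precomplete_pi (I : Ideal A) [IsPrecomplete I A] (n : ℕ) : IsPrecomplete I (Fin n → A) := by
  refine ⟨fun f hf => ?_⟩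
  have h1 : ∀ j, ∃ L : A, ∀ k, f k j ≡ L [SMOD (I ^ k • ⊤ : Submodule A A)] := fun j => by
    refine IsPrecomplete.prec (I := I) inferInstance fun {m k} hmk => ?_
    refine ((hf hmk).map (LinearMap.proj j)).mono ?_
    rw [Submodule.map_smul'']
    exact Submodule.smul_mono le_rfl le_top
  choose L hL using h1
  refine ⟨L, fun k => ?_⟩
  rw [SModEq.sub_mem]
  have h2 : ∀ j, f k j - L j ∈ I ^ k := fun j => by
    have := SModEq.sub_mem.1 (hL j k)
    simpa using this
  have h3 : f k - L = ∑ j, (f k j - L j) • (Pi.single j (1 : A) : Fin n → A) := by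
    ext t
    simp [Finset.sum_apply, Pi.single_apply]
  rw [h3]
  exact Submodule.sum_mem _ fun j _ => Submodule.smul_mem_smul (h2 j) trivial

theorem fg_of_quot [IsAdicComplete (maximalIdeal A) A] {L : Type*} [AddCommGroup L] [Module A L]
    [IsHausdorff (maximalIdeal A) L] {x : A} (hx : x ∈ maximalIdeal A)
    (h : Module.Finite A (L ⧸ (x • ⊤ : Submodule A L))) : Module.Finite A L := by
  obtain ⟨n, g, hg⟩ := Module.Finite.exists_fin' A (L ⧸ (x • ⊤ : Submodule A L))
  obtain ⟨g', hg'⟩ := Module.projective_lifting_property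
    (Submodule.mkQ (x • ⊤ : Submodule A L)) g (Submodule.mkQ_surjective _)
  have := precomplete_pi (maximalIdeal A) n
  refine Module.Finite.of_surjective g' (surjective_of_mkQ_comp_surjective (I := maximalIdeal A) ?_)
  intro z
  obtain ⟨l, rfl⟩ := Submodule.mkQ_surjective _ z
  obtain ⟨y, hy⟩ := hg (Submodule.mkQ _ l)
  refine ⟨y, ?_⟩
  rw [← hg', LinearMap.comp_apply, ← sub_eq_zero, ← map_sub, Submodule.mkQ_apply,
    Submodule.Quotient.mk_eq_zero, Submodule.mem_smul_pointwise_iff_exists] at hy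
  obtain ⟨b, -, hb⟩ := hy
  rw [LinearMap.comp_apply, ← sub_eq_zero, ← map_sub, Submodule.mkQ_apply,
    Submodule.Quotient.mk_eq_zero, ← hb]
  exact Submodule.smul_mem_smul hx trivial

theorem hom_fg_step [IsAdicComplete (maximalIdeal A) A] {T K Q : Type u} [AddCommGroup T]
    [Module A T] [AddCommGroup K] [Module A K] [AddCommGroup Q] [Module A Q] {x : A}
    (hx : x ∈ maximalIdeal A) (ht : ∀ z : K, z ∈ tor A K) (hs : ∀ k : K, ∃ z : K, x • z = k)
    (δ : Q →ₗ[A] K) (hδ : ∀ z : K, x • z = 0 → z ∈ Set.range δ)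
    (hfin : Module.Finite A (Q →ₗ[A] T)) : Module.Finite A (K →ₗ[A] T) := by
  have hH : IsHausdorff (maximalIdeal A) (K →ₗ[A] T) := by
    refine ⟨fun φ hφ => LinearMap.ext fun z => ?_⟩
    obtain ⟨n, hn⟩ := ht z
    have h1 : φ ∈ (maximalIdeal A ^ n • ⊤ : Submodule A (K →ₗ[A] T)) := by
      simpa [SModEq.sub_mem] using hφ n
    refine Submodule.smul_induction_on h1 (fun a ha ψ _ => ?_) fun y z hy hz => by
      rw [LinearMap.add_apply, hy, hz]; simp
    rw [LinearMap.smul_apply, ← map_smul, hn a ha, map_zero]; rfl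
  refine fg_of_quot hx ?_
  let Ψ : (K →ₗ[A] T) →ₗ[A] (Q →ₗ[A] T) := LinearMap.lcomp A T δ
  have hΨ : LinearMap.ker Ψ ≤ (x • ⊤ : Submodule A (K →ₗ[A] T)) := by
    intro φ hφ
    have h1 : ∀ q, φ (δ q) = 0 := fun q => LinearMap.congr_fun (LinearMap.mem_ker.1 hφ) q
    have h2 : ∀ z z' : K, x • z = x • z' → φ z = φ z' := fun z z' h => by
      obtain ⟨q, hq⟩ := hδ (z - z') (by rw [smul_sub, h, sub_self])
      rw [← sub_eq_zero, ← map_sub, ← hq, h1]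
    choose s hs using hs
    let ψ : K →ₗ[A] T :=
      { toFun := fun k => φ (s k)
        map_add' := fun a b => by
          rw [← map_add]; exact h2 _ _ (by rw [hs, smul_add, hs, hs])
        map_smul' := fun c b => by
          rw [← map_smul]; exact h2 _ _ (by rw [hs, smul_comm, hs]; rfl) }
    rw [Submodule.mem_smul_pointwise_iff_exists]
    refine ⟨ψ, trivial, LinearMap.ext fun k => ?_⟩
    rw [LinearMap.smul_apply, ← map_smul]
    exact h2 _ _ (by rw [hs])
  have h3 : Module.Finite A ((K →ₗ[A] T) ⧸ LinearMap.ker Ψ) :=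
    Module.Finite.equiv Ψ.quotKerEquivRange.symm
  exact Module.Finite.of_surjective (Submodule.factor hΨ) (Submodule.factor_surjective hΨ)

theorem H_hom_fg [IsAdicComplete (maximalIdeal A) A] (T : Type u) [AddCommGroup T] [Module A T]
    [IsArtinian A T] (i : ℕ) (M : Type u) [AddCommGroup M] [Module A M] [Module.Finite A M]
    (hM : Module.supportDim A M < ((i + 1 : ℕ) : WithBot ℕ∞)) :
    Module.Finite A (H A i M →ₗ[A] T) := by
  induction i generalizing M with
  | zero =>
    obtain ⟨n, hn⟩ := exists_pow_kill (maximalIdeal A) (fun m : tor A M => tor_torsion _ m)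
    let Tn : Submodule A T :=
      { carrier := {t | ∀ r ∈ maximalIdeal A ^ n, r • t = 0}
        zero_mem' := by simp
        add_mem' := fun ha hb r hr => by rw [smul_add, ha r hr, hb r hr, add_zero]
        smul_mem' := fun c t ht r hr => by rw [smul_comm, ht r hr, smul_zero] }
    have hTn : IsNoetherian A Tn := by
      refine (noeth_iff_art n Tn fun r hr z => Subtype.ext ?_).2 inferInstance
      exact (show ∀ r ∈ maximalIdeal A ^ n, r • z.1 = 0 from z.2) r hr
    obtain ⟨k, g, hg⟩ := Module.Finite.exists_fin' A (tor A M)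
    let Φ : (H A 0 M →ₗ[A] T) →ₗ[A] (Fin k → Tn) :=
      LinearMap.pi fun j => 
        { toFun := fun φ => ⟨φ ((H0 M).symm (g (Pi.single j 1))), fun r hr => by
            rw [← map_smul, ← map_smul, hn r hr, map_zero, map_zero]⟩
          map_add' := fun _ _ => rfl
          map_smul' := fun _ _ => rfl }
    refine Module.Finite.of_injective Φ ?_
    rw [← LinearMap.ker_eq_bot, eq_bot_iff]
    intro φ hφ
    have h1 : φ ∘ₗ (H0 M).symm.toLinearMap ∘ₗ g = 0 := by
      refine LinearMap.pi_ext' fun j => LinearMap.ext_ring ?_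
      exact congrArg Subtype.val (congrFun hφ j)
    refine (Submodule.mem_bot A).2 (LinearMap.ext fun z => ?_)
    obtain ⟨y, hy⟩ := hg (H0 M z)
    have := LinearMap.congr_fun h1 y
    simpa [hy] using this
  | succ i ih =>
    have ht : tor A (M ⧸ tor A M) = ⊥ := torI_quot _ _
    obtain ⟨x, hx, hreg⟩ := exists_reg' ht
    have hM' := lt_of_le_of_lt (Module.supportDim_le_of_surjective (tor A M).mkQ
      (Submodule.mkQ_surjective _)) hM
    have h1 := Module.supportDim_quotSMulTop_succ_eq_supportDim hreg hx
    have hdim : Module.supportDim A (QuotSMulTop x (M ⧸ tor A M)) < ((i + 1 : ℕ) : WithBot ℕ∞) :=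
      lt_succ_of_add_one h1.le hM'
    suffices hs : Module.Finite A (H A (i + 1) (M ⧸ tor A M) →ₗ[A] T) from
      Module.Finite.equiv (LinearEquiv.congrLeft T A 
        (LinearEquiv.ofBijective _ (H_quot_tor_bij (M := M) i))).symm
    have hfin := ih _ hdim
    have hsurj := (TEx_reg hreg).surj_a (i + 1) (vanish _ _ hdim)
    obtain ⟨δ, -, hδ⟩ := (TEx_reg hreg).Hles2 i
    refine hom_fg_step hx (H_torsion (i + 1)) (fun k => ?_) δ (fun z hz => ?_) hfin
    · obtain ⟨z, hz⟩ := hsurj k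
      exact ⟨z, by rw [← hz, Hmap_lsmul]⟩
    · exact (hδ z).1 (by rw [Hmap_lsmul, hz])

end art
end GCT



namespace GCT
open TensorProduct IsLocalRing Pointwise
set_option linter.unusedSectionVars false
universe u
section nonvan
variable {A : Type u} [CommRing A] [IsNoetherianRing A] [IsLocalRing A]
variable {M : Type u} [AddCommGroup M] [Module A M]

theorem H_smul_surj (v : A) (i : ℕ) (h1 : Module.supportDim A M < ((i + 1 : ℕ) : WithBot ℕ∞))
    (h2 : Module.supportDim A (QuotSMulTop v M) < (i : WithBot ℕ∞)) (z : H A i M) :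
    ∃ w : H A i M, v • w = z := by
  let N : Submodule A M := v • ⊤
  let g : M →ₗ[A] N := (LinearMap.lsmul A M v).codRestrict N fun m =>
    Submodule.smul_mem_pointwise_smul m v ⊤ trivial
  have hg : Function.Surjective g := by
    rintro ⟨n, hn⟩
    obtain ⟨m, -, rfl⟩ := (Submodule.mem_smul_pointwise_iff_exists _ _ _).1 hn
    exact ⟨m, rfl⟩
  have hT : TEx (LinearMap.ker g).subtype g :=
    ⟨by rw [Submodule.ker_subtype]; exact bot_le, by rw [LinearMap.exact_iff]; simp, hg⟩
  have s1 := hT.surj_b i (vanish _ _ (lt_of_le_of_lt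
    (Module.supportDim_le_of_injective _ (Submodule.injective_subtype _)) h1))
  have s2 := (TEx_sub N).surj_a i (vanish _ _ h2)
  obtain ⟨y, rfl⟩ := s2 z
  obtain ⟨w, rfl⟩ := s1 y
  refine ⟨w, ?_⟩
  rw [← Hmap_lsmul, ← LinearMap.comp_apply, ← Hmap_comp]
  rfl

theorem supportDim_swap (u v : A) [Module.Finite A M] :
    Module.supportDim A (QuotSMulTop u (QuotSMulTop v M)) =
    Module.supportDim A (QuotSMulTop v (QuotSMulTop u M)) := by
  unfold Module.supportDim
  rw [Module.support_quotSMulTop, Module.support_quotSMulTop, Module.support_quotSMulTop,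
    Module.support_quotSMulTop, Set.inter_right_comm]

theorem H_kill_fg [Module.Finite A M] (d : ℕ)
    (h0 : Subsingleton (H A (d + 1) M)) {u : A} (hu : IsSMulRegular M u)
    (hnv : Nontrivial (H A d (QuotSMulTop u M))) : ∃ z : H A d M, ∀ w, u • w ≠ z := by
  by_contra hc
  push Not at hc
  have s := (TEx_reg hu).surj_b d h0
  obtain ⟨y, hy⟩ := exists_ne (0 : H A d (QuotSMulTop u M))
  obtain ⟨z, rfl⟩ := s y
  obtain ⟨w, rfl⟩ := hc z
  apply hy
  rw [← Hmap_lsmul]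
  exact (TEx_reg hu).Hles1 d |>.apply_apply_eq_zero w

theorem add_one_cancel {x : WithBot ℕ∞} {d : ℕ} (h : x + 1 = ((d + 1 : ℕ) : WithBot ℕ∞)) :
    x = (d : WithBot ℕ∞) := by
  cases x with
  | bot => exact absurd h (WithBot.bot_ne_coe (a := ((d + 1 : ℕ) : ℕ∞)))
  | coe x =>
    have h' : x + 1 = ((d + 1 : ℕ) : ℕ∞) := WithBot.coe_injective h
    cases x with
    | top => exact absurd h' (ENat.top_ne_coe (d + 1))
    | coe x =>
      have h3 : x + 1 = d + 1 := ENat.coe_inj.1 h'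
      have h4 : x = d := by omega
      rw [h4]; rfl

theorem nonvanish (d : ℕ) (M : Type u) [AddCommGroup M] [Module A M] [Module.Finite A M]
    (h : Module.supportDim A M = (d : WithBot ℕ∞)) : Nontrivial (H A d M) := by
  induction d generalizing M with
  | zero =>
    have : Nontrivial M := by
      rw [← Module.supportDim_ne_bot_iff_nontrivial A, h]; simp
    have hs := support_of_supportDim_eq_zero A M (by simpa using h)
    have htop : tor A M = ⊤ := by
      rw [Module.support_eq_zeroLocus, PrimeSpectrum.zeroLocus_eq_iff] at hs
      obtain ⟨n, hn⟩ := (Module.annihilator A M).exists_pow_le_of_le_radical_of_fg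
        (I := maximalIdeal A)
        (hs ▸ Ideal.le_radical) (IsNoetherian.noetherian _)
      rw [eq_top_iff]
      exact fun m _ => ⟨n, fun r hr => Module.mem_annihilator.1 (hn hr) m⟩
    have : Nontrivial (tor A M) := by
      rw [htop]; exact (Submodule.topEquiv (R := A) (M := M)).toEquiv.nontrivial
    exact (H0 M).toEquiv.nontrivial
  | succ d ih =>
    suffices hs : ∀ (M : Type u) [AddCommGroup M] [Module A M] [Module.Finite A M]
        (h : Module.supportDim A M = ((d + 1 : ℕ) : WithBot ℕ∞)) (ht : tor A M = ⊥),
        Nontrivial (H A (d + 1) M) by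
      have := hs _ (supportDim_quot_tor d h) (torI_quot _ _)
      exact (Equiv.ofBijective _ (H_quot_tor_bij (M := M) d)).nontrivial
    clear h
    intro M _ _ _ h ht
    by_contra hc
    rw [not_nontrivial_iff_subsingleton] at hc
    have hdim : ∀ u ∈ maximalIdeal A, IsSMulRegular M u →
        Module.supportDim A (QuotSMulTop u M) = (d : WithBot ℕ∞) := fun u hu hreg => by
      have := Module.supportDim_quotSMulTop_succ_eq_supportDim hreg hu
      rw [h] at this
      exact add_one_cancel this
    have key : ∀ u ∈ maximalIdeal A, IsSMulRegular M u → ∃ z : H A d M, ∀ w, u • w ≠ z :=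
      fun u hu hreg => H_kill_fg d hc hreg (ih _ (hdim u hu hreg))
    obtain ⟨u0, hu0, hreg0⟩ := exists_reg' ht
    cases d with
    | zero =>
      obtain ⟨z, hz⟩ := key u0 hu0 hreg0
      have : Subsingleton (H A 0 M) := by
        have : Subsingleton (tor A M) := by rw [ht]; infer_instance
        exact (H0 M).toEquiv.subsingleton
      exact hz 0 (Subsingleton.elim _ _)
    | succ e =>
      have hart := H_artinian (A := A) (e + 1) M
      let S : Set (Submodule A (H A (e + 1) M)) :=
        {N | ∃ v ∈ maximalIdeal A, IsSMulRegular M v ∧ N = v • ⊤}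
      obtain ⟨N, ⟨v, hv, hvreg, rfl⟩, hmin⟩ := WellFounded.has_min
        (IsWellFounded.wf (r := (· < · : Submodule A (H A (e + 1) M) → _ → Prop))) S
        ⟨_, u0, hu0, hreg0, rfl⟩
      have hdv := hdim v hv hvreg
      obtain ⟨u, hu, hureg, hup⟩ := exists_reg ht
        (Module.annihilator A (QuotSMulTop v M)).minimalPrimes
        (Ideal.finite_minimalPrimes_of_isNoetherianRing A _) (fun p hp => hp.1.1) (by
          rintro p hp rfl
          have hsub : Subsingleton (Module.support A (QuotSMulTop v M)) := by
            refine ⟨fun a b => ?_⟩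
            have : ∀ a : Module.support A (QuotSMulTop v M), a.1.asIdeal = maximalIdeal A := by
              rintro ⟨a, ha⟩
              rw [Module.support_eq_zeroLocus] at ha
              exact le_antisymm (le_maximalIdeal a.2.ne_top)
                (hp.2 ⟨a.2, ha⟩ (le_maximalIdeal a.2.ne_top))
            exact Subtype.ext (PrimeSpectrum.ext ((this a).trans (this b).symm))
          have : Module.supportDim A (QuotSMulTop v M) ≤ 0 := Order.krullDim_nonpos_of_subsingleton
          rw [hdv] at this
          norm_cast at this)
      have hd2 := Module.supportDim_quotSMulTop_succ_le_of_notMem_minimalPrimes hup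
      rw [supportDim_swap] at hd2
      have hd3 : Module.supportDim A (QuotSMulTop v (QuotSMulTop u M)) < ((e + 1 : ℕ) : WithBot ℕ∞) :=
        lt_succ_of_add_one hd2 (by rw [hdv]; norm_cast; omega)
      have hd4 := H_smul_surj (M := QuotSMulTop u M) v (e + 1)
        (by rw [hdim u hu hureg]; norm_cast; omega) hd3
      obtain ⟨y, hy⟩ := @exists_ne _ (ih _ (hdim u hu hureg)) (0 : H A (e + 1) (QuotSMulTop u M))
      obtain ⟨y', rfl⟩ := hd4 y
      obtain ⟨w, rfl⟩ := (TEx_reg hureg).surj_b (e + 1) hc y'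
      have hle : ((u * v) • ⊤ : Submodule A (H A (e + 1) M)) ≤ v • ⊤ := by
        intro z hz
        rw [Submodule.mem_smul_pointwise_iff_exists] at hz ⊢
        obtain ⟨b, -, rfl⟩ := hz
        exact ⟨u • b, trivial, by rw [← mul_smul, mul_comm]⟩
      have heq : ((u * v) • ⊤ : Submodule A (H A (e + 1) M)) = v • ⊤ := by
        by_contra hne
        exact hmin _ ⟨u * v, Ideal.mul_mem_left _ _ hv, hureg.mul hvreg, rfl⟩
          (lt_of_le_of_ne hle hne)
      have : v • w ∈ ((u * v) • ⊤ : Submodule A (H A (e + 1) M)) :=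
        heq ▸ Submodule.smul_mem_pointwise_smul _ _ _ trivial
      obtain ⟨b, -, hb⟩ := (Submodule.mem_smul_pointwise_iff_exists _ _ _).1 this
      apply hy
      rw [← map_smul, ← hb, mul_smul, ← Hmap_lsmul]
      exact (TEx_reg hureg).Hles1 _ |>.apply_apply_eq_zero _
end nonvan
end GCT



namespace GCT
open TensorProduct IsLocalRing Pointwise
set_option linter.unusedSectionVars false
universe u
section r1
variable {A : Type u} [CommRing A] [IsNoetherianRing A] [IsLocalRing A]
variable {M : Type u} [AddCommGroup M] [Module A M]

theorem H_of_bij (i : ℕ) {f : A} (hf : f ∈ maximalIdeal A)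
    (hb : Function.Bijective (LinearMap.lsmul A M f)) : Subsingleton (H A i M) := by
  let e := LinearEquiv.ofBijective _ hb
  have hinj : ∀ z : H A i M, f • z = 0 → z = 0 := fun z hz => by
    have h1 : Hmap i e.symm.toLinearMap (Hmap i e.toLinearMap z) = z := by
      rw [← LinearMap.comp_apply, ← Hmap_comp]
      simp [Hmap_id]
    have h2 : Hmap i e.toLinearMap z = f • z := Hmap_lsmul i f z
    rw [← h1, h2, hz, map_zero]
  refine subsingleton_of_forall_eq 0 fun z => ?_
  obtain ⟨k, hk⟩ := H_pow_tor i hf z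
  induction k with
  | zero => simpa using hk
  | succ k ih => exact ih (hinj _ (by rw [← mul_smul, ← pow_succ', hk]))

theorem Hmap_zero' (i : ℕ) {N : Type u} [AddCommGroup N] [Module A N] :
    Hmap i (0 : M →ₗ[A] N) = 0 := by
  have := Hmap_add i (0 : M →ₗ[A] N) 0
  simpa using this

theorem H_killed (i : ℕ) {r : A} (hr : ∀ m : M, r • m = 0) (z : H A i M) : r • z = 0 := by
  have : LinearMap.lsmul A M r = 0 := LinearMap.ext hr
  rw [← Hmap_lsmul, this, Hmap_zero', LinearMap.zero_apply]

theorem supportDim_torI {I : Ideal A} (h : ∀ m : M, m ∈ torI I M) :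
    Module.supportDim A M ≤ ringKrullDim (A ⧸ I) := by
  rw [ringKrullDim_quotient]
  have hs : Module.support A M ⊆ PrimeSpectrum.zeroLocus I := by
    intro p hp
    obtain ⟨m, hm⟩ := Module.mem_support_iff_exists_annihilator.1 hp
    obtain ⟨n, hn⟩ := h m
    have : I ^ n ≤ p.asIdeal := fun r hr => hm ((Submodule.mem_annihilator_span_singleton _ _).2 (hn r hr))
    exact p.2.le_of_pow_le this
  exact Order.krullDim_le_of_strictMono (fun a => ⟨a.1, hs a.2⟩) fun {_ _} lt => lt

/-- the sum of two ideals of torsion -/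
theorem torI_sup {I J : Ideal A} {m : M} (h1 : m ∈ torI I M) (h2 : m ∈ torI J M) :
    m ∈ torI (I ⊔ J) M := by
  obtain ⟨n, hn⟩ := h1
  obtain ⟨k, hk⟩ := h2
  refine ⟨n + k, fun r hr => ?_⟩
  obtain ⟨a, ha, b, hb, rfl⟩ := Submodule.mem_sup.1 (Ideal.sup_pow_add_le_pow_sup_pow hr)
  rw [add_smul, hn a ha, hk b hb, add_zero]

theorem TEx_rangeRestrict {N : Type u} [AddCommGroup N] [Module A N] (a : M →ₗ[A] N) :
    TEx (LinearMap.ker a).subtype a.rangeRestrict :=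
  ⟨by rw [Submodule.ker_subtype]; exact bot_le, by rw [LinearMap.exact_iff]; simp,
    a.surjective_rangeRestrict⟩

theorem H_bij_of_small {N : Type u} [AddCommGroup N] [Module A N] (a : M →ₗ[A] N) (e : ℕ)
    (h1 : Module.supportDim A (LinearMap.ker a) < (e : WithBot ℕ∞))
    (h2 : Module.supportDim A (N ⧸ LinearMap.range a) < (e : WithBot ℕ∞)) :
    Function.Bijective (Hmap (e + 1) a) := by
  have l1 : (e : WithBot ℕ∞) ≤ ((e + 1 : ℕ) : WithBot ℕ∞) := by norm_cast; omega
  have l2 : (e : WithBot ℕ∞) ≤ ((e + 1 + 1 : ℕ) : WithBot ℕ∞) := by norm_cast; omega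
  have t1 := TEx_rangeRestrict a
  have t2 := TEx_sub (LinearMap.range a)
  have hc : Hmap (e + 1) a = Hmap (e + 1) (LinearMap.range a).subtype ∘ₗ
      Hmap (e + 1) a.rangeRestrict := by
    rw [← Hmap_comp]; rfl
  rw [hc, LinearMap.coe_comp]
  exact Function.Bijective.comp
    ⟨t2.inj_a e (vanish _ _ h2), t2.surj_a _ (vanish _ _ (h2.trans_le l1))⟩
    ⟨t1.inj_b _ (vanish _ _ (h1.trans_le l1)), t1.surj_b _ (vanish _ _ (h1.trans_le l2))⟩

/-- final algebraic step -/
theorem final_alg {K : Type u} [AddCommGroup K] [Module A K] [Nontrivial K]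
    (hdiv : ∀ a : A, a ≠ 0 → ∀ z : K, ∃ w : K, a • w = z)
    (hfin : Module.Finite A (K →ₗ[A] K)) {f : A} (hf : f ≠ 0) {J : Ideal A} {N : ℕ}
    (hJ : ∀ z : K, f • z = 0 → ∀ r ∈ J ^ N, r • z = 0) : J ≤ (Ideal.span {f}).radical := by
  have hann : Module.annihilator A (K →ₗ[A] K) = ⊥ := by
    rw [eq_bot_iff]
    intro a ha
    by_contra hne
    obtain ⟨z, hz⟩ := exists_ne (0 : K)
    obtain ⟨w, hw⟩ := hdiv a hne z
    have := LinearMap.congr_fun (Module.mem_annihilator.1 ha LinearMap.id) w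
    exact hz (by simpa [hw] using this)
  choose s hs using hdiv f hf
  have hkill : ∀ a ∈ J ^ N, a ∈ Module.annihilator A (QuotSMulTop f (K →ₗ[A] K)) := by
    intro a ha
    have h2 : ∀ z z' : K, f • z = f • z' → a • z = a • z' := fun z z' h => by
      have := hJ (z - z') (by rw [smul_sub, h, sub_self]) a ha
      rwa [smul_sub, sub_eq_zero] at this
    let ψ : K →ₗ[A] K :=
      { toFun := fun k => a • s k
        map_add' := fun x y => by
          rw [← smul_add]; exact h2 _ _ (by rw [hs, smul_add, hs, hs])
        map_smul' := fun c x => by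
          rw [RingHom.id_apply, smul_comm c a]; exact h2 _ _ (by rw [hs, smul_comm, hs]) }
    rw [Module.mem_annihilator]
    intro q
    obtain ⟨φ, rfl⟩ := Submodule.mkQ_surjective _ q
    rw [← map_smul, Submodule.mkQ_apply, Submodule.Quotient.mk_eq_zero,
      Submodule.mem_smul_pointwise_iff_exists]
    refine ⟨ψ ∘ₗ φ, trivial, LinearMap.ext fun k => ?_⟩
    change f • a • s (φ k) = a • φ k
    rw [smul_comm, hs]
  intro x hx
  rw [Ideal.radical_eq_sInf, Submodule.mem_sInf]
  rintro p ⟨hp, hpp⟩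
  have hmem : (⟨p, hpp⟩ : PrimeSpectrum A) ∈ Module.support A (QuotSMulTop f (K →ₗ[A] K)) := by
    rw [Module.support_quotSMulTop, Module.support_eq_zeroLocus, hann]
    refine ⟨fun y hy => ?_, fun y hy => ?_⟩
    · rw [(Submodule.mem_bot A).1 hy]; exact zero_mem _
    · rw [hy]; exact hp (Ideal.mem_span_singleton_self f)
  have h3 : x ^ N ∈ p := Module.annihilator_le_of_mem_support hmem (hkill _ (Ideal.pow_mem_pow hx N))
  exact hpp.mem_of_pow_mem _ h3

end r1
end GCT



namespace GCT
open TensorProduct IsLocalRing Pointwise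
set_option linter.unusedSectionVars false
universe u
section r1
variable {A : Type u} [CommRing A] [IsNoetherianRing A] [IsLocalRing A]
variable {D : Type u} [AddCommGroup D] [Module A D]

theorem exists_pow_split {I J : Ideal A} {f : A} (hIJ : I * J ≤ (Ideal.span {f}).radical)
    (h1 : ∀ x : D, ∃ k : ℕ, f ^ k • x = 0) (x : D) :
    ∃ m : ℕ, (∀ r ∈ I ^ m, r • x ∈ torI J D) ∧ (∀ r ∈ J ^ m, r • x ∈ torI I D) := by
  obtain ⟨k, hk⟩ := h1 x
  obtain ⟨n, hn⟩ := Ideal.exists_pow_le_of_le_radical_of_fg hIJ (IsNoetherian.noetherian _)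
  have h3 : ∀ a ∈ I ^ (n * k), ∀ b ∈ J ^ (n * k), (a * b) • x = 0 := by
    intro a ha b hb
    have : a * b ∈ Ideal.span {f ^ k} := by
      rw [← Ideal.span_singleton_pow]
      refine Ideal.pow_right_mono hn k ?_
      rw [← pow_mul, mul_pow]
      exact Ideal.mul_mem_mul ha hb
    obtain ⟨c, hc⟩ := Ideal.mem_span_singleton'.1 this
    rw [← hc, mul_smul, hk, smul_zero]
  refine ⟨n * k, fun r hr => ⟨n * k, fun s hs => ?_⟩, fun r hr => ⟨n * k, fun s hs => ?_⟩⟩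
  · rw [← mul_smul, mul_comm]; exact h3 r hr s hs
  · rw [← mul_smul]; exact h3 s hs r hr

/-- the sum map -/
noncomputable abbrev sumMap (I J : Ideal A) (D : Type u) [AddCommGroup D] [Module A D] :
    (torI I D × torI J D) →ₗ[A] D :=
  LinearMap.coprod (torI I D).subtype (torI J D).subtype

theorem sum_bij {I J : Ideal A} {f : A} (hIJ : I * J ≤ (Ideal.span {f}).radical)
    (h1 : ∀ x : D, ∃ k : ℕ, f ^ k • x = 0) (e : ℕ)
    (hdim : ringKrullDim (A ⧸ (I ⊔ J)) < (e : WithBot ℕ∞)) :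
    Function.Bijective (Hmap (e + 1) (sumMap I J D)) := by
  refine H_bij_of_small _ e (lt_of_le_of_lt (supportDim_torI ?_) hdim)
    (lt_of_le_of_lt (supportDim_torI ?_) hdim)
  · rintro ⟨⟨x, y⟩, hxy⟩
    have hxy' : (x : D) + y = 0 := hxy
    have hx : x ∈ torI (I ⊔ J) (torI I D) := torI_sup (tor_torsion _ x)
      (torI_of_injective (torI I D).subtype (Submodule.injective_subtype _) (by
        rw [Submodule.subtype_apply, eq_neg_of_add_eq_zero_left hxy']
        exact neg_mem y.2))
    have hy : y ∈ torI (I ⊔ J) (torI J D) := torI_sup 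
      (torI_of_injective (torI J D).subtype (Submodule.injective_subtype _) (by
        rw [Submodule.subtype_apply, eq_neg_of_add_eq_zero_right hxy']
        exact neg_mem x.2)) (tor_torsion _ y)
    refine torI_of_injective (LinearMap.ker (sumMap I J D)).subtype
      (Submodule.injective_subtype _) ?_
    have h2 := add_mem (torI_map (LinearMap.inl A (torI I D) (torI J D)) hx)
      (torI_map (LinearMap.inr A (torI I D) (torI J D)) hy)
    simpa using h2
  · intro q
    obtain ⟨x, rfl⟩ := Submodule.mkQ_surjective _ q
    obtain ⟨m, hm1, hm2⟩ := exists_pow_split hIJ h1 x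
    refine torI_sup ⟨m, fun r hr => ?_⟩ ⟨m, fun r hr => ?_⟩
    · rw [← map_smul, Submodule.mkQ_apply, Submodule.Quotient.mk_eq_zero]
      exact ⟨(0, ⟨_, hm1 r hr⟩), by simp⟩
    · rw [← map_smul, Submodule.mkQ_apply, Submodule.Quotient.mk_eq_zero]
      exact ⟨(⟨_, hm2 r hr⟩, 0), by simp⟩

theorem kill_J {I J : Ideal A} {f : A} (hIJ : I * J ≤ (Ideal.span {f}).radical)
    (h1 : ∀ x : D, ∃ k : ℕ, f ^ k • x = 0) (h2 : ∀ x : D, ∃ z, f • z = x)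
    (h3 : Module.Finite A (LinearMap.ker (LinearMap.lsmul A D f))) (e : ℕ)
    (hdim : ringKrullDim (A ⧸ (I ⊔ J)) < (e : WithBot ℕ∞)) :
    ∃ N : ℕ, ∀ z : H A (e + 1) (torI J D), f • z = 0 → ∀ r ∈ J ^ N, r • z = 0 := by
  let g := LinearMap.lsmul A (torI J D) f
  have hB : Module.Finite A (LinearMap.ker g) := by
    refine Module.Finite.of_injective (N := LinearMap.ker (LinearMap.lsmul A D f))
      (((torI J D).subtype.restrict (p := LinearMap.ker g) 
        (q := LinearMap.ker (LinearMap.lsmul A D f)) fun x hx => ?_)) ?_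
    · exact congrArg Subtype.val (LinearMap.mem_ker.1 hx)
    · intro x y hxy
      exact Subtype.ext (Subtype.ext (congrArg (fun t => t.1) hxy))
  obtain ⟨N, hN⟩ := exists_pow_kill (N := LinearMap.ker g) J fun z =>
    torI_of_injective (LinearMap.ker g).subtype (Submodule.injective_subtype _) (tor_torsion _ _)
  have t1 := TEx_rangeRestrict g
  have t2 := TEx_sub (LinearMap.range g)
  have hinj := t2.inj_a e (vanish _ _ (lt_of_le_of_lt (supportDim_torI (I := I ⊔ J) (by
    intro q
    obtain ⟨y, rfl⟩ := Submodule.mkQ_surjective _ q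
    refine torI_sup ?_ (torI_map _ (tor_torsion _ y))
    obtain ⟨z, hz⟩ := h2 y
    obtain ⟨m, hm1, -⟩ := exists_pow_split hIJ h1 z
    refine ⟨m, fun r hr => ?_⟩
    rw [← map_smul, Submodule.mkQ_apply, Submodule.Quotient.mk_eq_zero]
    refine ⟨⟨_, hm1 r hr⟩, Subtype.ext ?_⟩
    change f • r • z = r • y.1
    rw [smul_comm, hz])) hdim))
  refine ⟨N, fun z hz r hr => ?_⟩
  have hz' : Hmap (e + 1) g.rangeRestrict z = 0 := by
    apply hinj
    rw [map_zero, ← hz, ← Hmap_lsmul, ← LinearMap.comp_apply, ← Hmap_comp]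
    rfl
  obtain ⟨w, rfl⟩ := (t1.Hles1 _ z).1 hz'
  rw [← map_smul, H_killed _ (hN r hr), map_zero]

theorem half {I J : Ideal A} {f : A} (hf : f ≠ 0) (hIJ : I * J ≤ (Ideal.span {f}).radical)
    (h1 : ∀ x : D, ∃ k : ℕ, f ^ k • x = 0) (h2 : ∀ x : D, ∃ z, f • z = x)
    (h3 : Module.Finite A (LinearMap.ker (LinearMap.lsmul A D f))) (e : ℕ)
    (hdim : ringKrullDim (A ⧸ (I ⊔ J)) < (e : WithBot ℕ∞))
    (hdiv : ∀ a : A, a ≠ 0 → ∀ z : H A (e + 1) D, ∃ w : H A (e + 1) D, a • w = z)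
    (hfin : Module.Finite A (H A (e + 1) D →ₗ[A] H A (e + 1) D))
    (hnt : Nontrivial (H A (e + 1) (torI J D))) : J ≤ (Ideal.span {f}).radical := by
  obtain ⟨N, hN⟩ := kill_J hIJ h1 h2 h3 e hdim
  let E := LinearEquiv.ofBijective _ (sum_bij hIJ h1 e hdim)
  let s : H A (e + 1) (torI J D) →ₗ[A] H A (e + 1) D :=
    E.toLinearMap ∘ₗ Hmap (e + 1) (LinearMap.inr A (torI I D) (torI J D))
  let p : H A (e + 1) D →ₗ[A] H A (e + 1) (torI J D) :=
    Hmap (e + 1) (LinearMap.snd A (torI I D) (torI J D)) ∘ₗ E.symm.toLinearMap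
  have hps : ∀ z, p (s z) = z := fun z => by
    simp only [p, s, LinearMap.comp_apply, LinearEquiv.coe_coe, LinearEquiv.symm_apply_apply]
    rw [← LinearMap.comp_apply, ← Hmap_comp, LinearMap.snd_comp_inr, Hmap_id]; rfl
  refine final_alg (K := H A (e + 1) (torI J D)) (fun a ha z => ?_) ?_ hf hN
  · obtain ⟨w, hw⟩ := hdiv a ha (s z)
    exact ⟨p w, by rw [← map_smul, hw, hps]⟩
  · let Φ : (H A (e + 1) (torI J D) →ₗ[A] H A (e + 1) (torI J D)) →ₗ[A]
        (H A (e + 1) D →ₗ[A] H A (e + 1) D) :=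
      { toFun := fun φ => s ∘ₗ φ ∘ₗ p
        map_add' := fun x y => by ext; simp
        map_smul' := fun c x => by ext; simp }
    refine Module.Finite.of_injective Φ fun φ ψ h => LinearMap.ext fun z => ?_
    have h5 : s (φ (p (s z))) = s (ψ (p (s z))) := LinearMap.congr_fun h (s z)
    rw [hps] at h5
    rw [← hps (φ z), h5, hps]

theorem r1_abs {I J : Ideal A} {f : A} (hf : f ≠ 0) (hIJ : I * J ≤ (Ideal.span {f}).radical)
    (h1 : ∀ x : D, ∃ k : ℕ, f ^ k • x = 0) (h2 : ∀ x : D, ∃ z, f • z = x)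
    (h3 : Module.Finite A (LinearMap.ker (LinearMap.lsmul A D f))) (e : ℕ)
    (hdim : ringKrullDim (A ⧸ (I ⊔ J)) < (e : WithBot ℕ∞))
    (hdiv : ∀ a : A, a ≠ 0 → ∀ z : H A (e + 1) D, ∃ w : H A (e + 1) D, a • w = z)
    (hfin : Module.Finite A (H A (e + 1) D →ₗ[A] H A (e + 1) D))
    (hnt : Nontrivial (H A (e + 1) D)) :
    I ≤ (Ideal.span {f}).radical ∨ J ≤ (Ideal.span {f}).radical := by
  by_cases hJ : Nontrivial (H A (e + 1) (torI J D))
  · exact Or.inr (half hf hIJ h1 h2 h3 e hdim hdiv hfin hJ)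
  by_cases hI : Nontrivial (H A (e + 1) (torI I D))
  · exact Or.inl (half hf (by rwa [mul_comm]) h1 h2 h3 e (by rwa [sup_comm]) hdiv hfin hI)
  exfalso
  rw [not_nontrivial_iff_subsingleton] at hI hJ
  obtain ⟨z, hz⟩ := exists_ne (0 : H A (e + 1) D)
  obtain ⟨y, rfl⟩ := (sum_bij hIJ h1 e hdim).2 z
  apply hz
  have : y = 0 := by
    have h : (LinearMap.inl A (torI I D) (torI J D)) ∘ₗ (LinearMap.fst A _ _) +
        (LinearMap.inr A (torI I D) (torI J D)) ∘ₗ (LinearMap.snd A _ _) = LinearMap.id := by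
      ext <;> simp
    have h' := congrArg (fun t => Hmap (e + 1) t y) h
    simp only [Hmap_add, Hmap_comp, Hmap_id, LinearMap.add_apply, LinearMap.comp_apply] at h'
    rw [Subsingleton.elim (Hmap (e + 1) (LinearMap.fst A _ _) y) 0,
      Subsingleton.elim (Hmap (e + 1) (LinearMap.snd A _ _) y) 0] at h'
    simpa using h'.symm
  rw [this, map_zero]

theorem r1 [IsDomain A] [IsAdicComplete (maximalIdeal A) A] (e : ℕ)
    (hd : ringKrullDim A = ((e + 2 : ℕ) : WithBot ℕ∞)) {I J : Ideal A} {f : A} (hf : f ≠ 0)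
    (hfm : f ∈ maximalIdeal A) (hIJ : I * J ≤ (Ideal.span {f}).radical)
    (hdim : ringKrullDim (A ⧸ (I ⊔ J)) < (e : WithBot ℕ∞)) :
    I ≤ (Ideal.span {f}).radical ∨ J ≤ (Ideal.span {f}).radical := by
  let Af := Localization.Away f
  let ι : A →ₗ[A] Af := Algebra.linearMap A Af
  have hι : Function.Injective ι := IsLocalization.injective Af
    (powers_le_nonZeroDivisors_of_noZeroDivisors hf)
  let D := Af ⧸ LinearMap.range ι
  have hunit : IsUnit (algebraMap A Af f) := IsLocalization.Away.algebraMap_isUnit f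
  have hbij : Function.Bijective (LinearMap.lsmul A Af f) := by
    have : ∀ x : Af, LinearMap.lsmul A Af f x = algebraMap A Af f * x := fun x =>
      Algebra.smul_def f x
    refine ⟨fun x y h => ?_, fun y => ?_⟩
    · rw [this, this] at h; exact hunit.mul_left_cancel h
    · obtain ⟨b, hb⟩ := hunit.exists_right_inv
      exact ⟨b * y, by rw [this, ← mul_assoc, hb, one_mul]⟩
  have hsd : Module.supportDim A A = ((e + 2 : ℕ) : WithBot ℕ∞) := by
    rw [Module.supportDim_self_eq_ringKrullDim, hd]
  have tex : TEx ι (LinearMap.range ι).mkQ :=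
    ⟨by rw [LinearMap.ker_eq_bot.2 hι]; exact bot_le, by rw [LinearMap.exact_iff]; simp,
      Submodule.mkQ_surjective _⟩
  obtain ⟨δ, hδ1, hδ2⟩ := tex.Hles2 (e + 1)
  have s1 : Subsingleton (H A (e + 1) Af) := H_of_bij _ hfm hbij
  have s2 : Subsingleton (H A (e + 1 + 1) Af) := H_of_bij _ hfm hbij
  have hδ : Function.Bijective δ := by
    refine ⟨?_, fun y => (hδ2 y).1 (Subsingleton.elim _ _)⟩
    rw [← LinearMap.ker_eq_bot, LinearMap.exact_iff.1 hδ1, eq_bot_iff]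
    rintro _ ⟨y, rfl⟩
    simp [Subsingleton.elim y 0]
  let E : H A (e + 1) D ≃ₗ[A] H A (e + 2) A := LinearEquiv.ofBijective δ hδ
  have hart := H_artinian (A := A) (e + 2) A
  refine r1_abs (D := D) hf hIJ ?_ ?_ ?_ e hdim ?_ ?_ ?_
  · intro q
    obtain ⟨x, rfl⟩ := Submodule.mkQ_surjective _ q
    obtain ⟨n, a, ha⟩ := IsLocalization.Away.surj f x
    refine ⟨n, ?_⟩
    rw [← map_smul, Submodule.mkQ_apply, Submodule.Quotient.mk_eq_zero]
    refine ⟨a, ?_⟩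
    rw [Algebra.smul_def, map_pow, mul_comm]
    exact ha.symm
  · intro q
    obtain ⟨x, rfl⟩ := Submodule.mkQ_surjective _ q
    obtain ⟨y, hy⟩ := hbij.2 x
    exact ⟨Submodule.mkQ _ y, by rw [← map_smul]; exact congrArg _ hy⟩
  · obtain ⟨b, hb⟩ := hbij.2 1
    let g : A →ₗ[A] LinearMap.ker (LinearMap.lsmul A D f) :=
      LinearMap.toSpanSingleton A _ ⟨(LinearMap.range ι).mkQ b, by
        rw [LinearMap.mem_ker, LinearMap.lsmul_apply, ← map_smul, Submodule.mkQ_apply,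
          Submodule.Quotient.mk_eq_zero]
        exact ⟨1, by rw [← LinearMap.lsmul_apply, hb]; simp [ι]⟩⟩
    refine Module.Finite.of_surjective g ?_
    rintro ⟨q, hq⟩
    obtain ⟨x, rfl⟩ := Submodule.mkQ_surjective _ q
    rw [LinearMap.mem_ker, LinearMap.lsmul_apply, ← map_smul, Submodule.mkQ_apply,
          Submodule.Quotient.mk_eq_zero] at hq
    obtain ⟨a, ha⟩ := hq
    refine ⟨a, Subtype.ext ?_⟩
    change a • (LinearMap.range ι).mkQ b = (LinearMap.range ι).mkQ x
    rw [← map_smul]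
    congr 1
    apply hbij.1
    rw [map_smul, hb, LinearMap.lsmul_apply, ← ha]
    simp [ι, Algebra.smul_def]
  · intro a ha z
    have hdiv : ∃ w : H A (e + 2) A, a • w = E z := by
      refine H_smul_surj a (e + 2) (by rw [hsd]; norm_cast; omega) ?_ _
      have hreg : IsSMulRegular A a := IsSMulRegular.of_ne_zero ha
      refine lt_succ_of_add_one (Module.supportDim_quotSMulTop_succ_le_of_notMem_minimalPrimes
        fun _ => hreg.notMem_of_mem_minimalPrimes) (by rw [hsd]; norm_cast; omega)
    obtain ⟨w, hw⟩ := hdiv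
    exact ⟨E.symm w, by rw [← map_smul, hw, E.symm_apply_apply]⟩
  · have hfin := H_hom_fg (A := A) (H A (e + 2) A) (e + 2) A (by rw [hsd]; norm_cast; omega)
    exact Module.Finite.equiv (LinearEquiv.arrowCongr E E).symm
  · have := nonvanish (A := A) (e + 2) A hsd
    exact E.toEquiv.nontrivial
end r1
end GCT



namespace GCT
open TensorProduct IsLocalRing Pointwise
set_option linter.unusedSectionVars false
universe u
section dims
variable {A : Type u} [CommRing A]

theorem dim_le_of_rad {I J : Ideal A} (h : I ≤ J.radical) :
    ringKrullDim (A ⧸ J) ≤ ringKrullDim (A ⧸ I) := by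
  rw [ringKrullDim_quotient, ringKrullDim_quotient]
  refine Order.krullDim_le_of_strictMono (fun a => ⟨a.1, fun x hx => ?_⟩) fun {_ _} lt => lt
  exact a.1.2.radical_le_iff.2 a.2 (h hx)

theorem sInf_le_prime {S : Set (Ideal A)} (hS : S.Finite) {p : Ideal A} (hp : p.IsPrime)
    (h : sInf S ≤ p) : ∃ Q ∈ S, Q ≤ p := by
  have : hS.toFinset.inf id = sInf S := by
    rw [Finset.inf_id_eq_sInf]; simp
  rw [← this, hp.inf_le'] at h
  obtain ⟨Q, hQ, hQp⟩ := h
  exact ⟨Q, hS.mem_toFinset.1 hQ, hQp⟩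

theorem sInf_mul_le (F : Ideal A) (S : Set (Ideal A)) :
    sInf S * sInf (F.minimalPrimes \ S) ≤ F.radical := by
  rw [← Ideal.sInf_minimalPrimes]
  refine le_sInf fun P hP => ?_
  by_cases h : P ∈ S
  · exact Ideal.mul_le_left.trans (sInf_le h)
  · exact Ideal.mul_le_right.trans (sInf_le ⟨hP, h⟩)

theorem add_lt_cast {x : WithBot ℕ∞} {m : ℕ} (h : x < (m : WithBot ℕ∞)) (r : ℕ) :
    x + (r : WithBot ℕ∞) < ((m + r : ℕ) : WithBot ℕ∞) := by
  cases x with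
  | bot => rw [WithBot.bot_add]; exact WithBot.bot_lt_coe ((m + r : ℕ) : ℕ∞)
  | coe x =>
    have h' : x < (m : ℕ∞) := WithBot.coe_lt_coe.1 h
    cases x with
    | top => exact absurd h' (by simp)
    | coe x =>
      have h3 : x < m := by exact_mod_cast h'
      have : x + r < m + r := by omega
      exact_mod_cast this

theorem cast_cases {x : WithBot ℕ∞} {m : ℕ} (h : x ≤ (m : WithBot ℕ∞)) :
    x < (m : WithBot ℕ∞) ∨ x = m := lt_or_eq_of_le h

theorem lt_succ_cast {x : WithBot ℕ∞} {m : ℕ} : x < ((m + 1 : ℕ) : WithBot ℕ∞) ↔ x ≤ (m : WithBot ℕ∞) := by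
  cases x with
  | bot => exact ⟨fun _ => bot_le, fun _ => WithBot.bot_lt_coe ((m + 1 : ℕ) : ℕ∞)⟩
  | coe x =>
    cases x with
    | top => 
      refine ⟨fun h => ?_, fun h => ?_⟩
      · exact absurd (WithBot.coe_lt_coe.1 (h : ((⊤ : ℕ∞) : WithBot ℕ∞) < ((m + 1 : ℕ) : ℕ∞)))
          (by simp)
      · exact absurd (WithBot.coe_le_coe.1 (h : ((⊤ : ℕ∞) : WithBot ℕ∞) ≤ ((m : ℕ) : ℕ∞)))
          (by simp)
    | coe x => 
      norm_cast
      omega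

variable [IsNoetherianRing A]

theorem supportDim_quot_sup (K : Ideal A) (x : A) :
    Module.supportDim A (QuotSMulTop x (A ⧸ K)) = ringKrullDim (A ⧸ (K ⊔ Ideal.span {x})) := by
  have h : Module.support A (QuotSMulTop x (A ⧸ K)) =
      PrimeSpectrum.zeroLocus ((K ⊔ Ideal.span {x} : Ideal A) : Set A) := by
    rw [Module.support_quotSMulTop, Module.support_eq_zeroLocus, Ideal.annihilator_quotient,
      PrimeSpectrum.zeroLocus_sup, PrimeSpectrum.zeroLocus_span]
  rw [ringKrullDim_quotient, Module.supportDim, h]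

theorem dim_prime_lt {P J : Ideal A} (hP : P.IsPrime) (hJ : ¬ J ≤ P) :
    ringKrullDim (A ⧸ (P ⊔ J)) + 1 ≤ ringKrullDim (A ⧸ P) := by
  obtain ⟨x, hx, hxP⟩ := SetLike.not_le_iff_exists.1 hJ
  have h1 := Module.supportDim_quotSMulTop_succ_le_of_notMem_minimalPrimes (R := A) (M := A ⧸ P)
    (x := x) (by
      rw [Ideal.annihilator_quotient, Ideal.minimalPrimes_eq_subsingleton_self]
      rintro p rfl; exact hxP)
  rw [supportDim_quot_sup, Module.supportDim_quotient_eq_ringKrullDim] at h1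
  refine le_trans ?_ h1
  gcongr
  refine dim_le_of_rad (le_trans ?_ Ideal.le_radical)
  exact sup_le_sup_left ((Ideal.span_singleton_le_iff_mem _).2 hx) _

variable [IsLocalRing A]

theorem dim_le_add_card (s : Finset A) (hs : ∀ x ∈ s, x ∈ maximalIdeal A) (K : Ideal A) :
    ringKrullDim (A ⧸ K) ≤ ringKrullDim (A ⧸ (K ⊔ Ideal.span (s : Set A))) + (s.card : WithBot ℕ∞) := by
  classical
  induction s using Finset.induction_on with
  | empty =>
    rw [Finset.coe_empty, Ideal.span_empty, sup_bot_eq]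
    simp
  | insert a s ha ih =>
    refine (ih fun x hx => hs x (Finset.mem_insert_of_mem hx)).trans ?_
    have h1 := Module.supportDim_le_supportDim_quotSMulTop_succ (R := A)
      (M := A ⧸ (K ⊔ Ideal.span (s : Set A))) (hs a (Finset.mem_insert_self _ _))
    rw [supportDim_quot_sup, Module.supportDim_quotient_eq_ringKrullDim] at h1
    have h2 : K ⊔ Ideal.span (s : Set A) ⊔ Ideal.span {a} = K ⊔ Ideal.span ((insert a s : Finset A) : Set A) := by
      rw [Finset.coe_insert, Ideal.span_insert, sup_assoc, sup_comm (Ideal.span {a})]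
    rw [h2] at h1
    rw [Finset.card_insert_of_notMem ha]
    push_cast
    calc _ ≤ _ := add_le_add_left h1 _
      _ = _ := by rw [add_assoc, add_comm 1]

theorem complete_quot [IsAdicComplete (maximalIdeal A) A] (P : Ideal A) [IsLocalRing (A ⧸ P)] :
    IsAdicComplete (maximalIdeal (A ⧸ P)) (A ⧸ P) := by
  have hpre : IsPrecomplete (maximalIdeal (A ⧸ P)) (A ⧸ P) := by
    rw [← map_maximalIdeal_of_surjective (Ideal.Quotient.mk P) Ideal.Quotient.mk_surjective]
    refine (IsPrecomplete.map_algebraMap_iff (R := A) (S := A ⧸ P)).2 ?_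
    rw [← AdicCompletion.of_surjective_iff]
    intro y
    obtain ⟨z, rfl⟩ := AdicCompletion.map_surjective (maximalIdeal A) (f := P.mkQ)
      (Submodule.mkQ_surjective P) y
    obtain ⟨x, rfl⟩ := AdicCompletion.of_surjective (maximalIdeal A) A z
    exact ⟨P.mkQ x, rfl⟩
  exact {}

theorem dim_min [IsDomain A] [IsAdicComplete (maximalIdeal A) A] (e : ℕ)
    (hd : ringKrullDim A = ((e + 2 : ℕ) : WithBot ℕ∞)) {f : A} (hf : f ≠ 0)
    (hfm : f ∈ maximalIdeal A) {P : Ideal A} (hP : P ∈ (Ideal.span {f}).minimalPrimes) :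
    ringKrullDim (A ⧸ P) = ((e + 1 : ℕ) : WithBot ℕ∞) := by
  have hle : ringKrullDim (A ⧸ P) ≤ ((e + 1 : ℕ) : WithBot ℕ∞) := by
    have h1 := ringKrullDim_quotient_succ_le_of_nonZeroDivisor (mem_nonZeroDivisors_of_ne_zero hf)
    have h2 := dim_le_of_rad (hP.1.2.trans Ideal.le_radical)
    rw [← lt_succ_cast]
    exact lt_succ_of_add_one ((add_le_add_left h2 1).trans h1) (by rw [hd]; norm_cast; omega)
  refine hle.lt_or_eq.resolve_left fun hlt => ?_
  have hfin := (Ideal.finite_minimalPrimes_of_isNoetherianRing A (Ideal.span {f}))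
  have hJ : ¬ sInf ((Ideal.span {f}).minimalPrimes \ {P}) ≤ P := fun h => by
    obtain ⟨Q, hQ, hQP⟩ := sInf_le_prime (hfin.sdiff) hP.1.1 h
    exact hQ.2 (le_antisymm hQP (hP.2 hQ.1.1 hQP))
  have hdim := lt_succ_of_add_one (dim_prime_lt hP.1.1 hJ) hlt
  have hmul := sInf_mul_le (Ideal.span {f}) {P}
  rw [sInf_singleton] at hmul
  rcases r1 e hd hf hfm hmul hdim with h | h
  · have h1 := dim_le_of_rad h
    have h2 := dim_le_add_card {f} (by simpa using hfm) (⊥ : Ideal A)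
    rw [bot_sup_eq, RingEquiv.ringKrullDim (RingEquiv.quotientBot A), hd] at h2
    have h3 := add_lt_cast (h1.trans_lt hlt) 1
    rw [Finset.coe_singleton, Finset.card_singleton] at h2
    exact absurd (h2.trans_lt h3) (lt_irrefl _)
  · exact hJ (h.trans (hP.1.1.radical_le_iff.2 hP.1.2))

end dims

theorem T (r : ℕ) : ∀ (A : Type u) [CommRing A] [IsDomain A] [IsNoetherianRing A] [IsLocalRing A]
    [IsAdicComplete (maximalIdeal A) A] (d : ℕ) (_ : ringKrullDim A = (d : WithBot ℕ∞))
    (s : Finset A) (_ : ∀ x ∈ s, x ∈ maximalIdeal A) (_ : s.card ≤ r) (_ : r + 1 ≤ d)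
    (I J : Ideal A) (_ : I * J ≤ (Ideal.span (s : Set A)).radical)
    (_ : ringKrullDim (A ⧸ (I ⊔ J)) < ((d - r - 1 : ℕ) : WithBot ℕ∞)),
    I ≤ (Ideal.span (s : Set A)).radical ∨ J ≤ (Ideal.span (s : Set A)).radical := by
  classical
  induction r with
  | zero =>
    intro A _ _ _ _ _ d hd s hs hcard hrd I J hIJ hdim
    have : s = ∅ := by simpa using hcard
    subst this
    have h0 : (Ideal.span ((∅ : Finset A) : Set A)).radical = ⊥ := by
      rw [Finset.coe_empty, Ideal.span_empty]
      exact Ideal.isPrime_bot.radical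
    rw [h0] at hIJ ⊢
    simpa [le_bot_iff] using hIJ
  | succ r ih =>
    intro A _ _ _ _ _ d hd s hs hcard hrd I J hIJ hdim
    by_cases hs' : ∃ f ∈ s, f ≠ 0
    swap
    · -- all generators vanish
      have h0 : (Ideal.span (s : Set A)).radical = ⊥ := by
        have : Ideal.span (s : Set A) = ⊥ := by
          rw [Ideal.span_eq_bot]
          intro x hx
          by_contra hne
          exact hs' ⟨x, hx, hne⟩
        rw [this]
        exact Ideal.isPrime_bot.radical
      rw [h0] at hIJ ⊢
      simpa [le_bot_iff] using hIJ
    obtain ⟨f, hfs, hf⟩ := hs'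
    have hfm := hs f hfs
    obtain ⟨e, rfl⟩ : ∃ e, d = e + 2 := ⟨d - 2, by omega⟩
    have hcard' : (s.erase f).card ≤ r := by
      rw [Finset.card_erase_of_mem hfs]; omega
    have hspan : Ideal.span (s : Set A) = Ideal.span {f} ⊔ Ideal.span ((s.erase f : Finset A) : Set A) := by
      rw [← Ideal.span_insert, ← Finset.coe_insert, Finset.insert_erase hfs]
    set F := Ideal.span (s : Set A) with hF
    have hfF : Ideal.span {f} ≤ F := by rw [hspan]; exact le_sup_left
    have hmin : ∀ P ∈ (Ideal.span {f}).minimalPrimes,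
        I ≤ (F ⊔ P).radical ∨ J ≤ (F ⊔ P).radical := by
      intro P hP
      have hPp : P.IsPrime := hP.1.1
      have : IsLocalRing (A ⧸ P) := IsLocalRing.of_surjective' (Ideal.Quotient.mk P)
        Ideal.Quotient.mk_surjective
      have := complete_quot P
      have hfP : f ∈ P := hP.1.2 (Ideal.mem_span_singleton_self f)
      set π := Ideal.Quotient.mk P with hπ
      have hFle : F.map π ≤ Ideal.span (((s.erase f).image π : Finset (A ⧸ P)) : Set (A ⧸ P)) := by
        rw [hspan, Ideal.map_sup, Ideal.map_span, Ideal.map_span, Finset.coe_image]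
        refine sup_le ?_ le_rfl
        rw [Set.image_singleton, Ideal.Quotient.eq_zero_iff_mem.2 hfP]
        simp
      have hFge : Ideal.span (((s.erase f).image π : Finset (A ⧸ P)) : Set (A ⧸ P)) ≤ F.map π := by
        rw [hspan, Ideal.map_sup, Finset.coe_image, ← Ideal.map_span]
        exact le_sup_right
      have heq := le_antisymm hFle hFge
      have hback : ∀ I : Ideal A, I.map π ≤ (F.map π).radical → I ≤ (F ⊔ P).radical := by
        intro I h
        have h1 := Ideal.map_le_iff_le_comap.1 h
        rwa [Ideal.comap_radical, Ideal.comap_map_of_surjective' π Ideal.Quotient.mk_surjective,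
          Ideal.mk_ker] at h1
      have key := ih (A ⧸ P) (e + 1) (dim_min e hd hf hfm hP) ((s.erase f).image π)
        (by
          intro x hx
          obtain ⟨y, hy, rfl⟩ := Finset.mem_image.1 hx
          rw [← map_maximalIdeal_of_surjective π Ideal.Quotient.mk_surjective]
          exact Ideal.mem_map_of_mem _ (hs y (Finset.mem_of_mem_erase hy)))
        (Finset.card_image_le.trans hcard') (by omega) (I.map π) (J.map π)
        (by
          rw [← heq, ← Ideal.map_mul]
          exact (Ideal.map_mono hIJ).trans (Ideal.map_radical_le π))
        (by
          have : e + 1 - r - 1 = e + 2 - (r + 1) - 1 := by omega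
          rw [this]
          refine lt_of_le_of_lt ?_ hdim
          rw [← Ideal.map_sup]
          exact ringKrullDim_le_of_surjective (Ideal.quotientMap _ π Ideal.le_comap_map)
            (Ideal.quotientMap_surjective Ideal.Quotient.mk_surjective))
      rw [← heq] at key
      exact key.imp (hback I) (hback J)
    have hfin := (Ideal.finite_minimalPrimes_of_isNoetherianRing A (Ideal.span {f}))
    have hall : ∀ I : Ideal A, (∀ P ∈ (Ideal.span {f}).minimalPrimes, I ≤ (F ⊔ P).radical) →
        I ≤ F.radical := by
      intro I h
      rw [Ideal.radical_eq_sInf]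
      refine le_sInf ?_
      rintro p ⟨hFp, hp⟩
      obtain ⟨P, hP, hPp⟩ := Ideal.exists_minimalPrimes_le (hfF.trans hFp)
      exact (h P hP).trans (hp.radical_le_iff.2 (sup_le hFp hPp))
    let S : Set (Ideal A) := {P ∈ (Ideal.span {f}).minimalPrimes | I ≤ (F ⊔ P).radical}
    have hSsub : S ⊆ (Ideal.span {f}).minimalPrimes := fun P hP => hP.1
    have hSc : ∀ P ∈ (Ideal.span {f}).minimalPrimes \ S, J ≤ (F ⊔ P).radical := fun P hP =>
      (hmin P hP.1).resolve_left fun h => hP.2 ⟨hP.1, h⟩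
    have hSfin : S.Finite := hfin.subset hSsub
    have hcov : ∀ S' ⊆ (Ideal.span {f}).minimalPrimes, sInf S' ≤ (Ideal.span {f}).radical →
        ∀ P ∈ (Ideal.span {f}).minimalPrimes, P ∈ S' := by
      intro S' hS' h P hP
      obtain ⟨Q, hQ, hQP⟩ := sInf_le_prime (hfin.subset hS') hP.1.1
        (h.trans (hP.1.1.radical_le_iff.2 hP.1.2))
      rwa [← le_antisymm hQP (hP.2 (hS' hQ).1 hQP)]
    by_cases hdab : ringKrullDim (A ⧸ (sInf S ⊔ sInf ((Ideal.span {f}).minimalPrimes \ S))) <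
        (e : WithBot ℕ∞)
    · rcases r1 e hd hf hfm (sInf_mul_le _ S) hdab with h | h
      · exact Or.inl (hall I fun P hP => (hcov S hSsub h P hP).2)
      · exact Or.inr (hall J fun P hP => hSc P (hcov _ Set.sdiff_subset h P hP))
    · exfalso
      apply hdab
      set K := sInf S ⊔ sInf ((Ideal.span {f}).minimalPrimes \ S) with hK
      have h1 := dim_le_add_card (s.erase f) (fun x hx => hs x (Finset.mem_of_mem_erase hx)) K
      have hfK : Ideal.span {f} ≤ K := le_trans (le_sInf fun P hP => hP.1.1.2) le_sup_left
      have h2 : ringKrullDim (A ⧸ (K ⊔ Ideal.span ((s.erase f : Finset A) : Set A))) ≤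
          ringKrullDim (A ⧸ (I ⊔ J)) := by
        apply dim_le_of_rad
        rw [Ideal.radical_eq_sInf]
        refine le_sInf ?_
        rintro p ⟨hKp, hp⟩
        have hKp' : K ≤ p := le_sup_left.trans hKp
        have hFp : F ≤ p := by
          rw [hspan]
          exact sup_le (hfK.trans hKp') (le_sup_right.trans hKp)
        obtain ⟨P, hP, hPp⟩ := sInf_le_prime hSfin hp (le_sup_left.trans hKp')
        obtain ⟨Q, hQ, hQp⟩ := sInf_le_prime hfin.sdiff hp (le_sup_right.trans hKp')
        exact sup_le (hP.2.trans (hp.radical_le_iff.2 (sup_le hFp hPp)))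
          ((hSc Q hQ).trans (hp.radical_le_iff.2 (sup_le hFp hQp)))
      have h3 := add_lt_cast (h2.trans_lt hdim) (s.erase f).card
      refine (h1.trans_lt h3).trans_le ?_
      norm_cast
      omega
end GCT



namespace GCT
open TensorProduct IsLocalRing Pointwise
set_option linter.unusedSectionVars false
universe u
section fin
variable {A : Type u} [CommRing A]

theorem top_dim (F : Ideal A) (I : Ideal (A ⧸ F)) :
    topologicalKrullDim (PrimeSpectrum.zeroLocus (I : Set (A ⧸ F))) =
      ringKrullDim (A ⧸ I.comap (Ideal.Quotient.mk F)) := by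
  have hemb := PrimeSpectrum.isClosedEmbedding_comap_of_surjective _ (Ideal.Quotient.mk I)
    Ideal.Quotient.mk_surjective
  have hr : Set.range (PrimeSpectrum.comap (Ideal.Quotient.mk I)) =
      PrimeSpectrum.zeroLocus (I : Set (A ⧸ F)) := by
    rw [range_comap_of_surjective _ _ Ideal.Quotient.mk_surjective, Ideal.mk_ker]
  have h1 := hemb.isEmbedding.toHomeomorph.isHomeomorph.topologicalKrullDim_eq
  rw [← hr, ← h1, PrimeSpectrum.topologicalKrullDim_eq_ringKrullDim]
  let g : A ⧸ I.comap (Ideal.Quotient.mk F) →+* (A ⧸ F) ⧸ I :=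
    Ideal.quotientMap I (Ideal.Quotient.mk F) le_rfl
  exact (RingEquiv.ringKrullDim (RingEquiv.ofBijective g
    ⟨Ideal.quotientMap_injective, Ideal.quotientMap_surjective Ideal.Quotient.mk_surjective⟩)).symm

theorem pt (F : Ideal A) {q : Ideal A} (hq : q.IsPrime) (hF : F ≤ q) :
    ∃ p : PrimeSpectrum (A ⧸ F), p.asIdeal.comap (Ideal.Quotient.mk F) = q := by
  have h := range_comap_of_surjective _ (Ideal.Quotient.mk F)
    Ideal.Quotient.mk_surjective
  have : (⟨q, hq⟩ : PrimeSpectrum A) ∈ Set.range (PrimeSpectrum.comap (Ideal.Quotient.mk F)) := by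
    rw [h, Ideal.mk_ker]; exact hF
  obtain ⟨p, hp⟩ := this
  exact ⟨p, congrArg PrimeSpectrum.asIdeal hp⟩

theorem comap_le {F : Ideal A} {I J : Ideal (A ⧸ F)} :
    I.comap (Ideal.Quotient.mk F) ≤ J.comap (Ideal.Quotient.mk F) ↔ I ≤ J :=
  Ideal.comap_le_comap_iff_of_surjective _ Ideal.Quotient.mk_surjective _ _

variable [IsDomain A] [IsNoetherianRing A] [IsLocalRing A] [IsAdicComplete (maximalIdeal A) A]

theorem dim_F (d : ℕ) (hd : ringKrullDim A = (d : WithBot ℕ∞)) (s : Finset A)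
    (hs : ∀ x ∈ s, x ∈ maximalIdeal A) (r : ℕ) (hc : s.card ≤ r) (hr : r + 1 ≤ d) :
    ¬ ringKrullDim (A ⧸ Ideal.span (s : Set A)) < ((d - r - 1 + 1 : ℕ) : WithBot ℕ∞) := by
  intro h
  have h2 := dim_le_add_card s hs (⊥ : Ideal A)
  rw [bot_sup_eq, RingEquiv.ringKrullDim (RingEquiv.quotientBot A), hd] at h2
  have h3 := h2.trans_lt (add_lt_cast h s.card)
  norm_cast at h3
  omega

theorem part1 (d : ℕ) (hd : ringKrullDim A = (d : WithBot ℕ∞)) (s : Finset A)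
    (hs : ∀ x ∈ s, x ∈ maximalIdeal A) (r : ℕ) (hc : s.card ≤ r) (hr : r + 1 ≤ d)
    {P : Ideal A} (hP : P ∈ (Ideal.span (s : Set A)).minimalPrimes) :
    ((d - r - 1 : ℕ) : WithBot ℕ∞) < ringKrullDim (A ⧸ P) := by
  by_contra hcon
  have hlt := lt_succ_cast.2 (not_lt.1 hcon)
  set F := Ideal.span (s : Set A)
  have hfin := Ideal.finite_minimalPrimes_of_isNoetherianRing A F
  have hJ : ¬ sInf (F.minimalPrimes \ {P}) ≤ P := fun h => by
    obtain ⟨Q, hQ, hQP⟩ := sInf_le_prime (hfin.sdiff) hP.1.1 h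
    exact hQ.2 (le_antisymm hQP (hP.2 hQ.1.1 hQP))
  have hdim := lt_succ_of_add_one (dim_prime_lt hP.1.1 hJ) hlt
  have hmul := sInf_mul_le F {P}
  rw [sInf_singleton] at hmul
  rcases T r A d hd s hs hc hr _ _ hmul hdim with h | h
  · exact dim_F d hd s hs r hc hr ((dim_le_of_rad h).trans_lt hlt)
  · exact hJ (h.trans (hP.1.1.radical_le_iff.2 hP.1.2))

theorem part2 (d : ℕ) (hd : ringKrullDim A = (d : WithBot ℕ∞)) (s : Finset A)
    (hs : ∀ x ∈ s, x ∈ maximalIdeal A) (r : ℕ) (hc : s.card ≤ r) (hr : r + 1 ≤ d)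
    (F : Ideal A) (hFs : F = Ideal.span (s : Set A))
    (Z : Set (PrimeSpectrum (A ⧸ F))) (hZ : IsClosed Z)
    (hdZ : topologicalKrullDim Z < ((d - r - 1 : ℕ) : WithBot ℕ∞)) : IsConnected Zᶜ := by
  have hT := T r A d hd s hs hc hr
  have hD := dim_F d hd s hs r hc hr
  rw [← hFs] at hT hD
  obtain ⟨z, rfl⟩ := (PrimeSpectrum.isClosed_iff_zeroLocus_ideal Z).1 hZ
  rw [top_dim] at hdZ
  have hker : ∀ I : Ideal (A ⧸ F), F ≤ I.comap (Ideal.Quotient.mk F) := fun I x hx => by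
    rw [Ideal.mem_comap, Ideal.Quotient.eq_zero_iff_mem.2 hx]; exact zero_mem _
  constructor
  · rw [Set.nonempty_compl]
    intro huniv
    refine hD (lt_of_le_of_lt (dim_le_of_rad ?_) (hdZ.trans_le ?_))
    · rw [Ideal.radical_eq_sInf]
      refine le_sInf ?_
      rintro q ⟨hFq, hq⟩
      obtain ⟨p, rfl⟩ := pt F hq hFq
      rw [comap_le]
      have : p ∈ PrimeSpectrum.zeroLocus (z : Set (A ⧸ F)) := huniv ▸ trivial
      exact this
    · norm_cast; omega
  · rw [isPreconnected_closed_iff]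
    intro t t' ht ht' hcov hne hne'
    obtain ⟨I, rfl⟩ := (PrimeSpectrum.isClosed_iff_zeroLocus_ideal t).1 ht
    obtain ⟨J, rfl⟩ := (PrimeSpectrum.isClosed_iff_zeroLocus_ideal t').1 ht'
    by_contra hemp
    rw [Set.not_nonempty_iff_eq_empty] at hemp
    have hIJz : ∀ p : PrimeSpectrum (A ⧸ F), I ≤ p.asIdeal → J ≤ p.asIdeal → z ≤ p.asIdeal := by
      intro p h1 h2
      by_contra h3
      have : p ∈ (∅ : Set (PrimeSpectrum (A ⧸ F))) := hemp ▸ ⟨h3, h1, h2⟩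
      exact this
    have hcov' : ∀ p : PrimeSpectrum (A ⧸ F), z ≤ p.asIdeal ∨ I ≤ p.asIdeal ∨ J ≤ p.asIdeal := by
      intro p
      by_cases h : z ≤ p.asIdeal
      · exact Or.inl h
      · exact Or.inr (hcov h)
    have hmul : (I ⊓ z).comap (Ideal.Quotient.mk F) * (J ⊓ z).comap (Ideal.Quotient.mk F) ≤
        F.radical := by
      rw [Ideal.radical_eq_sInf]
      refine le_sInf ?_
      rintro q ⟨hFq, hq⟩
      obtain ⟨p, rfl⟩ := pt F hq hFq
      rcases hcov' p with h | h | h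
      · exact Ideal.mul_le_left.trans (comap_le.2 (inf_le_right.trans h))
      · exact Ideal.mul_le_left.trans (comap_le.2 (inf_le_left.trans h))
      · exact Ideal.mul_le_right.trans (comap_le.2 (inf_le_left.trans h))
    have hdim : ringKrullDim (A ⧸ ((I ⊓ z).comap (Ideal.Quotient.mk F) ⊔
        (J ⊓ z).comap (Ideal.Quotient.mk F))) < ((d - r - 1 : ℕ) : WithBot ℕ∞) := by
      refine lt_of_le_of_lt (dim_le_of_rad ?_) hdZ
      rw [Ideal.radical_eq_sInf]
      refine le_sInf ?_
      rintro q ⟨hq1, hq⟩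
      obtain ⟨p, rfl⟩ := pt F hq ((hker _).trans (le_sup_left.trans hq1))
      rw [comap_le]
      have h1 := p.2.inf_le.1 (comap_le.1 (le_sup_left.trans hq1))
      have h2 := p.2.inf_le.1 (comap_le.1 (le_sup_right.trans hq1))
      rcases h1 with h1 | h1
      · rcases h2 with h2 | h2
        · exact hIJz p h1 h2
        · exact h2
      · exact h1
    have hend : ∀ (K : Ideal (A ⧸ F)) (p : PrimeSpectrum (A ⧸ F)), ¬ z ≤ p.asIdeal →
        (K ⊓ z).comap (Ideal.Quotient.mk F) ≤ F.radical → K ≤ p.asIdeal := by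
      intro K p hp h
      have hpp : (p.asIdeal.comap (Ideal.Quotient.mk F)).IsPrime := inferInstance
      have := h.trans (hpp.radical_le_iff.2 (hker _))
      exact (p.2.inf_le.1 (comap_le.1 this)).resolve_right hp
    rcases hT _ _ hmul hdim with h | h
    · obtain ⟨p, hp, hpJ⟩ := hne'
      exact hp (hIJz p (hend I p hp h) hpJ)
    · obtain ⟨p, hp, hpI⟩ := hne
      exact hp (hIJz p hpI (hend J p hp h))

end fin
end GCT

theorem statement1 {A : Type*} [CommRing A] [IsDomain A] [IsNoetherianRing A] [IsLocalRing A]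
    [IsAdicComplete (IsLocalRing.maximalIdeal A) A]
    (d : ℕ) (hd : ringKrullDim A = ((d : ℕ∞) : WithBot ℕ∞))
    (r : ℕ) (f : Fin r → A) (hf : ∀ i, f i ∈ IsLocalRing.maximalIdeal A)
    (hr : r + 1 ≤ d) :
    (∀ C ∈ irreducibleComponents (PrimeSpectrum (A ⧸ Ideal.span (Set.range f))),
        (((d - r - 1 : ℕ) : ℕ∞) : WithBot ℕ∞) < topologicalKrullDim C) ∧
    (∀ Z : Set (PrimeSpectrum (A ⧸ Ideal.span (Set.range f))), IsClosed Z →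
        topologicalKrullDim Z < (((d - r - 1 : ℕ) : ℕ∞) : WithBot ℕ∞) →
        IsConnected Zᶜ) := by
  classical
  obtain ⟨s, hs⟩ : ∃ s : Finset A, s = Finset.univ.image f := ⟨_, rfl⟩
  have hsr : Set.range f = (s : Set A) := by rw [hs]; simp
  have hcard : s.card ≤ r := by
    rw [hs]; exact Finset.card_image_le.trans (by simp)
  have hsm : ∀ x ∈ s, x ∈ IsLocalRing.maximalIdeal A := by
    intro x hx
    rw [hs] at hx
    obtain ⟨i, -, rfl⟩ := Finset.mem_image.1 hx
    exact hf i
  rw [hsr]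
  refine ⟨fun C hC => ?_, fun Z hZ hdZ => GCT.part2 d hd s hsm r hcard hr _ rfl Z hZ hdZ⟩
  rw [← PrimeSpectrum.zeroLocus_minimalPrimes] at hC
  obtain ⟨p, hp, rfl⟩ := hC
  refine lt_of_lt_of_eq (GCT.part1 d hd s hsm r hcard hr (P := p.comap (Ideal.Quotient.mk _)) ?_)
    (GCT.top_dim _ p).symm
  rw [Ideal.minimalPrimes_eq_comap]
  exact ⟨p, hp, rfl⟩
end

section
/- Let A be a complete Noetherian local domain of characteristic 2 with fraction field K and finite residue field 𝔽. Let Γ ⊆ GL_2(A) be a subgroup with finite-order determinants. Assume the 𝔽-representation obtained from Γ by reduction is absolutely irreducible, the reduction map Γ → GL_2(𝔽) has nontrivial kernel, and Γ is not contained (over K̄) in the normalizer of a torus. Then Γ ∩ SL_2(K) is Zariski dense in SL_2 over K. -/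
set_option synthInstance.maxHeartbeats 1000000

/-- A subset `S` of `M₂(K)` (consisting of determinant-1 matrices) is Zariski dense in the
`K`-variety `SL₂`: every polynomial in the matrix entries vanishing on `S` vanishes on all of
`SL₂(K̄)`. -/
def statement15ZariskiDenseInSL2 (K : Type*) [Field K]
    (S : Set (Matrix (Fin 2) (Fin 2) K)) : Prop :=
  ∀ f : MvPolynomial (Fin 2 × Fin 2) K,
    (∀ g ∈ S, MvPolynomial.eval (fun q => g q.1 q.2) f = 0) →
    ∀ h : Matrix (Fin 2) (Fin 2) (AlgebraicClosure K), h.det = 1 →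
      MvPolynomial.aeval (fun q => h q.1 q.2) f = 0

section Helpers15

open Matrix

structure TorusGood {L : Type*} [Field L] (V : Set (Matrix (Fin 2) (Fin 2) L)) : Prop where
  mul : ∀ x ∈ V, ∀ y ∈ V, x * y ∈ V
  adj : ∀ x ∈ V, x.adjugate ∈ V
  tor : ∀ t : L, t ≠ 0 → !![t, 0; 0, t⁻¹] ∈ V

theorem TorusGood.transpose {L : Type*} [Field L] {V : Set (Matrix (Fin 2) (Fin 2) L)}
    (h : TorusGood V) : TorusGood {x | xᵀ ∈ V} where
  mul x hx y hy := by
    simp only [Set.mem_ofPred_eq, Matrix.transpose_mul] at *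
    exact h.mul _ hy _ hx
  adj x hx := by
    simp only [Set.mem_ofPred_eq] at *
    rw [Matrix.adjugate_transpose]
    exact h.adj _ hx
  tor t ht := by
    have := h.tor t ht
    have e : (!![t, 0; 0, t⁻¹])ᵀ = !![t, 0; 0, t⁻¹] := by
      ext i j; fin_cases i <;> fin_cases j <;> simp
    simp only [Set.mem_ofPred_eq]
    rwa [e]

theorem exists_sq_avoid {L : Type*} [Field L] [IsAlgClosed L] (F : Finset L) :
    ∃ t : L, t ≠ 0 ∧ t ^ 2 ∉ F := by
  classical
  have : Infinite L := IsAlgClosed.instInfinite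
  obtain ⟨s, hs⟩ := Infinite.exists_notMem_finset (insert 0 F)
  obtain ⟨t, ht⟩ := IsAlgClosed.exists_pow_nat_eq s (n := 2) (by norm_num)
  simp only [Finset.mem_insert, not_or] at hs
  refine ⟨t, ?_, by rw [ht]; exact hs.2⟩
  rintro rfl
  exact hs.1 (by rw [← ht]; simp)

theorem TorusGood.upper {L : Type*} [Field L] [IsAlgClosed L]
    {V : Set (Matrix (Fin 2) (Fin 2) L)}
    (h : TorusGood V) {a b d : L} (had : a * d = 1) (hb : b ≠ 0) (hV : !![a, b; 0, d] ∈ V)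
    (y : L) : !![1, y; 0, 1] ∈ V := by
  have ha : a ≠ 0 := left_ne_zero_of_mul_eq_one had
  obtain ⟨t, ht, ht2⟩ := exists_sq_avoid ({y / (a * b)} : Finset L)
  simp only [Finset.mem_singleton] at ht2
  obtain ⟨r, hr⟩ := IsAlgClosed.exists_pow_nat_eq (t ^ 2 - y / (a * b)) (n := 2) (by norm_num)
  have hr0 : r ≠ 0 := by
    rintro rfl
    apply ht2
    rw [← sub_eq_zero, ← hr]; simp
  have key : ∀ s : L, s ≠ 0 → !![a, s ^ 2 * b; 0, d] ∈ V := by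
    intro s hs
    have := h.mul _ (h.mul _ (h.tor s hs) _ hV) _ (h.tor s⁻¹ (inv_ne_zero hs))
    convert this using 1
    ext i j; fin_cases i <;> fin_cases j <;> simp [Matrix.mul_fin_two] <;> field_simp
  have := h.mul _ (key t ht) _ (h.adj _ (key r hr0))
  convert this using 1
  rw [Matrix.adjugate_fin_two_of, Matrix.mul_fin_two, hr]
  ext i j; fin_cases i <;> fin_cases j <;> simp
  · exact had.symm
  · field_simp; ring
  · rw [mul_comm]; exact had.symm

theorem TorusGood.all {L : Type*} [Field L] [IsAlgClosed L]
    {V : Set (Matrix (Fin 2) (Fin 2) L)}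
    (h : TorusGood V) (hU : ∀ y : L, !![1, y; 0, 1] ∈ V) {x : Matrix (Fin 2) (Fin 2) L}
    (hx : x ∈ V) (hdet : x.det = 1) (hx10 : x 1 0 ≠ 0) (m : Matrix (Fin 2) (Fin 2) L)
    (hm : m.det = 1) : m ∈ V := by
  have key : ∀ p q r s : L, p * s - q * r = 1 → r ≠ 0 → !![p, q; r, s] ∈ V := by
    intro p q r s hd hr
    rw [Matrix.eta_fin_two x] at hx
    rw [Matrix.det_fin_two] at hdet
    generalize x 0 0 = a at *
    generalize x 0 1 = b at *
    generalize x 1 0 = c at *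
    generalize x 1 1 = d at *
    have ht : c / r ≠ 0 := div_ne_zero hx10 hr
    have h1 := h.mul _ (h.tor _ ht) _ hx
    have h2 := h.mul _ (h.mul _ (hU ((p - a * c / r) / r)) _ h1) _ (hU ((s - d * r / c) / r))
    convert h2 using 1
    have hb : b = (a * d - 1) / c := by field_simp; linear_combination -hdet
    have hq : q = (p * s - 1) / r := by field_simp; linear_combination -hd
    rw [hb, hq]
    ext i j; fin_cases i <;> fin_cases j <;> simp [Matrix.mul_fin_two] <;> field_simp <;> ring
  rw [Matrix.eta_fin_two m]
  rw [Matrix.det_fin_two] at hm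
  by_cases hr : m 1 0 = 0
  · have h1 := key (m 0 0 + m 0 1) (m 0 1) (m 1 1) (m 1 1)
      (by rw [hr] at hm; linear_combination hm) (by intro h0; rw [hr, h0] at hm; simp at hm)
    have h2 := key 1 0 (-1) 1 (by ring) (by simp)
    have := h.mul _ h1 _ h2
    convert this using 1
    rw [Matrix.mul_fin_two, hr]
    simp
  · exact key _ _ _ _ hm hr

theorem TorusGood.generic {L : Type*} [Field L] [IsAlgClosed L]
    {V : Set (Matrix (Fin 2) (Fin 2) L)}
    (h : TorusGood V) {a b c d : L} (hV : !![a, b; c, d] ∈ V) (hd : a * d - b * c = 1)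
    (ha0 : a ≠ 0) (hb0 : b ≠ 0) (hc0 : c ≠ 0) (hd0 : d ≠ 0) (y : L) :
    !![1, y; 0, 1] ∈ V := by
  classical
  let Q : Polynomial L := Polynomial.C (a ^ 2) * Polynomial.X ^ 2
    + Polynomial.C (2 * a * d - 1) * Polynomial.X + Polynomial.C (d ^ 2)
  have hQ : Q ≠ 0 := by
    intro h0
    have := Polynomial.leadingCoeff_quadratic (b := 2 * a * d - 1) (c := d ^ 2) (pow_ne_zero 2 ha0)
    change Q.leadingCoeff = _ at this
    rw [h0] at this
    exact pow_ne_zero 2 ha0 this.symm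
  obtain ⟨s, hs, hs2⟩ := exists_sq_avoid ({-d / a, -(b * c) / a ^ 2} ∪ Q.roots.toFinset)
  simp only [Finset.mem_union, Finset.mem_insert, Finset.mem_singleton, Multiset.mem_toFinset,
    Polynomial.mem_roots hQ, not_or] at hs2
  obtain ⟨⟨h1, h2⟩, h3⟩ := hs2
  have h1' : a * s + d * s⁻¹ ≠ 0 := by
    intro h0; apply h1; field_simp at h0 ⊢; linear_combination h0
  have h2' : a ^ 2 * s + b * c * s⁻¹ ≠ 0 := by
    intro h0; apply h2; field_simp at h0 ⊢; linear_combination h0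
  have h3' : (a * s + d * s⁻¹) ^ 2 - 1 ≠ 0 := by
    intro h0; apply h3
    simp only [Q, Polynomial.IsRoot, Polynomial.eval_add, Polynomial.eval_mul, Polynomial.eval_C,
      Polynomial.eval_pow, Polynomial.eval_X]
    field_simp at h0
    linear_combination h0
  have hh := h.mul _ (h.mul _ hV _ (h.tor s hs)) _ hV
  set k := a * s + d * s⁻¹ with hk
  have e1 : !![a, b; c, d] * !![s, 0; 0, s⁻¹] * !![a, b; c, d]
      = !![a ^ 2 * s + b * c * s⁻¹, b * k; c * k, b * c * s + d ^ 2 * s⁻¹] := by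
    rw [Matrix.mul_fin_two, Matrix.mul_fin_two, hk]
    ext i j; fin_cases i <;> fin_cases j <;> simp <;> ring
  rw [e1] at hh
  have hdet' : (a ^ 2 * s + b * c * s⁻¹) * (b * c * s + d ^ 2 * s⁻¹) - (b * k) * (c * k) = 1 := by
    rw [hk]; field_simp; linear_combination s ^ 2 * (a * d - b * c + 1) * hd
  set a' := a ^ 2 * s + b * c * s⁻¹ with ha'
  set d' := b * c * s + d ^ 2 * s⁻¹
  clear_value a' d' k
  obtain ⟨t, ht⟩ := IsAlgClosed.exists_pow_nat_eq (-(d * k) / a') (n := 2) (by norm_num)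
  have ht0 : t ≠ 0 := by
    rintro rfl
    have : -(d * k) / a' ≠ 0 := by
      apply div_ne_zero _ h2'
      simpa using ⟨hd0, h1'⟩
    apply this; rw [← ht]; simp
  have ht' : t ^ 2 * a' = -(d * k) := by rw [ht]; field_simp
  have hfin := h.mul _ (h.mul _ hV _ (h.tor t ht0)) _ hh
  have e2 : !![a, b; c, d] * !![t, 0; 0, t⁻¹] * !![a', b * k; c * k, d']
      = !![a * t * a' + b * t⁻¹ * (c * k), a * t * (b * k) + b * t⁻¹ * d'; 0,
          c * t * (b * k) + d * t⁻¹ * d'] := by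
    rw [Matrix.mul_fin_two, Matrix.mul_fin_two]
    ext i j; fin_cases i <;> fin_cases j <;> simp
    field_simp; linear_combination c * ht'
  rw [e2] at hfin
  refine h.upper ?_ ?_ hfin y
  · have hz : c * t * a' + d * t⁻¹ * (c * k) = 0 := by field_simp; linear_combination c * ht'
    have : (a * t * a' + b * t⁻¹ * (c * k)) * (c * t * (b * k) + d * t⁻¹ * d')
       - (a * t * (b * k) + b * t⁻¹ * d') * (c * t * a' + d * t⁻¹ * (c * k)) = 1 := by
      have : t * t⁻¹ = 1 := mul_inv_cancel₀ ht0
      linear_combination (t * t⁻¹) * (a * d - b * c) * hdet' + (t * t⁻¹) * hd + this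
    rw [hz] at this
    linear_combination this
  · intro h0
    have h4 : t ^ 2 * a * k + d' = 0 := by
      have : b * (t ^ 2 * a * k + d') = 0 := by field_simp at h0; linear_combination h0
      exact (mul_eq_zero.mp this).resolve_left hb0
    apply h3'
    linear_combination -(a' * h4 - a * k * ht' + k^2 * hd - hdet')

theorem TorusGood.core {L : Type*} [Field L] [IsAlgClosed L]
    {V : Set (Matrix (Fin 2) (Fin 2) L)} (h : TorusGood V)
    (G : Set (Matrix (Fin 2) (Fin 2) L)) (hG : ∀ γ ∈ G, γ.det ≠ 0)
    (hconj : ∀ γ ∈ G, ∀ x ∈ V, γ.det⁻¹ • (γ * x * γ.adjugate) ∈ V)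
    (hb : ∃ γ ∈ G, γ 0 1 ≠ 0) (hc : ∃ γ ∈ G, γ 1 0 ≠ 0)
    (hn : ∃ γ ∈ G, ¬ (γ 0 1 = 0 ∧ γ 1 0 = 0) ∧ ¬ (γ 0 0 = 0 ∧ γ 1 1 = 0))
    (m : Matrix (Fin 2) (Fin 2) L) (hm : m.det = 1) : m ∈ V := by
  classical
  have fU : (∀ y : L, !![1, y; 0, 1] ∈ V) → m ∈ V := by
    intro hU
    obtain ⟨γ, hγ, hc⟩ := hc
    have hx := hconj γ hγ _ (hU 1)
    refine h.all hU hx ?_ ?_ m hm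
    · have := hG γ hγ
      rw [Matrix.det_smul, Matrix.det_mul, Matrix.det_mul, Matrix.det_adjugate]
      simp; field_simp
    · have := hG γ hγ
      rw [Matrix.eta_fin_two γ, Matrix.adjugate_fin_two_of, Matrix.mul_fin_two, Matrix.mul_fin_two]
      rw [Matrix.eta_fin_two γ] at this
      simp only [Matrix.smul_apply, smul_eq_mul]
      apply mul_ne_zero (inv_ne_zero this)
      simp
      intro h0
      apply hc
      have : γ 1 0 ^ 2 = 0 := by linear_combination -h0
      simpa using this
  have fL : (∀ y : L, !![1, 0; y, 1] ∈ V) → m ∈ V := by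
    intro hU
    obtain ⟨γ, hγ, hb⟩ := hb
    have hx := hconj γ hγ _ (hU 1)
    have := h.transpose.all (x := (γ.det⁻¹ • (γ * !![1, 0; 1, 1] * γ.adjugate))ᵀ) ?_ ?_ ?_ ?_ mᵀ ?_
    · simpa using this
    · intro y
      have := hU y
      rw [Set.mem_ofPred_eq]
      convert this using 1
      ext i j; fin_cases i <;> fin_cases j <;> simp
    · simpa using hx
    · have := hG γ hγ
      rw [Matrix.det_transpose, Matrix.det_smul, Matrix.det_mul, Matrix.det_mul,
        Matrix.det_adjugate]
      simp; field_simp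
    · have := hG γ hγ
      rw [Matrix.transpose_apply, Matrix.eta_fin_two γ, Matrix.adjugate_fin_two_of,
        Matrix.mul_fin_two, Matrix.mul_fin_two]
      rw [Matrix.eta_fin_two γ] at this
      simp only [Matrix.smul_apply, smul_eq_mul]
      apply mul_ne_zero (inv_ne_zero this)
      simp
      intro h0
      apply hb
      have : γ 0 1 ^ 2 = 0 := by linear_combination -h0
      simpa using this
    · simpa using hm
  obtain ⟨γ, hγ, h1, h2⟩ := hn
  have hdet := hG γ hγ
  have hconj' := fun t ht => hconj γ hγ _ (h.tor t ht)
  rw [Matrix.det_fin_two] at hdet hconj'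
  rw [Matrix.eta_fin_two γ, Matrix.adjugate_fin_two_of] at hconj'
  generalize γ 0 0 = a at *
  generalize γ 0 1 = b at *
  generalize γ 1 0 = c at *
  generalize γ 1 1 = d at *
  have hconj2 : ∀ t : L, t ≠ 0 → !![(a * d - b * c)⁻¹ * (a * d * t - b * c * t⁻¹),
      (a * d - b * c)⁻¹ * (a * b * (t⁻¹ - t)); (a * d - b * c)⁻¹ * (c * d * (t - t⁻¹)),
      (a * d - b * c)⁻¹ * (a * d * t⁻¹ - b * c * t)] ∈ V := by
    intro t ht
    convert hconj' t ht using 1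
    rw [Matrix.mul_fin_two, Matrix.mul_fin_two]
    ext i j; fin_cases i <;> fin_cases j <;> simp <;> left <;> ring
  have hde : ∀ t : L, t ≠ 0 → ((a * d - b * c)⁻¹ * (a * d * t - b * c * t⁻¹)) *
      ((a * d - b * c)⁻¹ * (a * d * t⁻¹ - b * c * t)) -
      ((a * d - b * c)⁻¹ * (a * b * (t⁻¹ - t))) * ((a * d - b * c)⁻¹ * (c * d * (t - t⁻¹))) = 1 := by
    intro t ht; field_simp; ring
  have hi := inv_ne_zero hdet
  obtain ⟨t, ht, ht2⟩ := exists_sq_avoid ({1, b * c / (a * d), a * d / (b * c)} : Finset L)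
  simp only [Finset.mem_insert, Finset.mem_singleton, not_or] at ht2
  obtain ⟨t1, t2, t3⟩ := ht2
  have t4 : t - t⁻¹ ≠ 0 := by
    intro h0; apply t1; field_simp at h0; linear_combination h0
  have t5 : t⁻¹ - t ≠ 0 := by
    intro h0; apply t4; linear_combination -h0
  by_cases hab : a * b = 0
  · have hcd : c * d ≠ 0 := by
      rcases mul_eq_zero.mp hab with h0 | h0
      · subst h0
        have hc : c ≠ 0 := by rintro rfl; simp at hdet
        have hd : d ≠ 0 := by rintro rfl; simp at h2
        exact mul_ne_zero hc hd
      · subst h0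
        have hd : d ≠ 0 := by rintro rfl; simp at hdet
        have hc : c ≠ 0 := by rintro rfl; simp at h1
        exact mul_ne_zero hc hd
    apply fL
    intro y
    have := h.transpose.upper (a := (a * d - b * c)⁻¹ * (a * d * t - b * c * t⁻¹))
      (b := (a * d - b * c)⁻¹ * (c * d * (t - t⁻¹)))
      (d := (a * d - b * c)⁻¹ * (a * d * t⁻¹ - b * c * t)) ?_ ?_ ?_ y
    · simp only [Set.mem_ofPred_eq] at this
      convert this using 1
      ext i j; fin_cases i <;> fin_cases j <;> simp
    · have := hde t ht
      rw [hab] at this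
      linear_combination this
    · exact mul_ne_zero hi (mul_ne_zero hcd t4)
    · simp only [Set.mem_ofPred_eq]
      convert hconj2 t ht using 1
      rw [hab]
      ext i j; fin_cases i <;> fin_cases j <;> simp
  · apply fU
    intro y
    have := hconj2 t ht
    have hd' := hde t ht
    by_cases hcd : c * d = 0
    · rw [hcd] at this hd'
      simp only [zero_mul, mul_zero, sub_zero] at this hd'
      exact h.upper hd' (mul_ne_zero hi (mul_ne_zero hab t5)) this y
    · have ha := left_ne_zero_of_mul hab
      have hb := right_ne_zero_of_mul hab
      have hc := left_ne_zero_of_mul hcd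
      have hd := right_ne_zero_of_mul hcd
      refine h.generic this hd' ?_ (mul_ne_zero hi (mul_ne_zero hab t5))
        (mul_ne_zero hi (mul_ne_zero hcd t4)) ?_ y
      · refine mul_ne_zero hi fun h0 => t2 ?_
        field_simp at h0 ⊢; linear_combination h0
      · refine mul_ne_zero hi fun h0 => t3 ?_
        field_simp at h0 ⊢; linear_combination -h0


/-- Zariski closure of a set of matrices. -/
def zcl15 {L : Type*} [Field L] (S : Set (Matrix (Fin 2) (Fin 2) L)) :
    Set (Matrix (Fin 2) (Fin 2) L) :=
  {x | ∀ f : MvPolynomial (Fin 2 × Fin 2) L,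
    (∀ g ∈ S, MvPolynomial.eval (fun q => g q.1 q.2) f = 0) →
      MvPolynomial.eval (fun q => x q.1 q.2) f = 0}

theorem subset_zcl15 {L : Type*} [Field L] (S : Set (Matrix (Fin 2) (Fin 2) L))
    {x : Matrix (Fin 2) (Fin 2) L} (hx : x ∈ S) : x ∈ zcl15 S := fun _ hf => hf x hx

theorem zcl15_map {L : Type*} [Field L] (S : Set (Matrix (Fin 2) (Fin 2) L))
    (φ : Matrix (Fin 2) (Fin 2) L → Matrix (Fin 2) (Fin 2) L)
    (p : Fin 2 × Fin 2 → MvPolynomial (Fin 2 × Fin 2) L)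
    (hp : ∀ x q, MvPolynomial.eval (fun q => x q.1 q.2) (p q) = φ x q.1 q.2)
    (hS : ∀ g ∈ S, φ g ∈ zcl15 S) : ∀ x ∈ zcl15 S, φ x ∈ zcl15 S := by
  intro x hx f hf
  have key : ∀ y : Matrix (Fin 2) (Fin 2) L,
      MvPolynomial.eval (fun q => y q.1 q.2) (MvPolynomial.bind₁ p f)
        = MvPolynomial.eval (fun q => φ y q.1 q.2) f := by
    intro y
    rw [← MvPolynomial.coe_aeval_eq_eval, RingHom.coe_coe, MvPolynomial.aeval_bind₁,
      ← MvPolynomial.coe_aeval_eq_eval, RingHom.coe_coe]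
    congr 2
    funext q
    rw [← hp y q, ← MvPolynomial.coe_aeval_eq_eval, RingHom.coe_coe]
  rw [← key]
  apply hx
  intro g hg
  rw [key]
  exact hS g hg f hf

theorem zcl15_lin {L : Type*} [Field L] (S : Set (Matrix (Fin 2) (Fin 2) L))
    (B C : Matrix (Fin 2) (Fin 2) L)
    (hS : ∀ g ∈ S, B * g * C ∈ zcl15 S) : ∀ x ∈ zcl15 S, B * x * C ∈ zcl15 S := by
  refine zcl15_map S (fun x => B * x * C) (fun q => ∑ j, (∑ i,
    MvPolynomial.C (B q.1 i) * MvPolynomial.X (i, j)) * MvPolynomial.C (C j q.2)) ?_ hS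
  intro x q
  simp [Matrix.mul_apply]

theorem zcl15_adj {L : Type*} [Field L] (S : Set (Matrix (Fin 2) (Fin 2) L))
    (hS : ∀ g ∈ S, g.adjugate ∈ zcl15 S) : ∀ x ∈ zcl15 S, x.adjugate ∈ zcl15 S := by
  refine zcl15_map S (fun x => x.adjugate) (fun q => !![MvPolynomial.X (1, 1),
    -MvPolynomial.X (0, 1); -MvPolynomial.X (1, 0), MvPolynomial.X (0, 0)] q.1 q.2) ?_ hS
  rintro x ⟨i, j⟩
  rw [Matrix.adjugate_fin_two]
  fin_cases i <;> fin_cases j <;> simp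

theorem zcl15_mul {L : Type*} [Field L] (S : Set (Matrix (Fin 2) (Fin 2) L))
    (hS : ∀ g ∈ S, ∀ g' ∈ S, g * g' ∈ S) :
    ∀ x ∈ zcl15 S, ∀ y ∈ zcl15 S, x * y ∈ zcl15 S := by
  have h1 : ∀ g ∈ S, ∀ y ∈ zcl15 S, g * y ∈ zcl15 S := by
    intro g hg y hy
    have := zcl15_lin S g 1 (fun g' hg' => by
      rw [mul_one]; exact subset_zcl15 S (hS g hg g' hg')) y hy
    rwa [mul_one] at this
  intro x hx y hy
  have := zcl15_lin S 1 y (fun g hg => by rw [one_mul]; exact h1 g hg y hy) x hx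
  rwa [one_mul] at this

theorem zcl15_curve {L : Type*} [Field L] (S : Set (Matrix (Fin 2) (Fin 2) L))
    (B C : Matrix (Fin 2) (Fin 2) L) (l : L) (hl : l ≠ 0) (hinf : ∀ k : ℕ, 0 < k → l ^ k ≠ 1)
    (hS : ∀ n : ℕ, B * !![l ^ n, 0; 0, (l ^ n)⁻¹] * C ∈ S) (t : L) (ht : t ≠ 0) :
    B * !![t, 0; 0, t⁻¹] * C ∈ zcl15 S := by
  intro f hf
  have key : ∀ f : MvPolynomial (Fin 2 × Fin 2) L, ∃ (N : ℕ) (q : Polynomial L), ∀ t : L, t ≠ 0 →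
      q.eval t = t ^ N * MvPolynomial.eval
        (fun q => (B * !![t, 0; 0, t⁻¹] * C) q.1 q.2) f := by
    intro f
    induction f using MvPolynomial.induction_on with
    | C a => exact ⟨0, Polynomial.C a, fun t _ => by simp⟩
    | add f g hf hg =>
      obtain ⟨N, q, hq⟩ := hf
      obtain ⟨N', q', hq'⟩ := hg
      refine ⟨N + N', Polynomial.X ^ N' * q + Polynomial.X ^ N * q', fun t ht => ?_⟩
      simp only [Polynomial.eval_add, Polynomial.eval_mul, Polynomial.eval_pow, Polynomial.eval_X,
        hq t ht, hq' t ht, map_add]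
      ring
    | mul_X f i hf =>
      obtain ⟨N, q, hq⟩ := hf
      refine ⟨N + 1, q * (Polynomial.C (B i.1 0 * C 0 i.2) * Polynomial.X ^ 2
        + Polynomial.C (B i.1 1 * C 1 i.2)), fun t ht => ?_⟩
      simp only [Polynomial.eval_add, Polynomial.eval_mul, Polynomial.eval_pow, Polynomial.eval_X,
        hq t ht, Polynomial.eval_C, map_mul, MvPolynomial.eval_X]
      have : (B * !![t, 0; 0, t⁻¹] * C) i.1 i.2
          = B i.1 0 * C 0 i.2 * t + B i.1 1 * C 1 i.2 * t⁻¹ := by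
        simp [Matrix.mul_apply, Fin.sum_univ_two]; ring
      rw [this, pow_succ]
      generalize MvPolynomial.eval _ f = e
      field_simp
      ring
  obtain ⟨N, q, hq⟩ := key f
  have hinj : Function.Injective (fun n : ℕ => l ^ n) := by
    intro m n hmn
    by_contra hne
    simp only at hmn
    rcases lt_or_gt_of_ne hne with h | h
    · apply hinf (n - m) (by omega)
      have : l ^ m * l ^ (n - m) = l ^ m * 1 := by rw [← pow_add, mul_one, hmn]; congr 1; omega
      exact mul_left_cancel₀ (pow_ne_zero _ hl) this
    · apply hinf (m - n) (by omega)
      have : l ^ n * l ^ (m - n) = l ^ n * 1 := by rw [← pow_add, mul_one, ← hmn]; congr 1; omega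
      exact mul_left_cancel₀ (pow_ne_zero _ hl) this
  have hq0 : q = 0 := by
    apply Polynomial.eq_zero_of_infinite_isRoot
    refine (Set.infinite_range_of_injective hinj).mono ?_
    rintro _ ⟨n, rfl⟩
    change q.eval (l ^ n) = 0
    rw [hq _ (pow_ne_zero _ hl), hf _ (hS n), mul_zero]
  have := hq t ht
  rw [hq0, Polynomial.eval_zero] at this
  exact (mul_eq_zero.mp this.symm).resolve_left (pow_ne_zero _ ht)

theorem exists_eig15 {L : Type*} [Field L] [IsAlgClosed L] (b : Matrix (Fin 2) (Fin 2) L) :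
    ∃ μ : L, (b - μ • (1 : Matrix (Fin 2) (Fin 2) L)).det = 0 := by
  obtain ⟨μ, hμ⟩ := IsAlgClosed.exists_root b.charpoly (by
    rw [Matrix.charpoly_degree_eq_dim]; simp)
  refine ⟨μ, ?_⟩
  rw [Polynomial.IsRoot, Matrix.eval_charpoly, ← neg_sub, Matrix.det_neg] at hμ
  rw [Matrix.scalar_apply] at hμ
  simpa [Matrix.smul_one_eq_diagonal] using hμ

theorem prop15 {L : Type*} [Field L] {u w : Fin 2 → L} (hu : u ≠ 0)
    (h : w 0 * u 1 = w 1 * u 0) : ∃ c : L, w = c • u := by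
  by_cases h0 : u 0 = 0
  · have h1 : u 1 ≠ 0 := by
      intro h1; apply hu; ext i; fin_cases i <;> simp [h0, h1]
    refine ⟨w 1 / u 1, ?_⟩
    rw [h0, mul_zero] at h
    have := (mul_eq_zero.mp h).resolve_right h1
    ext i; fin_cases i <;> simp [h0, this, h1]
  · refine ⟨w 0 / u 0, ?_⟩
    ext i; fin_cases i <;> simp
    · field_simp
    · field_simp; exact h.symm

theorem burn15_rank1 {L : Type*} [Field L] (S : Set (Matrix (Fin 2) (Fin 2) L))
    (h1 : 1 ∈ S) (Y : Matrix (Fin 2) (Fin 2) L) (hY : Y ≠ 0) (hdet : Y.det = 0)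
    (htr : ∀ b ∈ S, (Y * b).trace = 0) :
    ∃ v : Fin 2 → L, v ≠ 0 ∧ ∀ b ∈ S, ∃ c : L, b.mulVec v = c • v := by
  have : ∃ i j, Y i j ≠ 0 := by
    by_contra! h; apply hY; ext i j; simp [h]
  obtain ⟨i, j, hij⟩ := this
  refine ⟨fun k => Y k j, fun h => hij (congrFun h i), ?_⟩
  have key : ∀ b ∈ S, Y i 0 * (b.mulVec (fun k => Y k j)) 0
      + Y i 1 * (b.mulVec (fun k => Y k j)) 1 = 0 := by
    intro b hb
    have h2 := htr b hb
    rw [Matrix.det_fin_two] at hdet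
    simp only [Matrix.trace_fin_two, Matrix.mul_apply, Fin.sum_univ_two] at h2
    simp only [Matrix.mulVec, dotProduct, Fin.sum_univ_two]
    fin_cases i <;> fin_cases j <;> simp
    · linear_combination Y 0 0 * h2 - b 1 1 * hdet
    · linear_combination Y 0 1 * h2 + b 0 1 * hdet
    · linear_combination Y 1 0 * h2 + b 1 0 * hdet
    · linear_combination Y 1 1 * h2 - b 0 0 * hdet
  intro b hb
  have k1 := key 1 h1
  have k2 := key b hb
  simp only [Matrix.one_mulVec] at k1
  apply prop15 (fun h => hij (congrFun h i))
  generalize b.mulVec (fun k => Y k j) = w at *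
  by_cases hz : Y i 0 = 0
  · have hz1 : Y i 1 ≠ 0 := by
      intro h0; apply hij; fin_cases j
      · exact hz
      · exact h0
    apply mul_left_cancel₀ hz1
    linear_combination w 0 * k1 - Y 0 j * k2
  · apply mul_left_cancel₀ hz
    linear_combination Y 1 j * k2 - w 1 * k1

theorem burn15 {L : Type*} [Field L] [IsAlgClosed L] (S : Set (Matrix (Fin 2) (Fin 2) L))
    (h1 : 1 ∈ S) (hmul : ∀ a ∈ S, ∀ b ∈ S, a * b ∈ S)
    (Y : Matrix (Fin 2) (Fin 2) L) (hY : Y ≠ 0)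
    (htr : ∀ b ∈ S, (Y * b).trace = 0) :
    ∃ v : Fin 2 → L, v ≠ 0 ∧ ∀ b ∈ S, ∃ c : L, b.mulVec v = c • v := by
  by_cases hdet : Y.det = 0
  · exact burn15_rank1 S h1 Y hY hdet htr
  by_cases hs : ∀ b ∈ S, ∃ μ : L, b = μ • (1 : Matrix (Fin 2) (Fin 2) L)
  · refine ⟨fun _ => 1, fun h => one_ne_zero (congrFun h 0), fun b hb => ?_⟩
    obtain ⟨μ, rfl⟩ := hs b hb
    exact ⟨μ, by rw [Matrix.smul_mulVec, Matrix.one_mulVec]⟩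
  push Not at hs
  obtain ⟨b, hb, hns⟩ := hs
  obtain ⟨μ, hμ⟩ := exists_eig15 b
  refine burn15_rank1 S h1 (Y * (b - μ • (1 : Matrix (Fin 2) (Fin 2) L))) ?_ ?_ ?_
  · intro h0
    apply hns μ
    have hu : IsUnit Y.det := isUnit_iff_ne_zero.mpr hdet
    have : Y⁻¹ * (Y * (b - μ • (1 : Matrix (Fin 2) (Fin 2) L))) = 0 := by rw [h0, mul_zero]
    rw [Matrix.nonsing_inv_mul_cancel_left _ _ hu] at this
    exact sub_eq_zero.mp this
  · rw [Matrix.det_mul, hμ, mul_zero]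
  · intro c hc
    have e : Y * (b - μ • (1 : Matrix (Fin 2) (Fin 2) L)) * c = Y * (b * c) - μ • (Y * c) := by
      rw [mul_sub, sub_mul, mul_assoc]; simp
    rw [e, Matrix.trace_sub, Matrix.trace_smul, htr _ (hmul b hb c hc), htr c hc]; simp

theorem pigeon15 {R : Type*} [Monoid R] (u : R) (k : ℕ) (hk : 0 < k) (hu : u ^ k = 1) :
    ∃ i j : ℕ, i < j ∧ u ^ (2 ^ i) = u ^ (2 ^ j) := by
  have : NeZero k := ⟨hk.ne'⟩
  obtain ⟨i, j, hij, h⟩ := Finite.exists_ne_map_eq_of_infinite (fun i : ℕ => ((2 ^ i : ℕ) : ZMod k))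
  have h' := (ZMod.natCast_eq_natCast_iff _ _ _).mp h
  have h2 : u ^ (2 ^ i) = u ^ (2 ^ j) := by
    rw [← Nat.div_add_mod (2 ^ i) k, ← Nat.div_add_mod (2 ^ j) k, pow_add, pow_add, pow_mul,
      pow_mul, hu, one_pow, one_pow, h']
  rcases lt_or_gt_of_ne hij with hlt | hlt
  · exact ⟨i, j, hlt, h2⟩
  · exact ⟨j, i, hlt, h2.symm⟩

theorem mloc15 {A : Type*} [CommRing A] [IsDomain A] [IsLocalRing A] {x : A}
    (hx : x ∈ IsLocalRing.maximalIdeal A) {i j : ℕ} (hij : i < j)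
    (h : x ^ (2 ^ i) = x ^ (2 ^ j)) : x = 0 := by
  by_contra hx0
  have hlt : 2 ^ i < 2 ^ j := Nat.pow_lt_pow_right (by norm_num) hij
  have h2 : x ^ (2 ^ i) * 1 = x ^ (2 ^ i) * x ^ (2 ^ j - 2 ^ i) := by
    rw [← pow_add, mul_one, h]; congr 1; omega
  have h3 := mul_left_cancel₀ (pow_ne_zero _ hx0) h2
  have h4 : x ^ (2 ^ j - 2 ^ i) ∈ IsLocalRing.maximalIdeal A :=
    Ideal.pow_mem_of_mem _ hx _ (by omega)
  rw [← h3] at h4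
  exact (Ideal.ne_top_iff_one _).mp (IsLocalRing.maximalIdeal.isMaximal A).ne_top h4

theorem span15 {A : Type*} [CommRing A] [IsDomain A] [IsLocalRing A]
    (Γ : Subgroup (Matrix (Fin 2) (Fin 2) A)ˣ)
    (hirr : ∀ v : Fin 2 → AlgebraicClosure (IsLocalRing.ResidueField A), v ≠ 0 →
      ¬ ∀ g ∈ Γ, ∃ c : AlgebraicClosure (IsLocalRing.ResidueField A),
        (((g : Matrix (Fin 2) (Fin 2) A)).map fun a =>
            algebraMap (IsLocalRing.ResidueField A)
              (AlgebraicClosure (IsLocalRing.ResidueField A))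
              (IsLocalRing.residue A a)).mulVec v = c • v) :
    Submodule.span A {M : Matrix (Fin 2) (Fin 2) A | ∃ g ∈ Γ, (g : Matrix (Fin 2) (Fin 2) A) = M}
      = ⊤ := by
  set S := {M : Matrix (Fin 2) (Fin 2) A | ∃ g ∈ Γ, (g : Matrix (Fin 2) (Fin 2) A) = M} with hS
  let F := IsLocalRing.ResidueField A
  let red : Matrix (Fin 2) (Fin 2) A →ₗ[A] Matrix (Fin 2) (Fin 2) F :=
    (Algebra.linearMap A F).mapMatrix
  have hred : ∀ M, red M = M.map (IsLocalRing.residue A) := fun M => rfl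
  have htop : Submodule.span F (red '' S) = ⊤ := by
    by_contra hne
    obtain ⟨f, hf, hle⟩ := Submodule.exists_le_ker_of_lt_top _ (lt_top_iff_ne_top.mpr hne)
    let Fb := AlgebraicClosure F
    let Y0 : Matrix (Fin 2) (Fin 2) F := Matrix.of fun i j => f (Matrix.single j i 1)
    have hY0 : ∀ M, f M = (Y0 * M).trace := by
      intro M
      conv_lhs => rw [Matrix.matrix_eq_sum_single M, map_sum]
      have : ∀ i j, f (Matrix.single i j (M i j)) = M i j * f (Matrix.single i j 1) := by
        intro i j
        rw [← smul_eq_mul, ← map_smul, Matrix.smul_single, smul_eq_mul, mul_one]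
      simp only [Fin.sum_univ_two, map_add, this, Matrix.trace_fin_two, Matrix.mul_apply, Fin.sum_univ_two, Y0,
        Matrix.of_apply]
      ring
    have hYne : Y0 ≠ 0 := by
      intro h0; apply hf; ext1 M; rw [hY0, h0]; simp
    let ψ : A →+* Fb := (algebraMap F Fb).comp (IsLocalRing.residue A)
    obtain ⟨v, hv, hvS⟩ := burn15 (L := Fb) {M | ∃ g ∈ Γ, M = (ψ.mapMatrix (g : Matrix (Fin 2) (Fin 2) A))}
      ⟨1, Γ.one_mem, by simp⟩
      (by
        rintro _ ⟨g, hg, rfl⟩ _ ⟨g', hg', rfl⟩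
        exact ⟨g * g', Γ.mul_mem hg hg', by rw [Units.val_mul, map_mul]⟩)
      (Y0.map (algebraMap F Fb))
      (by
        intro h0; apply hYne
        ext i j
        have := congrFun (congrFun h0 i) j
        simpa using this)
      (by
        rintro _ ⟨g, hg, rfl⟩
        have h1 : f (red g) = 0 := hle (Submodule.subset_span ⟨_, ⟨g, hg, rfl⟩, rfl⟩)
        rw [hY0, hred] at h1
        have h2 := congrArg (algebraMap F Fb) h1
        simp only [Matrix.trace_fin_two, Matrix.mul_apply, Fin.sum_univ_two, map_add, map_mul,
          map_zero, Matrix.map_apply] at h2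
        simpa [Matrix.trace_fin_two, Matrix.mul_apply, Fin.sum_univ_two, ψ] using h2)
    exact hirr v hv fun g hg => hvS _ ⟨g, hg, rfl⟩
  have hsur : Function.Surjective (algebraMap A F) := IsLocalRing.residue_surjective
  have hmap : Submodule.map red (Submodule.span A S) = ⊤ := by
    rw [Submodule.map_span, ← Submodule.restrictScalars_span A F hsur, htop]
    simp
  rw [eq_top_iff]
  apply Submodule.le_of_le_smul_of_le_jacobson_bot (I := IsLocalRing.maximalIdeal A)
    Module.Finite.fg_top (IsLocalRing.maximalIdeal_le_jacobson _)
  intro M _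
  have : red M ∈ Submodule.map red (Submodule.span A S) := by rw [hmap]; trivial
  obtain ⟨N, hN, hNM⟩ := this
  have : M = N + (M - N) := by abel
  rw [this]
  refine Submodule.add_mem_sup hN ?_
  rw [Matrix.matrix_eq_sum_single (M - N)]
  refine Submodule.sum_mem _ fun i _ => Submodule.sum_mem _ fun j _ => ?_
  have e : Matrix.single i j ((M - N) i j) = ((M - N) i j) • Matrix.single i j (1 : A) := by
    rw [Matrix.smul_single, smul_eq_mul, mul_one]
  rw [e]
  refine Submodule.smul_mem_smul ?_ trivial
  rw [← IsLocalRing.residue_eq_zero_iff]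
  have := congrFun (congrFun hNM i) j
  simp only [hred, Matrix.map_apply] at this
  rw [Matrix.sub_apply, map_sub, this, sub_self]

theorem func15 {A R : Type*} [CommRing A] [CommRing R] [Algebra A R]
    (Γ : Subgroup (Matrix (Fin 2) (Fin 2) A)ˣ)
    (hspan : Submodule.span A {M : Matrix (Fin 2) (Fin 2) A |
      ∃ g ∈ Γ, (g : Matrix (Fin 2) (Fin 2) A) = M} = ⊤)
    (c : Fin 2 → Fin 2 → R)
    (h : ∀ g ∈ Γ, ∑ i, ∑ j, c i j * algebraMap A R ((g : Matrix (Fin 2) (Fin 2) A) i j) = 0)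
    (i j : Fin 2) : c i j = 0 := by
  have key : ∀ M : Matrix (Fin 2) (Fin 2) A, ∑ i, ∑ j, c i j * algebraMap A R (M i j) = 0 := by
    intro M
    have hM : M ∈ Submodule.span A {M : Matrix (Fin 2) (Fin 2) A |
      ∃ g ∈ Γ, (g : Matrix (Fin 2) (Fin 2) A) = M} := by rw [hspan]; trivial
    induction hM using Submodule.span_induction with
    | mem x hx => obtain ⟨g, hg, rfl⟩ := hx; exact h g hg
    | zero => simp
    | add x y _ _ hx hy =>
      simp only [Matrix.add_apply, map_add, mul_add, Finset.sum_add_distrib, hx, hy, add_zero]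
    | smul a x _ hx =>
      simp only [Fin.sum_univ_two, Matrix.smul_apply, smul_eq_mul, map_mul] at hx ⊢
      linear_combination (algebraMap A R a) * hx
  have := key (Matrix.single i j 1)
  fin_cases i <;> fin_cases j <;> simpa [Fin.sum_univ_two, Matrix.single_apply] using this

theorem trace15 {A : Type*} [CommRing A] [IsDomain A] [IsLocalRing A] [CharP A 2]
    (Γ : Subgroup (Matrix (Fin 2) (Fin 2) A)ˣ)
    (hspan : Submodule.span A {M : Matrix (Fin 2) (Fin 2) A |
      ∃ g ∈ Γ, (g : Matrix (Fin 2) (Fin 2) A) = M} = ⊤)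
    (hdet : ∀ g ∈ Γ, ∃ k : ℕ, 0 < k ∧ ((g : Matrix (Fin 2) (Fin 2) A).det) ^ k = 1)
    (hker : ∃ g ∈ Γ, g ≠ 1 ∧
      ((g : Matrix (Fin 2) (Fin 2) A)).map (IsLocalRing.residue A) = 1) :
    ∃ g ∈ Γ, (g : Matrix (Fin 2) (Fin 2) A).det = 1 ∧ (g : Matrix (Fin 2) (Fin 2) A).trace ≠ 0 ∧
      (g : Matrix (Fin 2) (Fin 2) A).trace ∈ IsLocalRing.maximalIdeal A := by
  have h2 : (2 : A) = 0 := CharTwo.two_eq_zero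
  have h2r : (1 : IsLocalRing.ResidueField A) + 1 = 0 := by
    have := congrArg (IsLocalRing.residue A) h2
    rw [map_zero, ← one_add_one_eq_two, map_add, map_one] at this
    exact this
  have hred : ∀ g ∈ Γ, ((g : Matrix (Fin 2) (Fin 2) A)).map (IsLocalRing.residue A) = 1 →
      (g : Matrix (Fin 2) (Fin 2) A).det = 1 ∧
      (g : Matrix (Fin 2) (Fin 2) A).trace ∈ IsLocalRing.maximalIdeal A := by
    intro g hg h1
    constructor
    · obtain ⟨k, hk, hgk⟩ := hdet g hg
      obtain ⟨i, j, hij, e⟩ := pigeon15 _ k hk hgk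
      have hm : (g : Matrix (Fin 2) (Fin 2) A).det - 1 ∈ IsLocalRing.maximalIdeal A := by
        rw [← IsLocalRing.residue_eq_zero_iff, map_sub, RingHom.map_det, map_one]
        simp [h1]
      have := mloc15 hm hij (by rw [sub_pow_char_pow, sub_pow_char_pow, e]; simp)
      exact sub_eq_zero.mp this
    · rw [← IsLocalRing.residue_eq_zero_iff]
      have e : ∀ i j, IsLocalRing.residue A ((g : Matrix (Fin 2) (Fin 2) A) i j)
          = (1 : Matrix (Fin 2) (Fin 2) _) i j := fun i j => congrFun (congrFun h1 i) j
      rw [Matrix.trace_fin_two, map_add, e, e]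
      simpa using h2r
  by_contra! hcon
  have htr : ∀ g ∈ Γ, ((g : Matrix (Fin 2) (Fin 2) A)).map (IsLocalRing.residue A) = 1 →
      (g : Matrix (Fin 2) (Fin 2) A).trace = 0 := by
    intro g hg h1
    by_contra h0
    exact hcon g hg (hred g hg h1).1 h0 (hred g hg h1).2
  obtain ⟨n, hn, hne, hn1⟩ := hker
  apply hne
  set x : Matrix (Fin 2) (Fin 2) A := (n : Matrix (Fin 2) (Fin 2) A) - 1 with hx
  have hnx : (n : Matrix (Fin 2) (Fin 2) A) = 1 + x := by rw [hx]; abel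
  have hxtr : x 0 0 + x 1 1 = 0 := by
    have := htr n hn hn1
    rw [hnx, Matrix.trace_fin_two] at this
    simp at this
    linear_combination this - h2
  have hxdet : x 0 0 * x 1 1 - x 0 1 * x 1 0 = 0 := by
    have := (hred n hn hn1).1
    rw [hnx, Matrix.det_fin_two] at this
    simp at this
    linear_combination this - hxtr
  have key : ∀ g ∈ Γ, ∑ i, ∑ j, (xᵀ i j) * algebraMap A A ((g : Matrix (Fin 2) (Fin 2) A) i j) = 0 := by
    intro g hg
    have hg' : n * (g * n * g⁻¹) ∈ Γ := Γ.mul_mem hn (Γ.mul_mem (Γ.mul_mem hg hn) (Γ.inv_mem hg))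
    have hgi : (g : Matrix (Fin 2) (Fin 2) A) * ((g⁻¹ : (Matrix (Fin 2) (Fin 2) A)ˣ) : Matrix (Fin 2) (Fin 2) A) = 1 := by
      simp
    have hr : ((n * (g * n * g⁻¹) : (Matrix (Fin 2) (Fin 2) A)ˣ) : Matrix (Fin 2) (Fin 2) A).map
        (IsLocalRing.residue A) = 1 := by
      change (IsLocalRing.residue A).mapMatrix _ = 1
      have hn1' : (IsLocalRing.residue A).mapMatrix (n : Matrix (Fin 2) (Fin 2) A) = 1 := hn1
      rw [Units.val_mul, Units.val_mul, Units.val_mul, map_mul, map_mul, map_mul, hn1', one_mul,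
        mul_one, ← map_mul, hgi, map_one]
    have ht := htr _ hg' hr
    rw [Units.val_mul, Units.val_mul, Units.val_mul, hnx] at ht
    set gi := ((g⁻¹ : (Matrix (Fin 2) (Fin 2) A)ˣ) : Matrix (Fin 2) (Fin 2) A)
    set g0 := (g : Matrix (Fin 2) (Fin 2) A)
    have hadj : g0.adjugate = g0.det • gi := by
      have : g0.adjugate * (g0 * gi) = g0.adjugate := by rw [hgi, mul_one]
      rw [← this, ← mul_assoc, Matrix.adjugate_mul]; simp
    have e1 : (1 + x) * (g0 * (1 + x) * gi) = 1 + x + g0 * x * gi + x * (g0 * x * gi) := by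
      have : g0 * (1 + x) * gi = 1 + g0 * x * gi := by
        rw [mul_add, add_mul, mul_one, hgi]
      rw [this]; noncomm_ring
    have e2 : (g0 * x * gi).trace = x.trace := by
      have hgi' : gi * g0 = 1 := by simp [gi, g0]
      rw [Matrix.trace_mul_comm, ← mul_assoc, hgi', one_mul]
    have e3 : (x * (g0 * x * gi)).trace = 0 := by
      rw [e1, Matrix.trace_add, Matrix.trace_add, Matrix.trace_add, e2] at ht
      rw [Matrix.trace_fin_two x, hxtr, Matrix.trace_one] at ht
      simpa [h2] using ht
    have e4 : (x * (g0 * x * g0.adjugate)).trace = 0 := by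
      rw [hadj, Matrix.mul_smul, Matrix.mul_smul, Matrix.trace_smul, e3, smul_zero]
    rw [Matrix.adjugate_fin_two] at e4
    simp [Matrix.trace_fin_two, Matrix.mul_apply, Fin.sum_univ_two] at e4
    have hsq : (∑ i, ∑ j, (xᵀ i j) * algebraMap A A (g0 i j)) ^ 2 = 0 := by
      simp only [Fin.sum_univ_two, Algebra.algebraMap_self, RingHom.id_apply,
        Matrix.transpose_apply]
      have hx11 : x 1 1 = x 0 0 := by linear_combination hxtr - x 0 0 * h2
      rw [hx11] at e4 hxdet ⊢
      generalize x 0 0 = p at *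
      generalize x 0 1 = q at *
      generalize x 1 0 = r at *
      generalize g0 0 0 = a at *
      generalize g0 0 1 = b at *
      generalize g0 1 0 = c at *
      generalize g0 1 1 = d at *
      linear_combination e4 + (a ^ 2 + d ^ 2) * hxdet + (r ^ 2 * b ^ 2 + q ^ 2 * c ^ 2
        + p * r * a * b + p * q * a * c + q * r * b * c + p * r * b * d + p * q * c * d
        + p ^ 2 * b * c) * h2
    exact pow_eq_zero_iff (two_ne_zero) |>.mp hsq
  have hz := func15 (R := A) Γ hspan (fun i j => xᵀ i j) key
  apply Units.ext
  rw [hnx]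
  have : x = 0 := by ext i j; exact hz j i
  rw [this]; simp

theorem irr15 {A L : Type*} [CommRing A] [Field L] [Algebra A L]
    (Γ : Subgroup (Matrix (Fin 2) (Fin 2) A)ˣ)
    (hspan : Submodule.span A {M : Matrix (Fin 2) (Fin 2) A |
      ∃ g ∈ Γ, (g : Matrix (Fin 2) (Fin 2) A) = M} = ⊤)
    (u : Fin 2 → L)
    (h : ∀ g ∈ Γ, ∃ c : L,
      ((g : Matrix (Fin 2) (Fin 2) A).map (algebraMap A L)).mulVec u = c • u) : u = 0 := by
  have := func15 Γ hspan (fun i j => (![u 1, -u 0] i) * u j) (by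
    intro g hg
    obtain ⟨c, hc⟩ := h g hg
    have h0 := congrFun hc 0
    have h1 := congrFun hc 1
    simp [Matrix.mulVec, dotProduct, Fin.sum_univ_two] at h0 h1 ⊢
    linear_combination u 1 * h0 - u 0 * h1)
  ext i
  fin_cases i
  · simpa using this 1 0
  · simpa using this 0 1

theorem main15 {A L : Type*} [CommRing A] [IsDomain A] [IsLocalRing A] [CharP A 2]
    [Field L] [IsAlgClosed L] [Algebra A L] (hinj : Function.Injective (algebraMap A L))
    (Γ : Subgroup (Matrix (Fin 2) (Fin 2) A)ˣ)
    (hspan : Submodule.span A {M : Matrix (Fin 2) (Fin 2) A |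
      ∃ g ∈ Γ, (g : Matrix (Fin 2) (Fin 2) A) = M} = ⊤)
    (hex : ∃ g ∈ Γ, (g : Matrix (Fin 2) (Fin 2) A).det = 1 ∧
      (g : Matrix (Fin 2) (Fin 2) A).trace ≠ 0 ∧
      (g : Matrix (Fin 2) (Fin 2) A).trace ∈ IsLocalRing.maximalIdeal A)
    (hnd : ¬ ∃ v w : Fin 2 → L,
      LinearIndependent L ![v, w] ∧
      ∀ g ∈ Γ,
        ((∃ c : L, (((g : Matrix (Fin 2) (Fin 2) A)).map (algebraMap A L)).mulVec v = c • v) ∧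
         (∃ c : L, (((g : Matrix (Fin 2) (Fin 2) A)).map (algebraMap A L)).mulVec w = c • w)) ∨
        ((∃ c : L, (((g : Matrix (Fin 2) (Fin 2) A)).map (algebraMap A L)).mulVec v = c • w) ∧
         (∃ c : L, (((g : Matrix (Fin 2) (Fin 2) A)).map (algebraMap A L)).mulVec w = c • v)))
    (h : Matrix (Fin 2) (Fin 2) L) (hh : h.det = 1) :
    h ∈ zcl15 {x : Matrix (Fin 2) (Fin 2) L | ∃ g ∈ Γ, (g : Matrix (Fin 2) (Fin 2) A).det = 1 ∧
      (algebraMap A L).mapMatrix (g : Matrix (Fin 2) (Fin 2) A) = x} := by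
  set φ := (algebraMap A L).mapMatrix (m := Fin 2) with hφ
  set S := {x : Matrix (Fin 2) (Fin 2) L | ∃ g ∈ Γ, (g : Matrix (Fin 2) (Fin 2) A).det = 1 ∧
      φ (g : Matrix (Fin 2) (Fin 2) A) = x} with hS
  have : CharP L 2 := charP_of_injective_algebraMap hinj 2
  obtain ⟨g, hg, hgd, hgt, hgm⟩ := hex
  set gL := φ (g : Matrix (Fin 2) (Fin 2) A) with hgL
  have hgLd : gL.det = 1 := by rw [hgL, hφ, ← RingHom.map_det, hgd, map_one]
  have hgLt : gL 0 0 + gL 1 1 = algebraMap A L (g : Matrix (Fin 2) (Fin 2) A).trace := by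
    rw [Matrix.trace_fin_two, map_add]; rfl
  obtain ⟨l, hl⟩ := exists_eig15 gL
  have hl' : l ^ 2 - (gL 0 0 + gL 1 1) * l + 1 = 0 := by
    rw [Matrix.det_fin_two] at hl hgLd
    simp at hl
    linear_combination hl - hgLd
  have hl0 : l ≠ 0 := by rintro rfl; simp at hl'
  have htl : gL 0 0 + gL 1 1 = l + l⁻¹ := by field_simp; linear_combination -hl'
  have hinf : ∀ k : ℕ, 0 < k → l ^ k ≠ 1 := by
    intro k hk hlk
    obtain ⟨i, j, hij, e⟩ := pigeon15 l k hk hlk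
    apply hgt
    refine mloc15 hgm hij (hinj ?_)
    rw [map_pow, map_pow, ← hgLt, htl, add_pow_char_pow, add_pow_char_pow, inv_pow, inv_pow, e]
  have hne : l ≠ l⁻¹ := by
    intro h0
    apply hgt; apply hinj
    rw [← hgLt, htl, ← h0, map_zero]; exact CharTwo.add_self_eq_zero l
  have hl2 : (gL - l⁻¹ • (1 : Matrix (Fin 2) (Fin 2) L)).det = 0 := by
    rw [Matrix.det_fin_two] at hgLd ⊢
    simp
    have hi : l * l⁻¹ = 1 := mul_inv_cancel₀ hl0
    linear_combination hgLd - l⁻¹ * htl - hi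
  obtain ⟨v, hv0, hv⟩ := Matrix.exists_mulVec_eq_zero_iff.mpr hl
  obtain ⟨w, hw0, hw⟩ := Matrix.exists_mulVec_eq_zero_iff.mpr hl2
  rw [Matrix.sub_mulVec, Matrix.smul_mulVec, Matrix.one_mulVec, sub_eq_zero] at hv hw
  have hlin : LinearIndependent L ![v, w] := by
    rw [LinearIndependent.pair_iff]
    intro s t hst
    have h1 := congrArg gL.mulVec hst
    rw [Matrix.mulVec_add, Matrix.mulVec_smul, Matrix.mulVec_smul, hv, hw,
      Matrix.mulVec_zero] at h1
    have h2 : (s * (l - l⁻¹)) • v = 0 := by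
      have : (s * (l - l⁻¹)) • v = (s • l • v + t • l⁻¹ • w) - l⁻¹ • (s • v + t • w) := by
        module
      rw [this, h1, hst]; simp
    have hs : s = 0 := by
      rcases smul_eq_zero.mp h2 with h3 | h3
      · exact (mul_eq_zero.mp h3).resolve_right (sub_ne_zero.mpr hne)
      · exact absurd h3 hv0
    refine ⟨hs, ?_⟩
    rw [hs, zero_smul, zero_add] at hst
    exact (smul_eq_zero.mp hst).resolve_right hw0
  let P : Matrix (Fin 2) (Fin 2) L := (Matrix.of ![v, w])ᵀ
  have hPu : IsUnit P := by
    rw [Matrix.isUnit_transpose, ← Matrix.linearIndependent_rows_iff_isUnit]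
    exact hlin
  have hPd : IsUnit P.det := (Matrix.isUnit_iff_isUnit_det _).mp hPu
  have hPQ : P * P⁻¹ = 1 := Matrix.mul_nonsing_inv _ hPd
  have hQP : P⁻¹ * P = 1 := Matrix.nonsing_inv_mul _ hPd
  set Q := P⁻¹
  -- action of a matrix on the basis
  have hact : ∀ X : Matrix (Fin 2) (Fin 2) L,
      X.mulVec v = (Q * X * P) 0 0 • v + (Q * X * P) 1 0 • w ∧
      X.mulVec w = (Q * X * P) 0 1 • v + (Q * X * P) 1 1 • w := by
    intro X
    have e : X * P = P * (Q * X * P) := by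
      rw [mul_assoc, ← mul_assoc, hPQ, one_mul]
    generalize Q * X * P = M at *
    have e' := fun i j => congrFun (congrFun e i) j
    constructor
    · ext i
      have := e' i 0
      simp [Matrix.mul_apply, P, Fin.sum_univ_two] at this
      simp [Matrix.mulVec, dotProduct, Fin.sum_univ_two, this]
      ring
    · ext i
      have := e' i 1
      simp [Matrix.mul_apply, P, Fin.sum_univ_two] at this
      simp [Matrix.mulVec, dotProduct, Fin.sum_univ_two, this]
      ring
  have hdiag : gL = P * !![l, 0; 0, l⁻¹] * Q := by
    have e : gL * P = P * !![l, 0; 0, l⁻¹] := by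
      ext i j
      fin_cases j
      · have := congrFun hv i
        simp [Matrix.mulVec, dotProduct, Fin.sum_univ_two] at this
        simp [Matrix.mul_apply, P, Fin.sum_univ_two, this]
        ring
      · have := congrFun hw i
        simp [Matrix.mulVec, dotProduct, Fin.sum_univ_two] at this
        simp [Matrix.mul_apply, P, Fin.sum_univ_two, this]
        ring
    rw [← e, mul_assoc, hPQ, mul_one]
  have hpow : ∀ n : ℕ, P * !![l ^ n, 0; 0, (l ^ n)⁻¹] * Q = gL ^ n := by
    intro n
    induction n with
    | zero =>
      have : !![l ^ 0, 0; 0, (l ^ 0)⁻¹] = (1 : Matrix (Fin 2) (Fin 2) L) := by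
        rw [Matrix.one_fin_two]; simp
      rw [this, mul_one, hPQ, pow_zero]
    | succ n ih =>
      rw [pow_succ gL, ← ih, hdiag]
      have : !![l ^ (n + 1), 0; 0, (l ^ (n + 1))⁻¹]
          = !![l ^ n, 0; 0, (l ^ n)⁻¹] * !![l, 0; 0, l⁻¹] := by
        rw [Matrix.mul_fin_two]; simp [pow_succ, mul_comm]
      rw [this]
      have : ∀ X Y : Matrix (Fin 2) (Fin 2) L, P * X * Q * (P * Y * Q) = P * (X * Y) * Q := by
        intro X Y
        calc P * X * Q * (P * Y * Q) = P * X * (Q * P) * Y * Q := by noncomm_ring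
          _ = P * (X * Y) * Q := by rw [hQP]; noncomm_ring
      rw [this]
  have hadjQ : Q.adjugate = Q.det • P := by
    have : Q.adjugate * (Q * P) = Q.adjugate := by rw [hQP, mul_one]
    rw [← this, ← mul_assoc, Matrix.adjugate_mul]; simp
  have hadjP : P.adjugate = P.det • Q := by
    have : P.adjugate * (P * Q) = P.adjugate := by rw [hPQ, mul_one]
    rw [← this, ← mul_assoc, Matrix.adjugate_mul]; simp
  have hdd : Q.det * P.det = 1 := by rw [← Matrix.det_mul, hQP, Matrix.det_one]
  have hdd' : P.det * Q.det = 1 := by rw [mul_comm, hdd]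
  have hSmul : ∀ g ∈ S, ∀ g' ∈ S, g * g' ∈ S := by
    rintro _ ⟨x, hx, hxd, rfl⟩ _ ⟨y, hy, hyd, rfl⟩
    exact ⟨x * y, Γ.mul_mem hx hy, by rw [Units.val_mul, Matrix.det_mul, hxd, hyd, one_mul],
      by rw [Units.val_mul, map_mul]⟩
  have hVmul := zcl15_mul S hSmul
  have hVadj := zcl15_adj S (by
    rintro _ ⟨x, hx, hxd, rfl⟩
    apply subset_zcl15
    have hxi : (x : Matrix (Fin 2) (Fin 2) A) *
      ((x⁻¹ : (Matrix (Fin 2) (Fin 2) A)ˣ) : Matrix (Fin 2) (Fin 2) A) = 1 := by simp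
    refine ⟨x⁻¹, Γ.inv_mem hx, ?_, ?_⟩
    · have := congrArg Matrix.det hxi
      rwa [Matrix.det_mul, hxd, one_mul, Matrix.det_one] at this
    · have h1 : φ (x : Matrix (Fin 2) (Fin 2) A) * φ ((x⁻¹ : (Matrix (Fin 2) (Fin 2) A)ˣ) : Matrix (Fin 2) (Fin 2) A) = 1 := by
        rw [← map_mul, hxi, map_one]
      have h2 : (φ (x : Matrix (Fin 2) (Fin 2) A)).det = 1 := by
        rw [hφ, ← RingHom.map_det, hxd, map_one]
      generalize φ (x : Matrix (Fin 2) (Fin 2) A) = X at *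
      generalize φ ((x⁻¹ : (Matrix (Fin 2) (Fin 2) A)ˣ) : Matrix (Fin 2) (Fin 2) A) = X' at *
      calc X' = (X.adjugate * X) * X' := by rw [Matrix.adjugate_mul, h2]; simp
        _ = X.adjugate := by rw [mul_assoc, h1, mul_one])
  let V' : Set (Matrix (Fin 2) (Fin 2) L) := {x | P * x * Q ∈ zcl15 S}
  have hgood : TorusGood V' := by
    refine ⟨?_, ?_, ?_⟩
    · intro x hx y hy
      have := hVmul _ hx _ hy
      change P * (x * y) * Q ∈ zcl15 S
      convert this using 1
      calc P * (x * y) * Q = P * x * 1 * y * Q := by noncomm_ring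
        _ = _ := by rw [← hQP]; noncomm_ring
    · intro x hx
      have := hVadj _ hx
      change P * x.adjugate * Q ∈ zcl15 S
      convert this using 1
      rw [Matrix.adjugate_mul_distrib, Matrix.adjugate_mul_distrib, hadjQ, hadjP]
      simp only [Matrix.smul_mul, Matrix.mul_smul, smul_smul, hdd', one_smul, mul_assoc]
    · intro t ht
      refine zcl15_curve S P Q l hl0 hinf ?_ t ht
      intro n
      rw [hpow]
      exact ⟨g ^ n, Γ.pow_mem hg n, by rw [Units.val_pow_eq_pow_val, Matrix.det_pow, hgd, one_pow],
        by rw [Units.val_pow_eq_pow_val, map_pow]⟩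
  have hdetγ : ∀ γ : (Matrix (Fin 2) (Fin 2) A)ˣ,
      (φ (γ : Matrix (Fin 2) (Fin 2) A)).det ≠ 0 := by
    intro γ h0
    have h1 : φ (γ : Matrix (Fin 2) (Fin 2) A) * φ ((γ⁻¹ : (Matrix (Fin 2) (Fin 2) A)ˣ) : Matrix (Fin 2) (Fin 2) A) = 1 := by
      rw [← map_mul, Units.mul_inv, map_one]
    have := congrArg Matrix.det h1
    rw [Matrix.det_mul, h0, zero_mul, Matrix.det_one] at this
    exact zero_ne_one this
  have hcore := hgood.core {x | ∃ γ ∈ Γ, Q * φ (γ : Matrix (Fin 2) (Fin 2) A) * P = x}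
    ?_ ?_ ?_ ?_ ?_ (Q * h * P) ?_
  · change P * (Q * h * P) * Q ∈ zcl15 S at hcore
    have : P * (Q * h * P) * Q = h := by
      calc P * (Q * h * P) * Q = (P * Q) * h * (P * Q) := by noncomm_ring
        _ = h := by rw [hPQ]; simp
    rwa [this] at hcore
  · rintro _ ⟨γ, hγ, rfl⟩
    rw [Matrix.det_mul, Matrix.det_mul, mul_right_comm, hdd, one_mul]
    exact hdetγ γ
  · rintro _ ⟨γ, hγ, rfl⟩ x hx
    set X := φ (γ : Matrix (Fin 2) (Fin 2) A) with hX
    have hXd : X.det ≠ 0 := hdetγ γ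
    change P * _ * Q ∈ zcl15 S
    have e : P * ((Q * X * P).det⁻¹ • (Q * X * P * x * (Q * X * P).adjugate)) * Q
        = X * (P * x * Q) * (X.det⁻¹ • X.adjugate) := by
      have hd : (Q * X * P).det = X.det := by
        rw [Matrix.det_mul, Matrix.det_mul, mul_right_comm, hdd, one_mul]
      rw [hd, Matrix.adjugate_mul_distrib, Matrix.adjugate_mul_distrib, hadjQ, hadjP]
      simp only [Matrix.smul_mul, Matrix.mul_smul, smul_smul]
      rw [hdd, mul_one]
      congr 1
      calc P * (Q * X * P * x * (Q * (X.adjugate * P))) * Q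
          = (P * Q) * X * P * x * Q * X.adjugate * (P * Q) := by noncomm_ring
        _ = X * (P * x * Q) * X.adjugate := by rw [hPQ]; noncomm_ring
    rw [e]
    have hinvX : φ ((γ⁻¹ : (Matrix (Fin 2) (Fin 2) A)ˣ) : Matrix (Fin 2) (Fin 2) A)
        = X.det⁻¹ • X.adjugate := by
      have h1 : X * φ ((γ⁻¹ : (Matrix (Fin 2) (Fin 2) A)ˣ) : Matrix (Fin 2) (Fin 2) A) = 1 := by
        rw [hX, ← map_mul, Units.mul_inv, map_one]
      have h3 : (X.det⁻¹ • X.adjugate) * X = 1 := by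
        rw [Matrix.smul_mul, Matrix.adjugate_mul, smul_smul, inv_mul_cancel₀ hXd, one_smul]
      exact (left_inv_eq_right_inv h3 h1).symm
    rw [← hinvX]
    refine zcl15_lin S _ _ ?_ _ hx
    rintro _ ⟨y, hy, hyd, rfl⟩
    apply subset_zcl15
    refine ⟨γ * y * γ⁻¹, Γ.mul_mem (Γ.mul_mem hγ hy) (Γ.inv_mem hγ), ?_, ?_⟩
    · rw [Units.val_mul, Units.val_mul, Matrix.det_mul, Matrix.det_mul, hyd, mul_one,
        ← Matrix.det_mul, Units.mul_inv, Matrix.det_one]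
    · rw [Units.val_mul, Units.val_mul, map_mul, map_mul]
  · by_contra! hcon
    apply hw0
    refine irr15 Γ hspan w fun γ hγ => ?_
    have h1 := (hact (φ (γ : Matrix (Fin 2) (Fin 2) A))).2
    rw [hcon _ ⟨γ, hγ, rfl⟩, zero_smul, zero_add] at h1
    exact ⟨_, h1⟩
  · by_contra! hcon
    apply hv0
    refine irr15 Γ hspan v fun γ hγ => ?_
    have h1 := (hact (φ (γ : Matrix (Fin 2) (Fin 2) A))).1
    rw [hcon _ ⟨γ, hγ, rfl⟩, zero_smul, add_zero] at h1
    exact ⟨_, h1⟩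
  · by_contra hcon
    apply hnd
    refine ⟨v, w, hlin, fun γ hγ => ?_⟩
    obtain ⟨h1, h2⟩ := hact (φ (γ : Matrix (Fin 2) (Fin 2) A))
    by_cases c1 : (Q * φ (γ : Matrix (Fin 2) (Fin 2) A) * P) 0 1 = 0 ∧
        (Q * φ (γ : Matrix (Fin 2) (Fin 2) A) * P) 1 0 = 0
    · left
      rw [c1.2, zero_smul, add_zero] at h1
      rw [c1.1, zero_smul, zero_add] at h2
      exact ⟨⟨_, h1⟩, ⟨_, h2⟩⟩
    · by_cases c2 : (Q * φ (γ : Matrix (Fin 2) (Fin 2) A) * P) 0 0 = 0 ∧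
        (Q * φ (γ : Matrix (Fin 2) (Fin 2) A) * P) 1 1 = 0
      · right
        rw [c2.1, zero_smul, zero_add] at h1
        rw [c2.2, zero_smul, add_zero] at h2
        exact ⟨⟨_, h1⟩, ⟨_, h2⟩⟩
      · exact absurd ⟨_, ⟨γ, hγ, rfl⟩, c1, c2⟩ hcon
  · rw [Matrix.det_mul, Matrix.det_mul, mul_right_comm, hdd, one_mul, hh]

end Helpers15

/-- Let `A` be a complete Noetherian local domain of characteristic 2 with fraction field `K`
and finite residue field. Let `Γ ⊆ GL₂(A)` be a subgroup with finite-order determinants whose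
reduction is absolutely irreducible, such that the reduction map `Γ → GL₂(𝔽)` has nontrivial
kernel, and which is not contained (over `K̄`) in the normalizer of a torus. Then
`Γ ∩ SL₂(K)` is Zariski dense in `SL₂` over `K`. -/
theorem statement15 {A : Type*} [CommRing A] [IsDomain A] [IsLocalRing A] [IsNoetherianRing A]
    [IsAdicComplete (IsLocalRing.maximalIdeal A) A] [CharP A 2]
    [Finite (IsLocalRing.ResidueField A)]
    (Γ : Subgroup (Matrix (Fin 2) (Fin 2) A)ˣ)
    -- determinants of elements of `Γ` have finite order
    (hdet : ∀ g ∈ Γ, ∃ k : ℕ, 0 < k ∧ ((g : Matrix (Fin 2) (Fin 2) A).det) ^ k = 1)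
    -- the reduction of `Γ` is absolutely irreducible: no common eigenvector over the
    -- algebraic closure of the residue field
    (hirr : ∀ v : Fin 2 → AlgebraicClosure (IsLocalRing.ResidueField A), v ≠ 0 →
      ¬ ∀ g ∈ Γ, ∃ c : AlgebraicClosure (IsLocalRing.ResidueField A),
        (((g : Matrix (Fin 2) (Fin 2) A)).map fun a =>
            algebraMap (IsLocalRing.ResidueField A)
              (AlgebraicClosure (IsLocalRing.ResidueField A))
              (IsLocalRing.residue A a)).mulVec v = c • v)
    -- the reduction map `Γ → GL₂(𝔽)` has nontrivial kernel
    (hker : ∃ g ∈ Γ, g ≠ 1 ∧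
      ((g : Matrix (Fin 2) (Fin 2) A)).map (IsLocalRing.residue A) = 1)
    -- `Γ` is not contained, over `K̄`, in the normalizer of a torus (not dihedral)
    (hnd : ¬ ∃ v w : Fin 2 → AlgebraicClosure (FractionRing A),
      LinearIndependent (AlgebraicClosure (FractionRing A)) ![v, w] ∧
      ∀ g ∈ Γ,
        ((∃ c : AlgebraicClosure (FractionRing A), (((g : Matrix (Fin 2) (Fin 2) A)).map
              (algebraMap A (AlgebraicClosure (FractionRing A)))).mulVec v = c • v) ∧
         (∃ c : AlgebraicClosure (FractionRing A), (((g : Matrix (Fin 2) (Fin 2) A)).map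
              (algebraMap A (AlgebraicClosure (FractionRing A)))).mulVec w = c • w)) ∨
        ((∃ c : AlgebraicClosure (FractionRing A), (((g : Matrix (Fin 2) (Fin 2) A)).map
              (algebraMap A (AlgebraicClosure (FractionRing A)))).mulVec v = c • w) ∧
         (∃ c : AlgebraicClosure (FractionRing A), (((g : Matrix (Fin 2) (Fin 2) A)).map
              (algebraMap A (AlgebraicClosure (FractionRing A)))).mulVec w = c • v))) :
    statement15ZariskiDenseInSL2 (FractionRing A)
      {m : Matrix (Fin 2) (Fin 2) (FractionRing A) |
        (∃ g ∈ Γ, ((g : Matrix (Fin 2) (Fin 2) A)).map (algebraMap A (FractionRing A)) = m)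
          ∧ m.det = 1} := by
  have hspan := span15 Γ hirr
  have hinj : Function.Injective (algebraMap A (AlgebraicClosure (FractionRing A))) := by
    rw [IsScalarTower.algebraMap_eq A (FractionRing A) (AlgebraicClosure (FractionRing A))]
    exact (algebraMap (FractionRing A) _).injective.comp (IsFractionRing.injective A _)
  intro f hf h hh
  have hmem := main15 hinj Γ hspan (trace15 Γ hspan hdet hker) hnd h hh
  have := hmem (MvPolynomial.map (algebraMap (FractionRing A) _) f) ?_
  · rw [MvPolynomial.eval_map] at this
    exact this
  · rintro _ ⟨g, hg, hgd, rfl⟩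
    have h1 := hf _ ⟨⟨g, hg, rfl⟩, by
      change ((algebraMap A (FractionRing A)).mapMatrix (g : Matrix (Fin 2) (Fin 2) A)).det = 1
      rw [← RingHom.map_det, hgd, map_one]⟩
    have h2 := congrArg (algebraMap (FractionRing A) (AlgebraicClosure (FractionRing A))) h1
    rw [map_zero, ← MvPolynomial.eval₂_id, MvPolynomial.hom_eval₂] at h2
    rw [MvPolynomial.eval_map]
    exact h2
end
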